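/- arXiv:2510.07643 — 11 statements merged into one kernel-verified Lean document; each statement's English description precedes it below -/
import Mathlib

section
/- For any coprime positive integers a and u with a ≠ u, the cuboid polynomial P_{a,u}(t) is irreducible in ℤ[t]. -/
open Polynomial

/-- The cuboid polynomial `P_{a,u}(t) = t⁸ + 6Δ t⁶ + (Δ² − 2a²u²) t⁴ − 6Δ a²u² t² + a⁴u⁴`,
where `Δ = u² − a²`. -/
noncomputable def cuboidPoly (a u : ℤ) : Polynomial ℤ :=
  X ^ 8 + C (6 * (u ^ 2 - a ^ 2)) * X ^ 6
    + C ((u ^ 2 - a ^ 2) ^ 2 - 2 * a ^ 2 * u ^ 2) * X ^ 4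
    + C (-(6 * (u ^ 2 - a ^ 2) * (a ^ 2 * u ^ 2))) * X ^ 2
    + C (a ^ 4 * u ^ 4)

theorem T1 (A B C D : ℤ) (hD : D ≠ 0) (h1 : A^2 - D^2 = B^2) (h2 : 4*A^2-D^2 = C^2) :
    ∃ D' C', D = 2*D' ∧ C = 2*C' ∧ A^2-D'^2=C'^2 ∧ A^2-4*D'^2=B^2 := by
  have hD2 : Even D := by
    by_contra h
    rw [Int.not_even_iff_odd] at h
    obtain ⟨k, rfl⟩ := h
    rcases Int.even_or_odd' C with ⟨c, rfl | rfl⟩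
    · ring_nf at h2; omega
    · ring_nf at h2; omega
  obtain ⟨d, hd⟩ := hD2
  have hC2 : Even C := by
    have : Even (C^2) := ⟨2*A^2-2*d^2, by rw [← h2, hd]; ring⟩
    exact (Int.even_pow.1 this).1
  obtain ⟨c, hc⟩ := hC2
  refine ⟨d, c, by omega, by omega, ?_, ?_⟩
  · subst hd hc; nlinarith
  · subst hd hc; nlinarith

theorem le_prod (a b c d : ℤ) (ha : a ≠ 0) (hb : b ≠ 0) (hc : c ≠ 0) (hd : d ≠ 0) :
    a.natAbs ≤ (a*b*c*d).natAbs := by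
  rw [mul_assoc, mul_assoc, Int.natAbs_mul]
  exact Nat.le_mul_of_pos_right _ (Int.natAbs_pos.2 (by positivity))

theorem T (A B C D e : ℤ) (hA : A ≠ 0) (hB : B ≠ 0) (hC : C ≠ 0) (hD : D ≠ 0)
    (he : e = 1 ∨ e = -1 ∨ e = 3 ∨ e = -3)
    (h1 : D^2-A^2 = e*B^2) (h2 : D^2-4*A^2 = e*C^2) :
    ∃ x y p q : ℤ, y ≠ 0 ∧ x^2-y^2=p^2 ∧ x^2-4*y^2=q^2 ∧ y.natAbs ≤ (A*B*C*D).natAbs := by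
  rcases he with rfl | rfl | rfl | rfl
  · exact ⟨D, A, B, C, hA, by linarith, by linarith, le_prod _ _ _ _ hA hB hC hD⟩
  · obtain ⟨d, c, h3, h4, h5, h6⟩ := T1 A B C D hD (by linarith) (by linarith)
    refine ⟨A, d, c, B, by rintro rfl; simp at h3; exact hD h3, h5, h6, ?_⟩
    have := le_prod D A B C hD hA hB hC
    rw [show D*A*B*C = A*B*C*D by ring] at this
    omega
  · obtain ⟨d, c, h3, h4, h5, h6⟩ := T1 B A D C hC (by linarith) (by linarith)
    refine ⟨B, d, c, A, by rintro rfl; simp at h3; exact hC h3, h5, h6, ?_⟩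
    have := le_prod C A B D hC hA hB hD
    rw [show C*A*B*D = A*B*C*D by ring] at this
    omega
  · refine ⟨C, B, A, D, hB, by linarith, by linarith, ?_⟩
    have := le_prod B A C D hB hA hC hD
    rwa [show B*A*C*D = A*B*C*D by ring] at this

theorem cop {x y : ℤ} (hy : y ≠ 0) : ∃ g x' y' : ℤ, g ≠ 0 ∧ IsCoprime x' y' ∧ x = g*x' ∧ y = g*y' := by
  have hg : 0 < Int.gcd x y := Int.gcd_pos_of_ne_zero_right _ hy
  obtain ⟨x', y', h, hx, hyy⟩ := Int.exists_gcd_one hg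
  exact ⟨Int.gcd x y, x', y', by positivity, Int.isCoprime_iff_gcd_eq_one.2 h, by linarith, by linarith⟩

theorem dvd3 (e A D : ℤ) (hc : IsCoprime A D) (h1 : e ∣ D^2-A^2) (h2 : e ∣ D^2-4*A^2) :
    e = 1 ∨ e = -1 ∨ e = 3 ∨ e = -3 := by
  have h3 : e ∣ 3*A^2 := by have := dvd_sub h1 h2; ring_nf at this ⊢; exact this
  have h4 : e ∣ 3*D^2 := by have := dvd_sub (dvd_mul_of_dvd_right h1 4) h2; ring_nf at this ⊢; exact this
  obtain ⟨s, t, hst⟩ := (hc.pow (m := 2) (n := 2))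
  have h5 : e ∣ 3 := by
    have := dvd_add (dvd_mul_of_dvd_right h3 s) (dvd_mul_of_dvd_right h4 t)
    rwa [show s*(3*A^2)+t*(3*D^2) = 3*(s*A^2+t*D^2) by ring, hst, mul_one] at this
  have h6 : e.natAbs ∣ 3 := by simpa using Int.natAbs_dvd_natAbs.2 h5
  rcases (Nat.dvd_prime Nat.prime_three).1 h6 with h | h <;> omega

theorem step2 (k l m n : ℤ) (hkl : IsCoprime k l) (h0 : m*n ≠ 0) (h1 : k*l=2*(m*n))
   (h2 : k^2+l^2=m^2+n^2) (hk : Even k) :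
   ∃ x y p q : ℤ, y ≠ 0 ∧ x^2-y^2=p^2 ∧ x^2-4*y^2=q^2 ∧ y.natAbs < (2*(m*n)).natAbs := by
  obtain ⟨k', hk'⟩ := hk
  have hk2 : k = 2*k' := by omega
  clear hk'
  subst hk2
  have h3 : k'*l = m*n := by linarith
  obtain ⟨A, B, ⟨C, hC⟩, ⟨D, hD⟩, hAB⟩ := exists_dvd_and_dvd_of_dvd_mul (Dvd.intro l h3)
  subst hAB hC hD
  have hA : A ≠ 0 := by rintro rfl; simp at h0
  have hB : B ≠ 0 := by rintro rfl; simp at h0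
  have hC : C ≠ 0 := by rintro rfl; simp at h0
  have hD : D ≠ 0 := by rintro rfl; simp at h0
  have hl : l = C*D := mul_left_cancel₀ (mul_ne_zero hA hB) (by linarith)
  subst hl
  have h4 : C^2*(D^2-A^2) = B^2*(D^2-4*A^2) := by linarith
  have hkl' : IsCoprime (A*B) (C*D) := hkl.of_mul_left_right
  have hBC : IsCoprime B C := hkl'.of_mul_left_right.of_mul_right_left
  have hAD : IsCoprime A D := hkl'.of_mul_left_left.of_mul_right_right
  have hdv : B^2 ∣ D^2-A^2 := (hBC.pow (m := 2) (n := 2)).dvd_of_dvd_mul_left (Dvd.intro _ h4.symm)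
  obtain ⟨e, he⟩ := hdv
  have he2 : D^2-4*A^2 = C^2*e := by
    rw [he] at h4
    exact mul_left_cancel₀ (pow_ne_zero 2 hB) (by linarith)
  obtain ⟨x, y, p, q, hy, h5, h6, h7⟩ := T A B C D e hA hB hC hD
    (dvd3 e A D hAD ⟨B^2, by linarith⟩ ⟨C^2, by linarith⟩) (by linarith) (by linarith)
  refine ⟨x, y, p, q, hy, h5, h6, ?_⟩
  rw [show 2*((A*C)*(B*D)) = 2*(A*B*C*D) by ring]
  have : 0 < y.natAbs := Int.natAbs_pos.2 hy
  omega

theorem step (x y p q : ℤ) (hy : y ≠ 0) (hxy : IsCoprime x y) (h1 : x^2-y^2=p^2) (h2 : x^2-4*y^2=q^2) :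
   ∃ x' y' p q : ℤ, y' ≠ 0 ∧ x'^2-y'^2=p^2 ∧ x'^2-4*y'^2=q^2 ∧ y'.natAbs < y.natAbs := by
  wlog hx : 0 < x generalizing x
  · refine this (-x) hxy.neg_left (by linarith) (by linarith) ?_
    have : x ≠ 0 := by rintro rfl; nlinarith [sq_nonneg p, sq_pos_of_ne_zero hy]
    omega
  have hpar : p % 2 = 1 ∧ q % 2 = 1 ∧ x % 2 = 1 := by
    have hxo : ¬ (2 ∣ x ∧ 2 ∣ y) := fun ⟨ha, hb⟩ => by
      have := hxy.isUnit_of_dvd' ha hb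
      rw [Int.isUnit_iff] at this; omega
    rcases Int.even_or_odd' x with ⟨a, rfl | rfl⟩ <;> rcases Int.even_or_odd' y with ⟨b, rfl | rfl⟩ <;>
    rcases Int.even_or_odd' p with ⟨c, rfl | rfl⟩ <;> rcases Int.even_or_odd' q with ⟨d, rfl | rfl⟩ <;>
    ring_nf at h1 h2 <;> try omega
    exfalso
    have e1 := Int.even_mul_succ_self a
    have e2 := Int.even_mul_succ_self b
    have e3 := Int.even_mul_succ_self d
    obtain ⟨r1, e1⟩ := e1
    obtain ⟨r2, e2⟩ := e2
    obtain ⟨r3, e3⟩ := e3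
    ring_nf at e1 e2 e3
    omega
  have c1 : IsCoprime p y := by
    have : IsCoprime (p^2) y := by
      rw [← h1, show x^2-y^2 = x^2 + y*(-y) by ring]
      exact (hxy.pow_left (m := 2)).add_mul_left_left _
    exact IsCoprime.pow_left_iff (by norm_num) |>.1 this
  have c2 : IsCoprime q (2*y) := by
    apply IsCoprime.mul_right
    · exact ⟨1, -(q/2), by omega⟩
    have : IsCoprime (q^2) y := by
      rw [← h2, show x^2-4*y^2 = x^2 + y*(-4*y) by ring]
      exact (hxy.pow_left (m := 2)).add_mul_left_left _
    exact IsCoprime.pow_left_iff (by norm_num) |>.1 this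
  have t1 : PythagoreanTriple p y x := by unfold PythagoreanTriple; linarith
  have t2 : PythagoreanTriple q (2*y) x := by unfold PythagoreanTriple; linarith
  obtain ⟨m, n, -, hm, hm2, -, -, -⟩ := t1.coprime_classification' (Int.isCoprime_iff_gcd_eq_one.1 c1) hpar.1 hx
  obtain ⟨k, l, -, hk, hk2, hc, hp, -⟩ := t2.coprime_classification' (Int.isCoprime_iff_gcd_eq_one.1 c2) hpar.2.1 hx
  have hkl : IsCoprime k l := Int.isCoprime_iff_gcd_eq_one.2 hc
  have hmn : y = 2*(m*n) := by linarith
  have h0 : m*n ≠ 0 := by rintro h; simp [h] at hmn; exact hy hmn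
  rw [hmn]
  rcases hp with ⟨he, -⟩ | ⟨-, he⟩
  · exact step2 k l m n hkl h0 (by linarith) (by linarith) (Int.even_iff.2 he)
  · exact step2 l k m n hkl.symm h0 (by linarith) (by linarith) (Int.even_iff.2 he)

theorem desc (N : ℕ) : ∀ (x y p q : ℤ), y.natAbs = N → y ≠ 0 → x^2-y^2=p^2 → x^2-4*y^2=q^2 → False := by
  induction N using Nat.strong_induction_on with
  | _ N ih =>
  intro x y p q hN hy h1 h2
  obtain ⟨g, x, y, hg, hc, rfl, rfl⟩ := cop (x := x) hy
  have hy' : y ≠ 0 := by rintro rfl; simp at hy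
  have d1 : g ∣ p := (Int.pow_dvd_pow_iff (n := 2) (by norm_num)).1 ⟨x^2-y^2, by linarith⟩
  have d2 : g ∣ q := (Int.pow_dvd_pow_iff (n := 2) (by norm_num)).1 ⟨x^2-4*y^2, by linarith⟩
  obtain ⟨p, rfl⟩ := d1
  obtain ⟨q, rfl⟩ := d2
  have hg2 := pow_ne_zero 2 hg
  obtain ⟨x', y', p', q', hy2, h3, h4, h5⟩ := step x y p q hy' hc
    (mul_left_cancel₀ hg2 (by linarith)) (mul_left_cancel₀ hg2 (by linarith))
  refine ih y'.natAbs ?_ x' y' p' q' rfl hy2 h3 h4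
  rw [← hN, Int.natAbs_mul]
  exact h5.trans_le (Nat.le_mul_of_pos_left _ (Int.natAbs_pos.2 hg))

theorem G (x y w : ℤ) (hx : x ≠ 0) (hy : y ≠ 0) (hw : w ≠ 0) (h : (x^2-y^2)*(x^2-4*y^2)=w^2) : False := by
  obtain ⟨g, x, y, hg, hc, rfl, rfl⟩ := cop (x := x) hy
  have d1 : g^2 ∣ w := (Int.pow_dvd_pow_iff (n := 2) (by norm_num)).1 ⟨(x^2-y^2)*(x^2-4*y^2), by rw [← h]; ring⟩
  obtain ⟨w, rfl⟩ := d1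
  have hx : x ≠ 0 := by rintro rfl; simp at hx
  have hy : y ≠ 0 := by rintro rfl; simp at hy
  have hw : w ≠ 0 := by rintro rfl; simp at hw
  have h : (x^2-y^2)*(x^2-4*y^2)=w^2 := mul_left_cancel₀ (pow_ne_zero 4 hg) (by linarith)
  have hV : x^2-4*y^2 ≠ 0 := by intro h0; rw [h0] at h; simp at h; exact pow_ne_zero 2 hw h.symm
  obtain ⟨e, U, V, he, hUV, hU, hV'⟩ := cop (x := x^2-y^2) hV
  rw [hU, hV'] at h
  obtain ⟨w, rfl⟩ : e ∣ w := (Int.pow_dvd_pow_iff (n := 2) (by norm_num)).1 ⟨U*V, by rw [← h]; ring⟩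
  have h : U*V = w^2 := mul_left_cancel₀ (pow_ne_zero 2 he) (by linarith)
  have hw : w ≠ 0 := by rintro rfl; simp at hw
  have hw2 : 0 < w^2 := by positivity
  have he3 := dvd3 e y x hc.symm ⟨U, hU⟩ ⟨V, hV'⟩
  obtain ⟨p, hp⟩ := Int.sq_of_isCoprime hUV h
  obtain ⟨q, hq⟩ := Int.sq_of_isCoprime hUV.symm (by rw [mul_comm]; exact h)
  have hp0 : p ≠ 0 := by rintro rfl; rcases hp with rfl | rfl <;> (norm_num at h; first | exact hw h.symm | exact pow_ne_zero 2 hw h.symm)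
  have hq0 : q ≠ 0 := by rintro rfl; rcases hq with rfl | rfl <;> (norm_num at h; first | exact hw h.symm | exact pow_ne_zero 2 hw h.symm)
  have hpq : 0 < p^2*q^2 := by positivity
  have key : ∃ e, (e = 1 ∨ e = -1 ∨ e = 3 ∨ e = -3) ∧ x^2-y^2=e*p^2 ∧ x^2-4*y^2=e*q^2 := by
    rcases hp with rfl | rfl <;> rcases hq with rfl | rfl
    · exact ⟨e, he3, hU, hV'⟩
    · nlinarith
    · nlinarith
    · exact ⟨-e, by omega, by linarith, by linarith⟩
  obtain ⟨e, he, h1, h2⟩ := key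
  obtain ⟨x, y, p, q, h3, h4, h5, -⟩ := T y p q x e hy hp0 hq0 hx he h1 h2
  exact desc _ x y p q rfl h3 h4 h5

theorem sq3 (p q : ℤ) (k : ℕ) (hk : ¬ IsSquare ((k:ℚ))) (h : p^2 = k*q^2) : q = 0 := by
  by_contra hq
  apply hk
  have hq' : (q:ℚ) ≠ 0 := by exact_mod_cast hq
  refine ⟨(p:ℚ)/q, ?_⟩
  have h' : (p:ℚ)^2 = k*q^2 := by exact_mod_cast h
  field_simp
  linarith

theorem K0 (x y n d m : ℤ) (hn : n ≠ 0) (hd : d ≠ 0) (hm : m ≠ 0)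
   (h1 : x^2+2*y^2 = n^2*(17*d^2+4*m^2)) (h2 : x*y = 6*n^2*d^2) : False := by
  have hnd : n*d ≠ 0 := mul_ne_zero hn hd
  refine G (-x+2*y) (x-y) (12*n^2*d*m) ?_ ?_ (by positivity) ?_
  · intro h
    have hx : x = 2*y := by linarith
    subst hx
    exact hnd (sq3 y (n*d) 3 (by decide +kernel) (by push_cast; linarith))
  · intro h
    have hx : x = y := by linarith
    subst hx
    exact hnd (sq3 x (n*d) 6 (by decide +kernel) (by push_cast; linarith))
  · have e1 : (-x+2*y)^2-(x-y)^2 = y*(3*y-2*x) := by ring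
    have e2 : (-x+2*y)^2-4*(x-y)^2 = x*(4*y-3*x) := by ring
    rw [e1, e2]
    have e3 : (3*y-2*x)*(4*y-3*x) = 24*n^2*m^2 := by linear_combination 6*h1-17*h2
    calc _ = (x*y)*((3*y-2*x)*(4*y-3*x)) := by ring
      _ = _ := by rw [h2, e3]; ring

theorem ns2 (n : ℤ) : (2:ℤ) ≠ n*n := by
  intro h
  have h1 : n ≤ 1 := by nlinarith
  have h2 : -1 ≤ n := by nlinarith
  interval_cases n <;> omega

theorem dom2 : IsDomain (ℤ√2) :=
  (Zsqrtd.toReal_injective (d := 2) (by norm_num) ns2).isDomain _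

theorem K1 (A B b : ℤ√2) (d m : ℤ) (hd : d ≠ 0) (hm : m ≠ 0) (hb : b = ⟨3*d, 2*d⟩)
    (h : A^2-A*B*b-B^2*(m:ℤ√2)^2 = 0) : A = 0 ∧ B = 0 := by
  haveI := dom2
  by_cases hB : B = 0
  · subst hB
    simpa using h
  exfalso
  have hn : B.norm ≠ 0 := fun h0 => hB ((Zsqrtd.norm_eq_zero ns2 B).1 h0)
  have h1 : ((2*A-B*b)*star B)^2 = ((B.norm:ℤ):ℤ√2)^2*(b^2+4*(m:ℤ√2)^2) := by
    rw [Zsqrtd.norm_eq_mul_conj]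
    linear_combination 4*(star B)^2*h
  generalize (2*A-B*b)*star B = η at h1
  generalize B.norm = n at *
  obtain ⟨x, y⟩ := η
  subst hb
  rw [Zsqrtd.ext_iff] at h1
  simp [pow_two, ] at h1
  exact K0 x y n d m hn hd hm (by linarith [h1.1]) (by linarith [h1.2])

theorem L1 (φ : ℤ√2 →+* ℝ) (hφ : Function.Injective φ) (A B b : ℤ√2) (d m : ℤ) (hd : d ≠ 0) (hm : m ≠ 0)
    (hb : b = ⟨3*d, 2*d⟩) (β : ℝ) (hβ : β^2+φ b*β-m^2 = 0) (h : φ A + φ B*β = 0) : A = 0 ∧ B = 0 := by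
  apply K1 A B b d m hd hm hb
  apply hφ
  simp only [map_sub, map_mul, map_pow, map_intCast, map_zero]
  linear_combination (φ A - φ B*φ b - φ B*β)*h + (φ B)^2*hβ

theorem L2 (φ : ℤ√2 →+* ℝ) (hφ : Function.Injective φ) (A B C D b : ℤ√2) (d m : ℤ) (hd : d ≠ 0) (hm : m ≠ 0)
    (hb : b = ⟨3*d, 2*d⟩) (α β : ℝ) (hα : α^2 = β) (hβ : β^2+φ b*β-m^2 = 0)
    (h : φ A + φ B*β + α*(φ C + φ D*β) = 0) : A = 0 ∧ B = 0 ∧ C = 0 ∧ D = 0 := by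
  have h0 : (φ A + φ B*β)^2 = β*(φ C+φ D*β)^2 := by
    linear_combination (φ A + φ B*β - α*(φ C + φ D*β))*h + (φ C+φ D*β)^2*hα
  obtain ⟨h1, h2⟩ := L1 φ hφ (A^2+B^2*m^2-m^2*(2*C*D-b*D^2)) (2*A*B-b*B^2-(C^2+D^2*m^2-b*(2*C*D-b*D^2)))
    b d m hd hm hb β hβ (by
      simp only [map_sub, map_mul, map_pow, map_intCast, map_add, map_ofNat]
      linear_combination h0 + (-(φ B)^2 + 2*φ C*φ D + (φ D)^2*(β-φ b))*hβ)
  have h3 : (A^2-A*B*b-B^2*(m:ℤ√2)^2)^2 + m^2*(C^2-C*D*b-D^2*(m:ℤ√2)^2)^2 = 0 := by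
    have e : (A^2-A*B*b-B^2*(m:ℤ√2)^2)^2 = (A^2+B^2*m^2)^2-(A^2+B^2*m^2)*(2*A*B-b*B^2)*b-(2*A*B-b*B^2)^2*m^2 := by ring
    rw [e, sub_eq_zero.1 h1, sub_eq_zero.1 h2]
    ring
  have h4 := congrArg φ h3
  rw [map_add, map_mul, map_pow, map_pow, map_pow, map_zero, map_intCast] at h4
  have hm' : 0 < (m:ℝ)^2 := by positivity
  have h5 : φ (C^2-C*D*b-D^2*(m:ℤ√2)^2) = 0 := by
    by_contra hh
    have : 0 < (φ (C^2-C*D*b-D^2*(m:ℤ√2)^2))^2 := by positivity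
    nlinarith [sq_nonneg (φ (A^2-A*B*b-B^2*(m:ℤ√2)^2))]
  have h6 : φ (A^2-A*B*b-B^2*(m:ℤ√2)^2) = 0 := by
    rw [h5] at h4
    simpa using h4
  have k1 := K1 A B b d m hd hm hb (hφ (by rw [h6, map_zero]))
  have k2 := K1 C D b d m hd hm hb (hφ (by rw [h5, map_zero]))
  exact ⟨k1.1, k1.2, k2.1, k2.2⟩

theorem L3 (e0 e1 e2 e3 d m : ℤ) (b : ℤ√2) (hd : d ≠ 0) (hm : m ≠ 0) (hb : b = ⟨3*d, 2*d⟩)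
    (h1 : (e0:ℤ√2)+e2*m^2-e3*b*m^2 = 0) (h2 : (e1:ℤ√2)-e2*b+e3*(b^2+m^2) = 0) :
    e0 = 0 ∧ e1 = 0 ∧ e2 = 0 ∧ e3 = 0 := by
  subst hb
  rw [Zsqrtd.ext_iff] at h1 h2
  simp [pow_two] at h1 h2
  have h3 : e3 = 0 := by simpa [hd, hm] using h1.2
  subst h3
  have h4 : e2 = 0 := by simpa [hd, hm] using h2.2
  subst h4
  simpa using And.intro h1.1 h2.1

theorem L4 (d m : ℤ) (hd : d ≠ 0) (hm : m ≠ 0) : ∃ α : ℝ,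
    α^8+6*d*α^6+(d^2-2*m^2)*α^4-6*d*m^2*α^2+m^4 = 0 ∧
    ∀ p : ℤ[X], p.natDegree < 8 → aeval α p = 0 → p = 0 := by
  obtain ⟨φ, hφ⟩ : ∃ φ : ℤ√2 →+* ℝ, Function.Injective φ :=
    ⟨_, Zsqrtd.toReal_injective (d := 2) (by norm_num) ns2⟩
  obtain ⟨b, hb⟩ : ∃ b : ℤ√2, b = ⟨3*d, 2*d⟩ := ⟨_, rfl⟩
  have hb2 : b^2 - 6*d*b + d^2 = 0 := by
    subst hb
    rw [Zsqrtd.ext_iff]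
    constructor <;> simp [pow_two] <;> ring
  have hb3 : (φ b)^2 - 6*d*φ b + d^2 = 0 := by
    have := congrArg φ hb2
    have h6 : φ 6 = 6 := map_ofNat φ 6
    simpa [h6] using this
  have hm' : 0 < (m:ℝ)^2 := by positivity
  have hs := Real.sq_sqrt (show 0 ≤ (φ b)^2+4*(m:ℝ)^2 by positivity)
  obtain ⟨β, hβ0, hβ⟩ : ∃ β : ℝ, 0 ≤ β ∧ β^2+φ b*β-m^2 = 0 := by
    refine ⟨(-φ b + √((φ b)^2+4*(m:ℝ)^2))/2, ?_, by linear_combination hs/4⟩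
    have : φ b ≤ √((φ b)^2+4*(m:ℝ)^2) := Real.le_sqrt_of_sq_le (by linarith)
    linarith
  have hα := Real.sq_sqrt hβ0
  generalize √β = α at hα
  refine ⟨α, ?_, ?_⟩
  · rw [← hα] at hβ
    linear_combination (α^4+(6*d-φ b)*α^2-m^2)*hβ + α^4*hb3
  intro p hp h
  rw [aeval_eq_sum_range' hp] at h
  simp only [Finset.sum_range_succ, Finset.sum_range_zero, zsmul_eq_mul] at h
  obtain ⟨h1, h2, h3, h4⟩ := L2 φ hφ
    (p.coeff 0 + p.coeff 4*m^2-p.coeff 6*b*m^2) (p.coeff 2-p.coeff 4*b+p.coeff 6*(b^2+m^2))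
    (p.coeff 1 + p.coeff 5*m^2-p.coeff 7*b*m^2) (p.coeff 3-p.coeff 5*b+p.coeff 7*(b^2+m^2))
    b d m hd hm hb α β hα hβ (by
      simp only [map_sub, map_mul, map_pow, map_intCast, map_add]
      subst hα
      linear_combination h - ((p.coeff 4:ℝ) + p.coeff 6*(α^2-φ b) + α*(p.coeff 5 + p.coeff 7*(α^2-φ b)))*hβ)
  obtain ⟨a0, a2, a4, a6⟩ := L3 _ _ _ _ d m b hd hm hb h1 h2
  obtain ⟨a1, a3, a5, a7⟩ := L3 _ _ _ _ d m b hd hm hb h3 h4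
  ext i
  rw [coeff_zero]
  by_cases hi : i < 8
  · interval_cases i <;> assumption
  · exact coeff_eq_zero_of_natDegree_lt (by omega)

theorem cuboidPoly_irreducible (a u : ℤ) (ha : 0 < a) (hu : 0 < u)
    (hco : IsCoprime a u) (hne : a ≠ u) :
    Irreducible (cuboidPoly a u) := by
  have hd : u^2-a^2 ≠ 0 := by
    intro h
    have : (u-a)*(u+a) = 0 := by linarith
    rcases mul_eq_zero.1 this with h | h <;> omega
  have hm : a*u ≠ 0 := by positivity
  obtain ⟨α, h1, h2⟩ := L4 _ _ hd hm
  have hdeg : (cuboidPoly a u).natDegree = 8 := by unfold cuboidPoly; compute_degree!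
  have hmon : (cuboidPoly a u).Monic := by unfold cuboidPoly; monicity!
  have hev : aeval α (cuboidPoly a u) = 0 := by
    unfold cuboidPoly
    simp only [map_add, map_mul, map_pow, map_sub, map_neg, map_ofNat, map_intCast, aeval_X, eq_intCast]
    push_cast at h1 ⊢
    linear_combination h1
  rw [hmon.irreducible_iff_natDegree]
  refine ⟨fun h => by rw [h] at hdeg; simp at hdeg, fun f g hf hg hfg => ?_⟩
  have hs : f.natDegree + g.natDegree = 8 := by rw [← hf.natDegree_mul hg, hfg, hdeg]
  rw [← hfg, map_mul, mul_eq_zero] at hev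
  by_contra hcon
  rcases hev with h | h
  · exact hf.ne_zero (h2 f (by omega) h)
  · exact hg.ne_zero (h2 g (by omega) h)
end

section
/- For any coprime positive integers a and u with a ≠ u, the cuboid polynomial P_{a,u}(t) does not factor in ℤ[t] as a product of two monic polynomials each of degree 4. -/
open Polynomial

lemma coeffs (a u : ℤ) (F G : ℤ[X]) (hF : F.Monic) (hG : G.Monic) (dF : F.degree = 4)
   (dG : G.degree = 4) (h : cuboidPoly a u = F * G) :
   ∃ p q r k p' q' r' k' : ℤ, p + p' = 0 ∧ q + q' + p * p' = 6 * (u ^ 2 - a ^ 2) ∧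
    r + r' + p * q' + q * p' = 0 ∧
    k + k' + p * r' + r * p' + q * q' = (u ^ 2 - a ^ 2) ^ 2 - 2 * a ^ 2 * u ^ 2 ∧
    p * k' + k * p' + q * r' + r * q' = 0 ∧
    q * k' + k * q' + r * r' = -(6 * (u ^ 2 - a ^ 2) * (a ^ 2 * u ^ 2)) ∧
    r * k' + k * r' = 0 ∧ k * k' = a ^ 4 * u ^ 4 := by
  have nF : F.natDegree = 4 := natDegree_eq_of_degree_eq_some dF
  have nG : G.natDegree = 4 := natDegree_eq_of_degree_eq_some dG
  have f4 : F.coeff 4 = 1 := by rw [← nF]; exact hF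
  have g4 : G.coeff 4 = 1 := by rw [← nG]; exact hG
  have fz : ∀ n, 4 < n → F.coeff n = 0 := fun n hn => coeff_eq_zero_of_natDegree_lt (by omega)
  have gz : ∀ n, 4 < n → G.coeff n = 0 := fun n hn => coeff_eq_zero_of_natDegree_lt (by omega)
  have key : ∀ n, (cuboidPoly a u).coeff n = (F * G).coeff n := fun n => by rw [h]
  have h0 := key 0
  have h1 := key 1
  have h2 := key 2
  have h3 := key 3
  have h4 := key 4
  have h5 := key 5
  have h6 := key 6
  have h7 := key 7
  simp only [coeff_mul, Finset.Nat.sum_antidiagonal_eq_sum_range_succ_mk, Finset.sum_range_succ,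
    Finset.sum_range_zero, cuboidPoly, coeff_add, coeff_C_mul, coeff_X_pow, coeff_C] at h0 h1 h2 h3 h4 h5 h6 h7
  norm_num [f4, g4, fz, gz] at h0 h1 h2 h3 h4 h5 h6 h7
  refine ⟨F.coeff 3, F.coeff 2, F.coeff 1, F.coeff 0, G.coeff 3, G.coeff 2, G.coeff 1, G.coeff 0,
   ?_, ?_, ?_, ?_, ?_, ?_, ?_, ?_⟩ <;> linarith


lemma ratsq (x y : ℚ) (h : x ^ 2 = 2 * y ^ 2) : y = 0 := by
  by_contra hy
  apply irrational_sqrt_two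
  refine ⟨|x / y|, ?_⟩
  have h2 : (x / y) ^ 2 = 2 := by field_simp; linarith
  have h3 : ((x / y : ℚ) : ℝ) ^ 2 = 2 := by exact_mod_cast h2
  rw [← h3, Real.sqrt_sq_eq_abs]; push_cast; rfl

lemma oddcase (D m p q r k p' q' r' k' : ℚ) (hD : D ≠ 0) (hm : m ≠ 0)
  (e7 : p + p' = 0) (e6 : q + q' + p * p' = 6 * D) (e5 : r + r' + p * q' + q * p' = 0)
  (e4 : k + k' + p * r' + r * p' + q * q' = D ^ 2 - 2 * m ^ 2)
  (e3 : p * k' + k * p' + q * r' + r * q' = 0)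
  (e2 : q * k' + k * q' + r * r' = -(6 * D * m ^ 2))
  (e1 : r * k' + k * r' = 0) (e0 : k * k' = m ^ 4) : p = 0 ∧ r = 0 := by
  have hD2 : 0 < D ^ 2 := by positivity
  have hm2 : 0 < m ^ 2 := by positivity
  obtain rfl : p' = -p := by linarith
  by_cases hp : p = 0
  · refine ⟨hp, ?_⟩
    subst hp
    by_contra hr
    obtain rfl : r' = -r := by linarith
    have h1 : q' = q := by
      apply mul_left_cancel₀ hr; linarith
    have h2 : k' = k := by
      apply mul_left_cancel₀ hr; linarith
    subst h1 h2
    have h3 : q' = 3 * D := by linarith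
    subst h3
    have h4 : k' = -m ^ 2 - 4 * D ^ 2 := by linarith
    subst h4
    nlinarith [mul_pos hD2 hm2, mul_pos hD2 hD2]
  · exfalso
    have hp2 : 0 < p ^ 2 := by positivity
    obtain ⟨y, rfl⟩ : ∃ y, r = p * y := ⟨r / p, by field_simp⟩
    obtain ⟨y', rfl⟩ : ∃ y', r' = -(p * y') := ⟨-r' / p, by field_simp⟩
    have f5 : y - y' + q' - q = 0 := by
      apply mul_left_cancel₀ hp; linarith
    have f3 : k' - k - q * y' + y * q' = 0 := by
      apply mul_left_cancel₀ hp; linarith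
    have f1 : y * k' = k * y' := by
      apply mul_left_cancel₀ hp; linarith
    by_cases hd : y = y'
    · subst hd
      obtain rfl : q' = q := by linarith
      obtain rfl : k' = k := by linarith
      have hq : q' = 3 * D + p ^ 2 / 2 := by linarith
      have hk : (k' - m ^ 2) * (k' + m ^ 2) = 0 := by linarith
      rcases mul_eq_zero.1 hk with hk | hk
      · obtain rfl : k' = m ^ 2 := by linarith
        have hA : p ^ 2 * y = (4 * m ^ 2 + q' ^ 2 - D ^ 2) / 2 := by linarith
        have hB : p ^ 2 * y ^ 2 = 2 * q' * m ^ 2 + 6 * D * m ^ 2 := by linarith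
        have hAB : ((4 * m ^ 2 + q' ^ 2 - D ^ 2) / 2) ^ 2
            = p ^ 2 * (2 * q' * m ^ 2 + 6 * D * m ^ 2) := by
          rw [← hA, ← hB]; ring
        rw [hq] at hAB
        nlinarith [sq_nonneg ((p ^ 2 + 6 * D) ^ 2 - 4 * D ^ 2 - 16 * m ^ 2), mul_pos hm2 hD2]
      · obtain rfl : k' = -m ^ 2 := by linarith
        rw [hq] at e2
        nlinarith [mul_pos hp2 hm2, mul_nonneg hp2.le (sq_nonneg y)]
    · have hd' : y - y' ≠ 0 := sub_ne_zero.2 hd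
      obtain ⟨R, rfl⟩ : ∃ R, q = R + y := ⟨q - y, by ring⟩
      obtain rfl : q' = R + y' := by linarith
      have hk : k = y * R := by
        apply mul_left_cancel₀ hd'; linear_combination (f1 - y * f3)
      have hk' : k' = y' * R := by
        apply mul_left_cancel₀ hd'; linear_combination (f1 - y' * f3)
      subst hk hk'
      have hQ : (y ^ 2 - m ^ 2 - 3 * D * y) ^ 2 = 2 * (2 * D * y) ^ 2 := by
        linear_combination -y ^ 2 * e4 + y * e2 - e0 + y ^ 3 * e6
      have := ratsq _ _ hQ
      have hy : y = 0 := by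
        rcases mul_eq_zero.1 this with h | h
        · exact absurd h (by simpa using hD)
        · exact h
      subst hy
      have : m ^ 4 ≠ 0 := pow_ne_zero _ hm
      apply this; linarith

lemma evencase (D m q k q' k' : ℤ) (hD : D ≠ 0)
  (e6 : q + q' = 6 * D) (e4 : k + k' + q * q' = D ^ 2 - 2 * m ^ 2)
  (e2 : q * k' + k * q' = -(6 * D * m ^ 2)) (e0 : k * k' = m ^ 4) :
  ∃ x y : ℤ, x * y = 6 * D ^ 2 ∧ x ^ 2 + 2 * y ^ 2 = 17 * D ^ 2 + (2 * m) ^ 2 := by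
  obtain ⟨x, rfl⟩ : ∃ x, q = 3 * D - x := ⟨3 * D - q, by ring⟩
  obtain rfl : q' = 3 * D + x := by linarith
  have hk : x * (k - k') = -3 * D * (x ^ 2 - 8 * D ^ 2) := by linear_combination e2 - 3 * D * e4
  have hs : k + k' = x ^ 2 - 8 * D ^ 2 - 2 * m ^ 2 := by linear_combination e4
  have h1 : (x ^ 2 - 8 * D ^ 2) * (x ^ 4 - (17 * D ^ 2 + 4 * m ^ 2) * x ^ 2 + 72 * D ^ 4) = 0 := by
    have a1 : x ^ 2 * ((k + k') ^ 2 - 4 * m ^ 4) = (x * (k - k')) ^ 2 := by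
      rw [← e0]; ring
    rw [hk, hs] at a1
    linear_combination a1
  have h2 : x ^ 2 - 8 * D ^ 2 ≠ 0 := by
    intro h
    have := ratsq x (2 * D) (by have : x ^ 2 = 2 * (2 * D) ^ 2 := by linarith
                                exact_mod_cast this)
    apply hD; exact_mod_cast (mul_eq_zero.1 this).resolve_left (by norm_num)
  have h3 := (mul_eq_zero.1 h1).resolve_left h2
  have hx : x ≠ 0 := by
    rintro rfl
    have : D ^ 4 ≠ 0 := pow_ne_zero _ hD
    apply this; linarith
  have hdvd : x ∣ 12 * D ^ 2 := by
    rw [← Int.pow_dvd_pow_iff two_ne_zero]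
    exact ⟨2 * (17 * D ^ 2 + 4 * m ^ 2 - x ^ 2), by linear_combination 2 * h3⟩
  obtain ⟨w, hw⟩ := hdvd
  have hw2 : w ^ 2 = 2 * (17 * D ^ 2 + 4 * m ^ 2 - x ^ 2) := by
    have hx2 : x ^ 2 ≠ 0 := pow_ne_zero _ hx
    apply mul_left_cancel₀ hx2
    have : (x * w) ^ 2 = (12 * D ^ 2) ^ 2 := by rw [hw]
    linear_combination this + 2 * h3
  have hev : (2 : ℤ) ∣ w := Int.prime_two.dvd_of_dvd_pow (n := 2) ⟨_, hw2⟩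
  obtain ⟨y, rfl⟩ := hev
  exact ⟨x, y, by linarith, by linarith⟩

lemma possq {a b c : ℤ} (h : IsCoprime a b) (ha : 0 ≤ a) (hab : a * b = c ^ 2) :
    ∃ e, 0 ≤ e ∧ a = e ^ 2 := by
  obtain ⟨e, he | he⟩ := Int.sq_of_isCoprime h hab
  · exact ⟨|e|, abs_nonneg _, by rw [sq_abs]; exact he⟩
  · exact ⟨0, le_rfl, by nlinarith [sq_nonneg e]⟩

lemma possq2 {a b c : ℤ} (h : IsCoprime a b) (ha : 0 ≤ a) (hb : 0 ≤ b) (hab : a * b = c ^ 2) :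
    ∃ e f, 0 ≤ e ∧ 0 ≤ f ∧ a = e ^ 2 ∧ b = f ^ 2 := by
  obtain ⟨e, h1, h2⟩ := possq h ha hab
  obtain ⟨f, h3, h4⟩ := possq h.symm hb (by rw [mul_comm]; exact hab)
  exact ⟨e, f, h1, h3, h2, h4⟩

lemma four {e f m k : ℤ} (hm : m ≠ 0) (h : e * f = m * k) :
    ∃ p q r s, m = p * q ∧ e = p * r ∧ f = q * s ∧ k = r * s := by
  have hg : 0 < Int.gcd m e := Int.gcd_pos_of_ne_zero_left _ hm
  obtain ⟨q, r, hqr, h1, h2⟩ := Int.exists_gcd_one hg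
  set p : ℤ := (Int.gcd m e : ℤ) with hp
  have hp0 : p ≠ 0 := by rw [hp]; exact_mod_cast hg.ne'
  clear_value p
  subst h1 
  have h3 : r * f = q * k := by
    apply mul_left_cancel₀ hp0
    rw [h2] at h
    linarith
  have : q ∣ f := (Int.isCoprime_iff_gcd_eq_one.2 hqr).dvd_of_dvd_mul_left ⟨k, h3⟩
  obtain ⟨s, rfl⟩ := this
  have hq : q ≠ 0 := by rintro rfl; simp at hm
  refine ⟨p, q, r, s, by ring, by linarith, rfl, ?_⟩
  apply mul_left_cancel₀ hq; linarith

/-- one step of descent, odd leg. -/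
lemma stepB (e f m k : ℤ) (he : 0 < e) (hf : 0 < f) (he2 : e % 2 = 1) (hf2 : f % 2 = 1)
   (hef : IsCoprime e f) (hm : m ≠ 0) (hk : k ≠ 0) (h1 : 2 * m ^ 2 = (2 * e - f) * (e + f))
   (h2 : 2 * k ^ 2 = (2 * e + f) * (e - f)) :
   ∃ l n s t : ℤ, l ≠ 0 ∧ n ≠ 0 ∧ IsCoprime l n ∧ l ^ 2 + n ^ 2 = s ^ 2 ∧ l ^ 2 + 9 * n ^ 2 = t ^ 2 ∧
     n ^ 2 < e := by
  obtain ⟨E, hE⟩ : ∃ E, e + f = 2 * E := ⟨(e + f) / 2, by omega⟩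
  obtain ⟨Z, hZ⟩ : ∃ Z, e - f = 2 * Z := ⟨(e - f) / 2, by omega⟩
  obtain rfl : e = E + Z := by linarith
  obtain rfl : f = E - Z := by linarith
  have hm2 : 0 < m ^ 2 := by positivity
  have hk2 : 0 < k ^ 2 := by positivity
  have m1 : E * (E + 3 * Z) = m ^ 2 := by linarith
  have k1 : Z * (Z + 3 * E) = k ^ 2 := by linarith
  have hE0 : 0 < E := by linarith
  have hZ0 : 0 < Z := by
    have : 0 < Z + 3 * E := by linarith
    by_contra hh
    nlinarith
  have hco : IsCoprime E Z := by
    obtain ⟨c, d, hcd⟩ := hef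
    exact ⟨c + d, c - d, by linarith⟩
  by_cases hE3 : (3 : ℤ) ∣ E
  · obtain ⟨A, rfl⟩ := hE3
    obtain ⟨w, rfl⟩ : (3 : ℤ) ∣ m := Int.prime_three.dvd_of_dvd_pow (n := 2) ⟨A * (3 * A + 3 * Z), by linarith⟩
    have hAZ : IsCoprime A Z := hco.of_mul_left_right
    have h3Z : IsCoprime 3 Z := hco.of_mul_left_left
    have c1 : IsCoprime A (A + Z) := by simpa [add_comm] using hAZ.add_mul_left_right 1
    have c2 : IsCoprime Z (Z + 3 * (3 * A)) := by
      have : IsCoprime Z (3 * (3 * A)) := h3Z.symm.mul_right (h3Z.symm.mul_right hAZ.symm)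
      simpa [add_comm] using this.add_mul_left_right 1
    obtain ⟨n, s, -, -, rfl, hs⟩ := possq2 (c := w) c1 (by linarith) (by linarith) (by linarith)
    obtain ⟨l, t, -, -, rfl, ht⟩ := possq2 c2 (by linarith) (by linarith) k1
    refine ⟨l, n, s, t, by rintro rfl; simp at hZ0, by rintro rfl; simp at hE0, ?_, by linarith, by linarith, by linarith⟩
    exact (IsCoprime.pow_iff two_pos two_pos).1 hAZ.symm
  · have h3E : IsCoprime 3 E := (Int.prime_three.coprime_iff_not_dvd).2 hE3
    by_cases hZ3 : (3 : ℤ) ∣ Z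
    · obtain ⟨A, rfl⟩ := hZ3
      obtain ⟨w, rfl⟩ : (3 : ℤ) ∣ k := Int.prime_three.dvd_of_dvd_pow (n := 2) ⟨A * (3 * A + 3 * E), by linarith⟩
      have hAE : IsCoprime A E := hco.symm.of_mul_left_right
      have c1 : IsCoprime A (A + E) := by simpa [add_comm] using hAE.add_mul_left_right 1
      have c2 : IsCoprime E (E + 3 * (3 * A)) := by
        have : IsCoprime E (3 * (3 * A)) := h3E.symm.mul_right (h3E.symm.mul_right hAE.symm)
        simpa [add_comm] using this.add_mul_left_right 1
      obtain ⟨n, s, -, -, rfl, hs⟩ := possq2 (c := w) c1 (by linarith) (by linarith) (by linarith)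
      obtain ⟨l, t, -, -, rfl, ht⟩ := possq2 c2 (by linarith) (by linarith) m1
      refine ⟨l, n, s, t, by rintro rfl; simp at hE0, by rintro rfl; simp at hZ0, ?_, by linarith, by linarith, by linarith⟩
      exact (IsCoprime.pow_iff two_pos two_pos).1 hAE.symm
    · exfalso
      have h3Z : IsCoprime 3 Z := (Int.prime_three.coprime_iff_not_dvd).2 hZ3
      have c1 : IsCoprime E (E + 3 * Z) := by
        simpa [add_comm] using (h3E.symm.mul_right hco).add_mul_left_right 1
      have c2 : IsCoprime Z (Z + 3 * E) := by
        simpa [add_comm] using (h3Z.symm.mul_right hco.symm).add_mul_left_right 1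
      obtain ⟨_, s, -, -, -, hs⟩ := possq2 c1 (by linarith) (by linarith) m1
      obtain ⟨_, t, -, -, -, ht⟩ := possq2 c2 (by linarith) (by linarith) k1
      have a1 : s ^ 2 % 4 = 1 := by
        rcases Int.even_or_odd' s with ⟨c, rfl | rfl⟩
        · ring_nf at hs; omega
        · ring_nf; omega
      have a2 : t ^ 2 % 4 = 1 := by
        rcases Int.even_or_odd' t with ⟨c, rfl | rfl⟩
        · ring_nf at ht; omega
        · ring_nf; omega
      omega

lemma cop_cast {a b c d : ℤ} (h : IsCoprime a b) (h1 : a = c) (h2 : b = d) : IsCoprime c d := by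
  subst h1 h2; exact h

lemma bcop {m k : ℤ} (hmk : IsCoprime m k) (hpar : (m ^ 2 + k ^ 2) % 2 = 1) :
    IsCoprime (m ^ 2 + k ^ 2) m ∧ IsCoprime (m ^ 2 + k ^ 2) k ∧ IsCoprime (m ^ 2 + k ^ 2) 2 := by
  refine ⟨?_, ?_, ?_⟩
  · have : IsCoprime (k ^ 2) m := hmk.symm.pow_left
    have := this.add_mul_left_left m
    refine cop_cast this ?_ ?_ <;> ring
  · have : IsCoprime (m ^ 2) k := hmk.pow_left
    have := this.add_mul_left_left k
    refine cop_cast this ?_ ?_ <;> ring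
  · exact ⟨1, -((m ^ 2 + k ^ 2) / 2), by omega⟩

lemma sq_mod (m : ℤ) : (m % 2 = 0 ∧ m ^ 2 % 4 = 0) ∨ (m % 2 = 1 ∧ m ^ 2 % 8 = 1) := by
  have h : m % 8 = 0 ∨ m % 8 = 1 ∨ m % 8 = 2 ∨ m % 8 = 3 ∨ m % 8 = 4 ∨ m % 8 = 5 ∨ m % 8 = 6 ∨
    m % 8 = 7 := by omega
  have h2 : m ^ 2 % 8 = ((m % 8) * (m % 8)) % 8 := by rw [pow_two, Int.mul_emod]
  rcases h with h | h | h | h | h | h | h | h <;> rw [h] at h2 <;> norm_num at h2 <;> omega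

lemma natAbs_lt_aux {p x : ℤ} (hx : x ≠ 0) (h : p ∣ x) : p.natAbs < (2 * x).natAbs := by
  have h1 : p.natAbs ≤ x.natAbs := Nat.le_of_dvd (by omega) (Int.natAbs_dvd_natAbs.2 h)
  omega

lemma stepA (m k X : ℤ) (hmk : IsCoprime m k) (hpar : (m % 2 = 0 ∧ k % 2 = 1) ∨ (m % 2 = 1 ∧ k % 2 = 0))
    (hm : m ≠ 0) (hk : k ≠ 0) (hX : 0 < X) (h : X * (m ^ 2 + k ^ 2 + X) = 8 * (m * k) ^ 2) :
    ∃ l n s t : ℤ, l ≠ 0 ∧ n ≠ 0 ∧ IsCoprime l n ∧ l ^ 2 + n ^ 2 = s ^ 2 ∧ l ^ 2 + 9 * n ^ 2 = t ^ 2 ∧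
     n.natAbs < (2 * (m * k)).natAbs := by
  have hB : (m ^ 2 + k ^ 2) % 4 = 1 := by
    have := sq_mod m
    have := sq_mod k
    omega
  obtain ⟨b1, b2, b3⟩ := bcop hmk (by omega)
  have c0 : IsCoprime (m ^ 2 + k ^ 2) (8 * (m * k) ^ 2) := by
    have : IsCoprime (m ^ 2 + k ^ 2) (2 ^ 3 * (m * k) ^ 2) :=
      (b3.pow_right).mul_right ((b1.mul_right b2).pow_right)
    simpa using this
  have c1 : IsCoprime X (m ^ 2 + k ^ 2) := by
    exact (c0.of_isCoprime_of_dvd_right ⟨_, h.symm⟩).symm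
  have c2 : IsCoprime X (m ^ 2 + k ^ 2 + X) := by
    simpa using c1.add_mul_left_right 1
  have hmk0 : m * k ≠ 0 := mul_ne_zero hm hk
  have hBp : 0 < m ^ 2 + k ^ 2 := by positivity
  obtain ⟨e, f, h1, h2, hf⟩ : ∃ e f : ℤ, f ^ 2 - 8 * e ^ 2 = m ^ 2 + k ^ 2 ∧ (e * f) ^ 2 = (m * k) ^ 2 ∧ f % 2 = 1 := by
    rcases Int.emod_two_eq_zero_or_one X with hx | hx
    · have hc : IsCoprime (8 : ℤ) (m ^ 2 + k ^ 2 + X) := by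
        have : IsCoprime ((2 : ℤ) ^ 3) (m ^ 2 + k ^ 2 + X) :=
          IsCoprime.pow_left ⟨-((m ^ 2 + k ^ 2 + X) / 2), 1, by omega⟩
        simpa using this
      obtain ⟨X', rfl⟩ : (8 : ℤ) ∣ X := hc.dvd_of_dvd_mul_right ⟨_, h⟩
      obtain ⟨e, f, -, -, he, hf⟩ := possq2 (c := m * k) c2.of_mul_left_right (by linarith) (by linarith) (by linarith)
      refine ⟨e, f, by linarith, ?_, ?_⟩
      · rw [mul_pow, ← he, ← hf]; linarith
      · have := sq_mod f; omega
    · exfalso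
      have hc : IsCoprime (8 : ℤ) X := by
        have : IsCoprime ((2 : ℤ) ^ 3) X :=
          IsCoprime.pow_left ⟨-(X / 2), 1, by omega⟩
        simpa using this
      obtain ⟨Y, hY⟩ : (8 : ℤ) ∣ (m ^ 2 + k ^ 2 + X) := hc.dvd_of_dvd_mul_left ⟨_, h⟩
      rw [hY] at c2 h
      obtain ⟨f, e, -, -, hf, he⟩ := possq2 (c := m * k) c2.of_mul_right_right (by linarith) (by linarith) (by linarith)
      have := sq_mod f
      omega
  obtain ⟨f, h1, h2, hf⟩ : ∃ f : ℤ, f ^ 2 - 8 * e ^ 2 = m ^ 2 + k ^ 2 ∧ e * f = m * k ∧ f % 2 = 1 := by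
    rcases sq_eq_sq_iff_eq_or_eq_neg.1 h2 with h3 | h3
    · exact ⟨f, h1, h3, hf⟩
    · exact ⟨-f, by linarith, by linarith, by omega⟩
  obtain ⟨p, q, r, s, rfl, rfl, rfl, rfl⟩ := four hm h2
  have hp : p ≠ 0 := by rintro rfl; simp at hm
  have hq : q ≠ 0 := by rintro rfl; simp at hm
  have hr : r ≠ 0 := by rintro rfl; simp at hk
  have hs : s ≠ 0 := by rintro rfl; simp at hk
  have cqr : IsCoprime q r := hmk.of_mul_left_right.of_mul_right_left
  have cps : IsCoprime p s := hmk.of_mul_left_left.of_mul_right_right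
  have cpr : IsCoprime p r := hmk.of_mul_left_left.of_mul_right_left
  have hqs : q % 2 = 1 ∧ s % 2 = 1 := by
    have := Int.odd_iff.2 hf
    rw [Int.odd_mul, Int.odd_iff, Int.odd_iff] at this
    exact this
  have key : q ^ 2 * (s ^ 2 - p ^ 2) = r ^ 2 * (s ^ 2 + 8 * p ^ 2) := by linarith
  obtain ⟨g, hg⟩ : r ^ 2 ∣ s ^ 2 - p ^ 2 :=
    (cqr.symm.pow : IsCoprime (r ^ 2) (q ^ 2)).dvd_of_dvd_mul_left ⟨_, key⟩
  have hg2 : s ^ 2 + 8 * p ^ 2 = q ^ 2 * g := by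
    apply mul_left_cancel₀ (pow_ne_zero 2 hr)
    rw [← key, hg]; ring
  have hgp : 0 < g := by
    have : 0 < s ^ 2 + 8 * p ^ 2 := by positivity
    have : 0 < q ^ 2 := by positivity
    by_contra hh
    nlinarith
  have hg9 : g ∣ 9 := by
    obtain ⟨c, d, hcd⟩ := (cps.pow : IsCoprime (p ^ 2) (s ^ 2))
    exact ⟨c * (q ^ 2 - r ^ 2) + d * (8 * r ^ 2 + q ^ 2), by
      linear_combination (-9) * hcd + (d * 8 - c) * hg + (c + d) * hg2⟩
  have hgle : g ≤ 9 := Int.le_of_dvd (by norm_num) hg9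
  have hg' : g = 1 ∨ g = 3 ∨ g = 9 := by
    interval_cases g <;> revert hg9 <;> decide
  rcases hg' with rfl | rfl | rfl
  · refine ⟨r, p, s, q, hr, hp, cpr.symm, by linarith, by linarith, natAbs_lt_aux hmk0 ⟨q * (r * s), by ring⟩⟩
  · exfalso
    have := sq_mod s
    have := sq_mod q
    omega
  · refine ⟨p, r, q, s, hp, hr, cpr, by linarith, by linarith, natAbs_lt_aux hmk0 ⟨p * q * s, by ring⟩⟩

lemma lemS (N : ℕ) : ∀ α β γ δ : ℤ, γ.natAbs ≤ N → IsCoprime α γ → α ≠ 0 → γ ≠ 0 →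
    α ^ 2 + γ ^ 2 = β ^ 2 → α ^ 2 + 9 * γ ^ 2 = δ ^ 2 → False := by
  induction N with
  | zero => intro α β γ δ h _ _ h2; omega
  | succ N ih =>
  intro α β γ δ hN hco hα hγ h1 h2
  have hpt : PythagoreanTriple α γ β ∧ Int.gcd α γ = 1 :=
    ⟨by unfold PythagoreanTriple; linarith, Int.isCoprime_iff_gcd_eq_one.1 hco⟩
  obtain ⟨m, k, hcase, hβ, hmk, hpar⟩ := PythagoreanTriple.coprime_classification.1 hpt
  rw [← Int.isCoprime_iff_gcd_eq_one] at hmk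
  have hβ2 : β ^ 2 = (m ^ 2 + k ^ 2) ^ 2 := by
    rcases hβ with rfl | rfl <;> ring
  have hB : (m ^ 2 + k ^ 2) % 4 = 1 := by
    have := sq_mod m
    have := sq_mod k
    omega
  have hBp : 0 < m ^ 2 + k ^ 2 := by
    have := sq_nonneg m
    have := sq_nonneg k
    omega
  have hγ2 : 0 < γ ^ 2 := by positivity
  have hd2 : |δ| ^ 2 = (m ^ 2 + k ^ 2) ^ 2 + 8 * γ ^ 2 := by rw [sq_abs]; linarith
  have hdlt : m ^ 2 + k ^ 2 < |δ| := by
    apply lt_of_pow_lt_pow_left₀ 2 (abs_nonneg _); linarith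
  have hdodd : |δ| % 2 = 1 := by
    have a1 := sq_mod |δ|
    have a2 := sq_mod (m ^ 2 + k ^ 2)
    omega
  obtain ⟨X, hX⟩ : ∃ X, |δ| = m ^ 2 + k ^ 2 + 2 * X := ⟨(|δ| - (m ^ 2 + k ^ 2)) / 2, by omega⟩
  have hX0 : 0 < X := by linarith
  rw [hX] at hd2
  have hXe : X * (m ^ 2 + k ^ 2 + X) = 2 * γ ^ 2 := by linarith
  rcases hcase with ⟨rfl, rfl⟩ | ⟨rfl, rfl⟩
  · have hm : m ≠ 0 := by rintro rfl; simp at hγ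
    have hk : k ≠ 0 := by rintro rfl; simp at hγ
    obtain ⟨l, n, s, t, a1, a2, a3, a4, a5, a6⟩ := stepA m k X hmk hpar hm hk hX0 (by linarith)
    exact ih l s n t (by rw [mul_assoc] at hN; omega) a3 a1 a2 a4 a5
  · have hm : m ≠ 0 := by rintro rfl; simp at hα
    have hk : k ≠ 0 := by rintro rfl; simp at hα
    set γ := m ^ 2 - k ^ 2 with hγd
    obtain ⟨b1, b2, b3⟩ := bcop hmk (by omega)
    have c3 : IsCoprime (m ^ 2 + k ^ 2) γ := by
      have : IsCoprime (m ^ 2 + k ^ 2) (-(2 * k ^ 2)) := (b3.mul_right (b2.pow_right)).neg_right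
      have := this.add_mul_left_right 1
      rw [show γ = -(2 * k ^ 2) + (m ^ 2 + k ^ 2) * 1 by rw [hγd]; ring]; exact this
    have c0 : IsCoprime (m ^ 2 + k ^ 2) (2 * γ ^ 2) := b3.mul_right c3.pow_right
    have c1 : IsCoprime X (m ^ 2 + k ^ 2) :=
      (c0.of_isCoprime_of_dvd_right ⟨_, hXe.symm⟩).symm
    have c2 : IsCoprime X (m ^ 2 + k ^ 2 + X) := by
      simpa using c1.add_mul_left_right 1
    have hγo : γ ^ 2 % 8 = 1 := by
      have := sq_mod m
      have := sq_mod k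
      have := sq_mod γ
      omega
    rcases Int.emod_two_eq_zero_or_one X with hx | hx
    · obtain ⟨X', rfl⟩ : (2 : ℤ) ∣ X := by omega
      obtain ⟨e, f, -, -, he, hf⟩ := possq2 (c := γ) c2.of_mul_left_right (by linarith) (by linarith) (by linarith)
      have a1 := sq_mod e
      have a2 := sq_mod f
      have a3 : Odd (e ^ 2 * f ^ 2) := by
        rw [← he, ← hf, Int.odd_iff]
        have : X' * (m ^ 2 + k ^ 2 + 2 * X') = γ ^ 2 := by linarith
        omega
      rw [Int.odd_mul, Int.odd_iff, Int.odd_iff] at a3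
      omega
    · obtain ⟨Y, hY⟩ : (2 : ℤ) ∣ (m ^ 2 + k ^ 2 + X) := by omega
      rw [hY] at c2 hXe
      have c4 := c2.of_mul_right_right
      obtain ⟨f, e, hf0, he0, hf, he⟩ := possq2 (c := γ) c4 (by linarith) (by linarith) (by linarith)
      have hef2 : (e * f) ^ 2 = γ ^ 2 := by rw [mul_pow, ← hf, ← he]; linarith
      have a3 : Odd (e * f) := by
        have := sq_mod (e * f)
        rw [Int.odd_iff]; omega
      rw [Int.odd_mul, Int.odd_iff, Int.odd_iff] at a3
      have he1 : 0 < e := by omega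
      have hf1 : 0 < f := by omega
      have cef : IsCoprime e f := by
        rw [hf, he] at c4
        exact ((IsCoprime.pow_iff two_pos two_pos).1 c4).symm
      have hle : e ≤ |γ| := by
        rw [← (sq_eq_sq_iff_abs_eq_abs _ _).1 hef2, abs_of_pos (by positivity)]
        nlinarith
      have hsum : 2 * e ^ 2 - f ^ 2 = m ^ 2 + k ^ 2 := by linarith
      have : ∃ l n s t : ℤ, l ≠ 0 ∧ n ≠ 0 ∧ IsCoprime l n ∧ l ^ 2 + n ^ 2 = s ^ 2 ∧
          l ^ 2 + 9 * n ^ 2 = t ^ 2 ∧ n ^ 2 < e := by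
        rcases sq_eq_sq_iff_eq_or_eq_neg.1 hef2 with h3 | h3
        · exact stepB e f m k he1 hf1 a3.1 a3.2 cef hm hk (by linarith) (by linarith)
        · exact stepB e f k m he1 hf1 a3.1 a3.2 cef hk hm (by linarith) (by linarith)
      obtain ⟨l, n, s, t, a1, a2, a3, a4, a5, a6⟩ := this
      refine ih l s n t ?_ a3 a1 a2 a4 a5
      have : |n| ≤ n ^ 2 := by
        rw [← sq_abs]
        have := Int.one_le_abs a2
        nlinarith
      have h9 : |n| < |γ| := by linarith
      rw [Int.abs_eq_natAbs, Int.abs_eq_natAbs] at h9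
      omega

lemma lemT (D n x y : ℤ) (hco : IsCoprime D n) (hpar : (D + n) % 2 = 1) (hD : D ≠ 0) (hn : n ≠ 0)
    (h1 : x * y = 6 * D ^ 2) (h2 : x ^ 2 + 2 * y ^ 2 = 17 * D ^ 2 + n ^ 2) : False := by
  wlog hx : 0 ≤ x generalizing x y
  · exact this (-x) (-y) (by linarith) (by linarith) (by linarith)
  have hD2 : 0 < D ^ 2 := by positivity
  have hn2 : 0 < n ^ 2 := by positivity
  have hx0 : 0 < x := by
    rcases hx.lt_or_eq with h | h
    · exact h
    · rw [← h] at h1; linarith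
  have hy0 : 0 < y := by
    by_contra hh
    nlinarith
  have hxo : x % 2 = 1 := by
    have := sq_mod x
    have := sq_mod D
    have := sq_mod n
    omega
  have hye : (2 : ℤ) ∣ y := by
    have : IsCoprime (2 : ℤ) x := ⟨-(x / 2), 1, by omega⟩
    exact this.dvd_of_dvd_mul_left ⟨3 * D ^ 2, by linarith⟩
  have hcop : IsCoprime x y := by
    apply isCoprime_of_prime_dvd (by omega)
    intro p hp hpx hpy
    have hpn : p ^ 2 ∣ 6 * D ^ 2 := by rw [← h1, pow_two]; exact mul_dvd_mul hpx hpy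
    have hpD : p ∣ D := by
      by_contra hh
      have hc : IsCoprime (p ^ 2) (D ^ 2) := ((hp.coprime_iff_not_dvd).2 hh).pow
      have h6 : p ^ 2 ∣ 6 := hc.dvd_of_dvd_mul_right hpn
      have hu := hp.not_isUnit
      rw [Int.isUnit_iff] at hu
      have h60 := Int.le_of_dvd (by norm_num) h6
      have b1 : p ≤ 2 := by nlinarith
      have b2 : -2 ≤ p := by nlinarith
      have b0 := hp.ne_zero
      interval_cases p <;> revert h6 <;> first | (exfalso; revert hu b0; decide) | decide
    have hpn : p ∣ n ^ 2 := by
      have : n ^ 2 = x ^ 2 + 2 * y ^ 2 - 17 * D ^ 2 := by linarith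
      rw [this]
      exact dvd_sub (dvd_add (dvd_pow hpx two_ne_zero) ((dvd_pow hpy two_ne_zero).mul_left _))
        ((dvd_pow hpD two_ne_zero).mul_left _)
    exact hp.not_isUnit (hco.isUnit_of_dvd' hpD (hp.dvd_of_dvd_pow hpn))
  obtain ⟨z, rfl⟩ := hye
  have h3 : (3 : ℤ) ∣ x * z := ⟨D ^ 2, by linarith⟩
  rcases Int.prime_three.dvd_or_dvd h3 with ⟨w, rfl⟩ | ⟨w, rfl⟩
  · obtain ⟨a, b, -, -, rfl, rfl⟩ := possq2 (c := D) (hcop.of_mul_left_right.of_mul_right_right)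
      (by linarith) (by linarith) (by linarith)
    have cab : IsCoprime (a ^ 2) (b ^ 2) := hcop.of_mul_left_right.of_mul_right_right
    have hDab : D ^ 2 = a ^ 2 * b ^ 2 := by linarith
    have hnn : (a ^ 2 - b ^ 2) * (9 * a ^ 2 - 8 * b ^ 2) = n ^ 2 := by linarith
    have ha2 : a ^ 2 % 8 = 1 := by
      have := sq_mod a
      omega
    have cc : IsCoprime (a ^ 2 - b ^ 2) (9 * a ^ 2 - 8 * b ^ 2) := by
      have c1 : IsCoprime (a ^ 2 - b ^ 2) (a ^ 2) := by
        obtain ⟨c, d, hcd⟩ := cab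
        exact ⟨-d, c + d, by linarith⟩
      have := c1.add_mul_left_right 8
      refine cop_cast this ?_ ?_ <;> ring
    have hpos : 0 ≤ 9 * a ^ 2 - 8 * b ^ 2 := by
      obtain ⟨e, he | he⟩ := Int.sq_of_isCoprime cc.symm (by rw [mul_comm]; exact hnn)
      · rw [he]; positivity
      · exfalso
        have := sq_mod e
        omega
    have hpos2 : 0 ≤ a ^ 2 - b ^ 2 := by
      by_contra hh
      nlinarith
    obtain ⟨c, d, -, -, hc, hd⟩ := possq2 cc hpos2 hpos hnn
    have hb0 : b ≠ 0 := by rintro rfl; simp at hy0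
    have hc0 : c ≠ 0 := by rintro rfl; rw [hc] at hnn; simp at hnn; exact hn (pow_eq_zero_iff two_ne_zero |>.1 hnn.symm)
    refine lemS _ b a c d le_rfl ?_ hb0 hc0 (by linarith) (by linarith)
    rw [← IsCoprime.pow_iff two_pos two_pos, ← hc]
    simpa [sub_eq_add_neg] using cab.symm.add_mul_left_right (-1)
  · obtain ⟨a, b, -, -, rfl, rfl⟩ := possq2 (c := D) (hcop.of_mul_right_right.of_mul_right_right)
      (by linarith) (by linarith) (by linarith)
    have cab : IsCoprime (a ^ 2) (b ^ 2) := hcop.of_mul_right_right.of_mul_right_right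
    have hDab : D ^ 2 = a ^ 2 * b ^ 2 := by linarith
    have hnn : (a ^ 2 - 9 * b ^ 2) * (a ^ 2 - 8 * b ^ 2) = n ^ 2 := by linarith
    have ha2 : a ^ 2 % 8 = 1 := by
      have := sq_mod a
      omega
    have cc : IsCoprime (a ^ 2 - 9 * b ^ 2) (a ^ 2 - 8 * b ^ 2) := by
      obtain ⟨c, d, hcd⟩ := cab
      exact ⟨-(8 * c + d), 9 * c + d, by linarith⟩
    have hpos : 0 ≤ a ^ 2 - 8 * b ^ 2 := by
      obtain ⟨e, he | he⟩ := Int.sq_of_isCoprime cc.symm (by rw [mul_comm]; exact hnn)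
      · rw [he]; positivity
      · exfalso
        have := sq_mod e
        omega
    have hpos2 : 0 ≤ a ^ 2 - 9 * b ^ 2 := by
      by_contra hh
      nlinarith
    obtain ⟨c, d, -, -, hc, hd⟩ := possq2 cc hpos2 hpos hnn
    have hb0 : b ≠ 0 := by rintro rfl; simp at hy0
    have hc0 : c ≠ 0 := by rintro rfl; rw [hc] at hnn; simp at hnn; exact hn (pow_eq_zero_iff two_ne_zero |>.1 hnn.symm)
    refine lemS _ c d b a le_rfl ?_ hc0 hb0 (by linarith) (by linarith)
    rw [← IsCoprime.pow_iff two_pos two_pos, ← hc]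
    have := cab.add_mul_left_left (-9)
    refine cop_cast this ?_ ?_ <;> ring

theorem cuboidPoly_no_4_4_factorization (a u : ℤ) (ha : 0 < a) (hu : 0 < u)
    (hco : IsCoprime a u) (hne : a ≠ u) :
    ¬ ∃ F G : Polynomial ℤ, F.Monic ∧ G.Monic ∧ F.degree = 4 ∧ G.degree = 4 ∧
      cuboidPoly a u = F * G := by
  rintro ⟨F, G, hF, hG, dF, dG, h⟩
  obtain ⟨p, q, r, k, p', q', r', k', e7, e6, e5, e4, e3, e2, e1, e0⟩ :=
    coeffs a u F G hF hG dF dG h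
  have hm : a * u ≠ 0 := by positivity
  have hD : u ^ 2 - a ^ 2 ≠ 0 := by
    have h1 : u - a ≠ 0 := sub_ne_zero.2 hne.symm
    have h2 : u + a ≠ 0 := by positivity
    have := mul_ne_zero h1 h2
    intro h3; apply this; linarith
  have hpr := oddcase ((u ^ 2 - a ^ 2 : ℤ) : ℚ) ((a * u : ℤ) : ℚ) p q r k p' q' r' k'
    (by exact_mod_cast hD) (by exact_mod_cast hm) (by exact_mod_cast e7) (by exact_mod_cast e6)
    (by exact_mod_cast e5) (by rw [show (a * u) = a * u from rfl]; norm_cast; linarith)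
    (by exact_mod_cast e3) (by norm_cast; linarith) (by exact_mod_cast e1)
    (by norm_cast; linarith)
  obtain ⟨hp, hr⟩ := hpr
  norm_cast at hp hr
  subst hp hr
  obtain rfl : p' = 0 := by linarith
  obtain rfl : r' = 0 := by linarith
  obtain ⟨x, y, h1, h2⟩ := evencase (u ^ 2 - a ^ 2) (a * u) q k q' k' hD (by linarith)
    (by linarith) (by linarith) (by linarith)
  have cuD : IsCoprime (u ^ 2 - a ^ 2) u := by
    have : IsCoprime (-a ^ 2) u := hco.pow_left.neg_left
    have := this.add_mul_left_left u
    refine cop_cast this ?_ ?_ <;> ring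
  have caD : IsCoprime (u ^ 2 - a ^ 2) a := by
    have : IsCoprime (u ^ 2) a := hco.symm.pow_left
    have := this.add_mul_left_left (-a)
    refine cop_cast this ?_ ?_ <;> ring
  have cD : IsCoprime (u ^ 2 - a ^ 2) (a * u) := caD.mul_right cuD
  have sa := sq_mod a
  have su := sq_mod u
  rcases Int.emod_two_eq_zero_or_one (u ^ 2 - a ^ 2) with hp | hp
  · obtain ⟨D, hDe⟩ : (2 : ℤ) ∣ u ^ 2 - a ^ 2 := by omega
    have hodd : a % 2 = 1 ∧ u % 2 = 1 := by
      by_contra hh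
      have h2a : (2 : ℤ) ∣ a := by omega
      have h2u : (2 : ℤ) ∣ u := by omega
      have := hco.isUnit_of_dvd' h2a h2u
      rw [Int.isUnit_iff] at this; omega
    have hau : (a * u) % 2 = 1 := by
      rw [← Int.odd_iff, Int.odd_mul, Int.odd_iff, Int.odd_iff]; exact hodd
    rw [hDe] at h1 h2 cD hD
    have hx : (2 : ℤ) ∣ x :=
      Int.prime_two.dvd_of_dvd_pow (n := 2) ⟨34 * D ^ 2 + 2 * (a * u) ^ 2 - y ^ 2, by linarith⟩
    obtain ⟨x, rfl⟩ := hx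
    have hy : (2 : ℤ) ∣ y :=
      Int.prime_two.dvd_of_dvd_pow (n := 2) ⟨17 * D ^ 2 + (a * u) ^ 2 - x ^ 2, by linarith⟩
    obtain ⟨y, rfl⟩ := hy
    exact lemT D (a * u) x y cD.of_mul_left_right (by omega) (by omega) hm (by linarith) (by linarith)
  · refine lemT (u ^ 2 - a ^ 2) (2 * (a * u)) x y (IsCoprime.mul_right ?_ cD) (by omega) hD
      (by omega) h1 h2
    exact ⟨1, -((u ^ 2 - a ^ 2) / 2), by omega⟩
end

section
/- Suppose P_{a,u}(t) = F(t)·G(t) with F, G ∈ ℤ[t] monic of degree 4. Then, after possibly swapping F and G, one of the following holds: (E) both factors are even polynomials, i.e. F(−t) = F(t) and G(−t) = G(t); or (C) G(t) = F(−t). -/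
open Polynomial

theorem no_rat_sqrt_two (x y : ℚ) (hy : y ≠ 0) (h : x ^ 2 = 2 * y ^ 2) : False := by
  have h2 : (x / y) ^ 2 = 2 := by
    field_simp
    linarith
  have h3 : IsSquare (2 : ℚ) := ⟨x / y, by rw [← h2]; ring⟩
  have h4 : IsSquare ((2 : ℕ) : ℚ) := by exact_mod_cast h3
  rw [Rat.isSquare_natCast_iff] at h4
  exact Nat.prime_two.prime.not_isSquare h4

theorem even_of_coeffs (F : Polynomial ℤ) (hd : F.natDegree = 4) (h1 : F.coeff 1 = 0)
    (h3 : F.coeff 3 = 0) : F.comp (-X) = F := by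
  have := F.as_sum_range_C_mul_X_pow
  rw [hd] at this
  simp only [Finset.sum_range_succ, Finset.sum_range_zero, h1, h3] at this
  rw [this]
  simp only [add_comp, mul_comp, pow_comp, X_comp, C_comp, zero_comp, C_0]
  ring

theorem no_root (a u c : ℚ) (hc : c ≠ 0) (hd : u ^ 2 - a ^ 2 ≠ 0)
    (h : c ^ 4 + (6 * (u ^ 2 - a ^ 2)) * c ^ 3
    + ((u ^ 2 - a ^ 2) ^ 2 - 2 * a ^ 2 * u ^ 2) * c ^ 2
    + (-(6 * (u ^ 2 - a ^ 2) * (a ^ 2 * u ^ 2))) * c + a ^ 4 * u ^ 4 = 0) : False := by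
  apply no_rat_sqrt_two (c ^ 2 - a ^ 2 * u ^ 2 + 3 * (u ^ 2 - a ^ 2) * c)
    (2 * (u ^ 2 - a ^ 2) * c) (by simp [hc, hd])
  linear_combination h

theorem cuboidPoly_4_4_factorization_types (a u : ℤ) (ha : 0 < a) (hu : 0 < u)
    (hco : IsCoprime a u) (hne : a ≠ u)
    (F G : Polynomial ℤ) (hF : F.Monic) (hG : G.Monic)
    (hFdeg : F.degree = 4) (hGdeg : G.degree = 4)
    (hFG : cuboidPoly a u = F * G) :
    (F.comp (-X) = F ∧ G.comp (-X) = G) ∨ G = F.comp (-X) ∨ F = G.comp (-X) := by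
  have hFn : F.natDegree = 4 := natDegree_eq_of_degree_eq_some hFdeg
  have hGn : G.natDegree = 4 := natDegree_eq_of_degree_eq_some hGdeg
  have hPe : (cuboidPoly a u).comp (-X) = cuboidPoly a u := by
    simp only [cuboidPoly, add_comp, mul_comp, pow_comp, X_comp, C_comp]
    ring
  by_cases h13 : F.coeff 1 = 0 ∧ F.coeff 3 = 0
  · left
    have hFe := even_of_coeffs F hFn h13.1 h13.2
    refine ⟨hFe, ?_⟩
    have h := hPe
    rw [hFG, mul_comp, hFe] at h
    exact mul_left_cancel₀ hF.ne_zero h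
  right; left
  have hHn : (F.comp (-X)).natDegree = 4 := by
    rw [natDegree_comp, hFn]; simp
  have hHm : (F.comp (-X)).Monic := by
    rw [Monic, leadingCoeff_comp (by simp), hF, hFn]; simp
  have hcop : IsCoprime ((F.comp (-X)).map (Int.castRingHom ℚ)) (F.map (Int.castRingHom ℚ)) := by
    rw [isCoprime_iff_aeval_ne_zero_of_isAlgClosed ℚ ℂ]
    intro z
    by_contra hcon
    push Not at hcon
    obtain ⟨h1, h2⟩ := hcon
    have hFs := F.as_sum_range_C_mul_X_pow
    rw [hFn] at hFs
    simp only [Finset.sum_range_succ, Finset.sum_range_zero] at hFs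
    have hP0 : aeval z ((cuboidPoly a u).map (Int.castRingHom ℚ)) = 0 := by
      rw [hFG, Polynomial.map_mul, map_mul, h2, zero_mul]
    rw [hFs] at h1 h2
    simp at h1 h2
    simp [cuboidPoly] at hP0
    have e6 : aeval z (6 : ℚ[X]) = 6 := map_ofNat _ 6
    have e2 : aeval z (2 : ℚ[X]) = 2 := map_ofNat _ 2
    rw [e6, e2] at hP0
    have hz : z ≠ 0 := by
      rintro rfl
      simp at hP0
      omega
    have hpr : z * ((F.coeff 3 : ℂ) * z ^ 2 + F.coeff 1) = 0 := by
      linear_combination (h2 - h1) / 2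
    have hpr := (mul_eq_zero.mp hpr).resolve_left hz
    have hp : F.coeff 3 ≠ 0 := by
      intro h0
      rw [h0] at hpr
      simp at hpr
      exact h13 ⟨hpr, h0⟩
    have hpC : (F.coeff 3 : ℂ) ≠ 0 := by exact_mod_cast hp
    have hzc : z ^ 2 = ((-(F.coeff 1 : ℚ) / (F.coeff 3 : ℚ) : ℚ) : ℂ) := by
      push_cast
      field_simp
      linear_combination hpr
    generalize (-(F.coeff 1 : ℚ) / (F.coeff 3 : ℚ) : ℚ) = c at hzc
    have hc : c ≠ 0 := by
      rintro rfl
      simp at hzc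
      exact hz hzc
    apply no_root a u c hc
    · intro h0
      have h0 : u ^ 2 - a ^ 2 = 0 := by exact_mod_cast h0
      have : (u - a) * (u + a) = 0 := by linarith
      rcases mul_eq_zero.mp this with h | h
      · apply hne; omega
      · omega
    · have h8 : z ^ 8 = (z ^ 2) ^ 4 := by ring
      have h6 : z ^ 6 = (z ^ 2) ^ 3 := by ring
      have h4 : z ^ 4 = (z ^ 2) ^ 2 := by ring
      rw [h8, h6, h4, hzc] at hP0
      have : ((c ^ 4 + (6 * (u ^ 2 - a ^ 2)) * c ^ 3
        + ((u ^ 2 - a ^ 2) ^ 2 - 2 * a ^ 2 * u ^ 2) * c ^ 2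
        + (-(6 * (u ^ 2 - a ^ 2) * (a ^ 2 * u ^ 2))) * c + a ^ 4 * u ^ 4 : ℚ) : ℂ) = 0 := by
        push_cast
        linear_combination hP0
      exact_mod_cast this
  have hdvd : (F.comp (-X)).map (Int.castRingHom ℚ) ∣ G.map (Int.castRingHom ℚ) := by
    apply hcop.dvd_of_dvd_mul_left
    rw [← Polynomial.map_mul, ← hFG, ← hPe, hFG, mul_comp]
    exact Polynomial.map_dvd _ (dvd_mul_right _ _)
  have heq := eq_of_monic_of_dvd_of_natDegree_le (hHm.map (Int.castRingHom ℚ))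
    (hG.map (Int.castRingHom ℚ)) hdvd (by
      rw [hG.natDegree_map, hHm.natDegree_map, hGn, hHn])
  exact map_injective _ (Int.castRingHom ℚ).injective_int heq
end

section
/- For coprime positive integers a ≠ u (so Δ = u² − a² ≠ 0), there is no monic polynomial F(t) = t⁴ + α t³ + β t² + γ t + δ ∈ ℤ[t] such that P_{a,u}(t) = F(t)·F(−t). In particular, no factorization of P_{a,u} into two monic quartics of conjugate-pair type exists. -/
open Polynomial

theorem cuboidPoly_no_conjugate_pair_factorization (a u : ℤ) (ha : 0 < a) (hu : 0 < u)
    (hco : IsCoprime a u) (hne : a ≠ u) :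
    ¬ ∃ α β γ δ : ℤ,
      cuboidPoly a u =
        (X ^ 4 + C α * X ^ 3 + C β * X ^ 2 + C γ * X + C δ) *
          ((X ^ 4 + C α * X ^ 3 + C β * X ^ 2 + C γ * X + C δ).comp (-X)) := by
  rintro ⟨α, β, γ, δ, h⟩
  have ev : ∀ t : ℤ, _ := fun t => congrArg (Polynomial.eval t) h
  simp only [cuboidPoly, eval_add, eval_mul, eval_pow, eval_X, eval_C, eval_comp, eval_neg] at ev
  obtain ⟨D, hD⟩ : ∃ D, D = u ^ 2 - a ^ 2 := ⟨_, rfl⟩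
  obtain ⟨m, hm⟩ : ∃ m, m = a * u := ⟨_, rfl⟩
  have hm0 : m ≠ 0 := by rw [hm]; positivity
  have hD0 : D ≠ 0 := by
    intro h0
    have : (u - a) * (u + a) = 0 := by rw [← h0, hD]; ring
    rcases mul_eq_zero.mp this with h1 | h1
    · exact hne (by linarith)
    · linarith
  have ev2 : ∀ t : ℤ, (2 * β - α ^ 2 - 6 * D) * t ^ 6
      + (β ^ 2 + 2 * δ - 2 * α * γ - D ^ 2 + 2 * m ^ 2) * t ^ 4
      + (2 * β * δ - γ ^ 2 + 6 * D * m ^ 2) * t ^ 2 + (δ ^ 2 - m ^ 4) = 0 := by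
    intro t
    have := ev t
    rw [hD, hm]
    linear_combination -this
  have e0 := ev2 0
  have e1 := ev2 1
  have e2 := ev2 2
  have e3 := ev2 3
  clear ev ev2 h
  generalize h6 : 2 * β - α ^ 2 - 6 * D = c6 at *
  generalize h4 : β ^ 2 + 2 * δ - 2 * α * γ - D ^ 2 + 2 * m ^ 2 = c4 at *
  generalize h2 : 2 * β * δ - γ ^ 2 + 6 * D * m ^ 2 = c2 at *
  generalize h0 : δ ^ 2 - m ^ 4 = c0 at *
  norm_num at e0 e1 e2 e3
  have z6 : c6 = 0 := by linarith
  have z4 : c4 = 0 := by linarith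
  have z2 : c2 = 0 := by linarith
  subst z6 z4 z2 e0
  have hd : (δ - m ^ 2) * (δ + m ^ 2) = 0 := by linear_combination h0
  rcases mul_eq_zero.mp hd with hd | hd
  · obtain rfl : δ = m ^ 2 := by linarith
    have hg : γ ^ 2 = m ^ 2 * (12 * D + α ^ 2) := by linear_combination -h2 + m ^ 2 * h6
    obtain ⟨k, rfl⟩ : m ∣ γ := (Int.pow_dvd_pow_iff two_ne_zero).mp ⟨_, hg⟩
    have hk : k ^ 2 = 12 * D + α ^ 2 := by
      apply mul_left_cancel₀ (pow_ne_zero 2 hm0)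
      linear_combination hg
    have key : (24 * m - 6 * α * k) ^ 2 + 8 * (12 * D) ^ 2 = 0 := by
      have hD12 : 12 * D = k ^ 2 - α ^ 2 := by linarith
      have hb : 4 * β = k ^ 2 + α ^ 2 := by linarith
      linear_combination 144 * h4 - 9 * (4 * β + k ^ 2 + α ^ 2) * hb
        + 9 * (12 * D + k ^ 2 - α ^ 2) * hD12
    have : 0 < D ^ 2 := by positivity
    nlinarith [sq_nonneg (24 * m - 6 * α * k)]
  · obtain rfl : δ = -m ^ 2 := by linarith
    have hg : γ ^ 2 + m ^ 2 * α ^ 2 = 0 := by linear_combination -h2 - m ^ 2 * h6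
    have hα : α = 0 := by
      by_contra hα
      have : 0 < m ^ 2 * α ^ 2 := by positivity
      nlinarith [sq_nonneg γ]
    subst hα
    have hb : β = 3 * D := by linarith
    subst hb
    have : 0 < D ^ 2 := by positivity
    nlinarith
end

section
/- If P_{a,u}(t) factors in ℤ[t] as a product of two monic polynomials of degree 4, then there exists an integer X satisfying the equation (⋆): (X² − 8Δ²)(X² − 9Δ²) = 4a²u²X². -/
open Polynomial

lemma sq_eight_aux (x y : ℤ) (h : x ^ 2 = 8 * y ^ 2) : y = 0 := by
  by_contra hy
  have hyr : (y : ℝ) ≠ 0 := by exact_mod_cast hy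
  have h' : (x : ℝ) ^ 2 = 8 * (y : ℝ) ^ 2 := by exact_mod_cast h
  apply irrational_sqrt_two
  refine ⟨|(x : ℚ) / (2 * y)|, ?_⟩
  push_cast
  rw [← Real.sqrt_sq_eq_abs]
  congr 1
  field_simp
  linarith

lemma caseB_aux (a u p q r s : ℤ) (ha : 0 < a) (hu : 0 < u) (hD : u ^ 2 - a ^ 2 ≠ 0)
    (h6 : 2 * q - p ^ 2 = 6 * (u ^ 2 - a ^ 2))
    (h4 : q ^ 2 + 2 * s - 2 * p * r = (u ^ 2 - a ^ 2) ^ 2 - 2 * a ^ 2 * u ^ 2)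
    (h2 : 2 * q * s - r ^ 2 = -(6 * (u ^ 2 - a ^ 2) * (a ^ 2 * u ^ 2)))
    (h0 : s ^ 2 = a ^ 4 * u ^ 4) : False := by
  generalize hΔ : u ^ 2 - a ^ 2 = Δ at *
  have hc : 0 < a * u := mul_pos ha hu
  have hDp : 0 < Δ ^ 2 := by positivity
  have hs : (s - (a * u) ^ 2) * (s + (a * u) ^ 2) = 0 := by linear_combination h0
  rcases mul_eq_zero.1 hs with hs | hs
  · have e : s = (a * u) ^ 2 := by linarith
    have hr : r ^ 2 = (a * u) ^ 2 * (p ^ 2 + 12 * Δ) := by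
      rw [e] at h2
      linear_combination (-1 : ℤ) * h2 + (a * u) ^ 2 * h6
    have hd : a * u ∣ r := (Int.pow_dvd_pow_iff (by norm_num : (2 : ℕ) ≠ 0)).1 ⟨_, hr⟩
    obtain ⟨m, rfl⟩ := hd
    have hm : m ^ 2 = p ^ 2 + 12 * Δ := by
      have : (a * u) ^ 2 * (m ^ 2 - (p ^ 2 + 12 * Δ)) = 0 := by linear_combination hr
      rcases mul_eq_zero.1 this with h | h
      · have := pow_pos hc 2
        omega
      · linarith
    have key : (4 * (a * u) - p * m) ^ 2 = -32 * Δ ^ 2 := by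
      rw [e] at h4
      linear_combination 4 * h4 + p ^ 2 * hm - (2 * q + p ^ 2 + 6 * Δ) * h6
    nlinarith [sq_nonneg (4 * (a * u) - p * m)]
  · have e : s = -(a * u) ^ 2 := by linarith
    have hr : r ^ 2 + (a * u * p) ^ 2 = 0 := by
      rw [e] at h2
      linear_combination (-1 : ℤ) * h2 - (a * u) ^ 2 * h6
    have hr0 : r = 0 := by
      apply pow_eq_zero_iff (two_ne_zero) |>.1
      nlinarith [sq_nonneg r, sq_nonneg (a * u * p)]
    have hp1 : a * u * p = 0 := by
      apply pow_eq_zero_iff (two_ne_zero) |>.1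
      nlinarith [sq_nonneg r, sq_nonneg (a * u * p)]
    have hp0 : p = 0 := by
      rcases mul_eq_zero.1 hp1 with h | h
      · omega
      · exact h
    subst hr0 hp0
    have hq : q = 3 * Δ := by linarith
    rw [e, hq] at h4
    nlinarith

lemma star_aux (a u p q r s p' q' r' s' : ℤ) (ha : 0 < a) (hu : 0 < u)
    (hD : u ^ 2 - a ^ 2 ≠ 0)
    (h7 : p + p' = 0)
    (h6 : q + q' + p * p' = 6 * (u ^ 2 - a ^ 2))
    (h5 : r + r' + p * q' + q * p' = 0)
    (h4 : s + s' + p * r' + r * p' + q * q' = (u ^ 2 - a ^ 2) ^ 2 - 2 * a ^ 2 * u ^ 2)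
    (h3 : p * s' + p' * s + q * r' + r * q' = 0)
    (h2 : q * s' + q' * s + r * r' = -(6 * (u ^ 2 - a ^ 2) * (a ^ 2 * u ^ 2)))
    (h1 : r * s' + r' * s = 0)
    (h0 : s * s' = a ^ 4 * u ^ 4) :
    ∃ Y : ℤ, (Y ^ 2 - 8 * (u ^ 2 - a ^ 2) ^ 2) * (Y ^ 2 - 9 * (u ^ 2 - a ^ 2) ^ 2) =
      4 * a ^ 2 * u ^ 2 * Y ^ 2 := by
  have hp' : p' = -p := by linarith
  subst hp'
  have hB : q = q' → s = s' → r' = -r → False := by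
    rintro rfl rfl rfl
    exact caseB_aux a u p q r s ha hu hD (by linear_combination h6) (by linear_combination h4)
      (by linear_combination h2) (by linear_combination h0)
  by_cases hp : p = 0
  · subst hp
    have hr' : r' = -r := by linarith
    subst hr'
    by_cases hr : r = 0
    · subst hr
      generalize u ^ 2 - a ^ 2 = Δ at *
      refine ⟨q - 3 * Δ, ?_⟩
      have hq' : q' = 6 * Δ - q := by linarith
      subst hq'
      have hZ : (q - 3 * Δ) ^ 2 - 8 * Δ ^ 2 ≠ 0 := fun h =>
        hD (sq_eight_aux (q - 3 * Δ) Δ (by linarith))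
      apply mul_left_cancel₀ hZ
      obtain ⟨X, hX⟩ : ∃ X, X = q - 3 * Δ := ⟨_, rfl⟩
      have hq : q = 3 * Δ + X := by linarith
      rw [← hX]
      subst hq
      have hS : s + s' = X ^ 2 - 8 * Δ ^ 2 - 2 * a ^ 2 * u ^ 2 := by linear_combination h4
      have hd : X * (s - s') = 3 * Δ * (X ^ 2 - 8 * Δ ^ 2) := by
        linear_combination (-1 : ℤ) * h2 + 3 * Δ * hS
      linear_combination (-X ^ 2) * (s + s' + (X ^ 2 - 8 * Δ ^ 2 - 2 * a ^ 2 * u ^ 2)) * hS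
        + (X * (s - s') + 3 * Δ * (X ^ 2 - 8 * Δ ^ 2)) * hd + 4 * X ^ 2 * h0
    · exfalso
      have e1 : q = q' := by
        have : r * (q' - q) = 0 := by linear_combination h3
        rcases mul_eq_zero.1 this with h | h
        · exact absurd h hr
        · linarith
      have e2 : s = s' := by
        have : r * (s' - s) = 0 := by linear_combination h1
        rcases mul_eq_zero.1 this with h | h
        · exact absurd h hr
        · linarith
      exact hB e1 e2 rfl
  · exfalso
    by_cases he : q = q'
    · have hr' : r' = -r := by subst he; linarith
      have : p * (s' - s) = 0 := by subst he hr'; linear_combination h3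
      rcases mul_eq_zero.1 this with h | h
      · exact absurd h hp
      · exact hB he (by linarith) hr'
    · have he' : q - q' ≠ 0 := sub_ne_zero.2 he
      have hr' : r' = p * (q - q') - r := by linear_combination h5
      subst hr'
      have a1 : (q - q') * r = p * ((q - q') * q - (s - s')) := by linear_combination -h3
      have a2 : (q - q') ^ 2 * s = q * (s - s') * (q - q') - (s - s') ^ 2 := by
        apply mul_left_cancel₀ hp
        linear_combination (q - q') * h1 + (s - s') * a1
      have a3 : r ^ 2 - q * r * p + s * p ^ 2 = 0 := by
        apply mul_left_cancel₀ (pow_ne_zero 2 he')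
        linear_combination ((q - q') * r + p * ((q - q') * q - (s - s')) - q * p * (q - q')) * a1
          + p ^ 2 * a2
      generalize u ^ 2 - a ^ 2 = Δ at *
      have key : (r ^ 2 - (a * u) ^ 2 * p ^ 2) ^ 2
          - 6 * Δ * r * p * (r ^ 2 - (a * u) ^ 2 * p ^ 2) + Δ ^ 2 * r ^ 2 * p ^ 2 = 0 := by
        linear_combination (r ^ 2 - q' * r * p + s' * p ^ 2) * a3 + r ^ 3 * p * h6
          - r ^ 2 * p ^ 2 * h4 + r * p ^ 3 * h2 - p ^ 4 * h0
      have h8 := sq_eight_aux (r ^ 2 - (a * u) ^ 2 * p ^ 2 - 3 * Δ * r * p) (Δ * r * p)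
        (by linear_combination key)
      have hr : r = 0 := by
        rcases mul_eq_zero.1 h8 with h | h
        · rcases mul_eq_zero.1 h with h | h
          · exact absurd h hD
          · exact h
        · exact absurd h hp
      subst hr
      have : ((a * u) * p) ^ 4 = 0 := by linear_combination key
      have h9 := pow_eq_zero_iff (by norm_num : (4 : ℕ) ≠ 0) |>.1 this
      exact mul_ne_zero (mul_ne_zero ha.ne' hu.ne') hp h9

lemma monic_four_aux (F : Polynomial ℤ) (hF : F.Monic) (hd : F.degree = 4) :
    F = X ^ 4 + C (F.coeff 3) * X ^ 3 + C (F.coeff 2) * X ^ 2 + C (F.coeff 1) * X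
      + C (F.coeff 0) := by
  have hn : F.natDegree = 4 := natDegree_eq_of_degree_eq_some hd
  have h4 : F.coeff 4 = 1 := by rw [← hn]; exact hF
  conv_lhs => rw [F.as_sum_range_C_mul_X_pow, hn]
  simp only [Finset.sum_range_succ, Finset.sum_range_zero, h4]
  simp only [map_one]
  ring

theorem cuboidPoly_4_4_factorization_implies_star (a u : ℤ) (ha : 0 < a) (hu : 0 < u)
    (hco : IsCoprime a u) (hne : a ≠ u)
    (h : ∃ F G : Polynomial ℤ, F.Monic ∧ G.Monic ∧ F.degree = 4 ∧ G.degree = 4 ∧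
      cuboidPoly a u = F * G) :
    ∃ Y : ℤ, (Y ^ 2 - 8 * (u ^ 2 - a ^ 2) ^ 2) * (Y ^ 2 - 9 * (u ^ 2 - a ^ 2) ^ 2) =
      4 * a ^ 2 * u ^ 2 * Y ^ 2 := by
  obtain ⟨F, G, hF, hG, dF, dG, h⟩ := h
  have eF := monic_four_aux F hF dF
  have eG := monic_four_aux G hG dG
  generalize F.coeff 3 = p at eF
  generalize F.coeff 2 = q at eF
  generalize F.coeff 1 = r at eF
  generalize F.coeff 0 = s at eF
  generalize G.coeff 3 = p' at eG
  generalize G.coeff 2 = q' at eG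
  generalize G.coeff 1 = r' at eG
  generalize G.coeff 0 = s' at eG
  have hD : u ^ 2 - a ^ 2 ≠ 0 := by
    intro h
    have : (u - a) * (u + a) = 0 := by linear_combination h
    rcases mul_eq_zero.1 this with h | h
    · exact hne (by linarith)
    · linarith
  have hprod : F * G = X ^ 8 + C (p + p') * X ^ 7 + C (q + q' + p * p') * X ^ 6
      + C (r + r' + p * q' + q * p') * X ^ 5
      + C (s + s' + p * r' + r * p' + q * q') * X ^ 4
      + C (p * s' + p' * s + q * r' + r * q') * X ^ 3
      + C (q * s' + q' * s + r * r') * X ^ 2 + C (r * s' + r' * s) * X ^ 1 + C (s * s') := by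
    rw [eF, eG]
    simp only [map_add, map_mul]
    ring
  rw [hprod, cuboidPoly] at h
  have hc := fun n => congrArg (fun f => Polynomial.coeff f n) h
  simp only [coeff_add, coeff_C_mul, coeff_X_pow, coeff_C] at hc
  have c0 := hc 0
  have c1 := hc 1
  have c2 := hc 2
  have c3 := hc 3
  have c4 := hc 4
  have c5 := hc 5
  have c6 := hc 6
  have c7 := hc 7
  norm_num at c0 c1 c2 c3 c4 c5 c6 c7
  exact star_aux a u p q r s p' q' r' s' ha hu hD (by linarith) (by linarith) (by linarith)
    (by linarith) (by linarith) (by linarith) (by linarith) (by linarith)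
end

section
/- Let a, u be coprime positive integers with a ≠ u, Δ = u² − a², and suppose 3 divides au. Then there is no integer X satisfying (X² − 8Δ²)(X² − 9Δ²) = 4a²u²X². -/
theorem aux_par4 (x y : ℤ) (h : (4:ℤ) ∣ x^2 + y^2) : (2:ℤ) ∣ x ∧ (2:ℤ) ∣ y := by
  rcases Int.even_or_odd' x with ⟨i, rfl | rfl⟩ <;> rcases Int.even_or_odd' y with ⟨j, rfl | rfl⟩ <;>
    ring_nf at h <;> omega

theorem aux_sq8 (x : ℤ) (h : ¬ (2:ℤ) ∣ x) : x^2 % 8 = 1 := by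
  have : x % 8 = 1 ∨ x % 8 = 3 ∨ x % 8 = 5 ∨ x % 8 = 7 := by omega
  rcases this with h | h | h | h <;> simp [pow_two, Int.mul_emod, h]

theorem aux_sq4 (x : ℤ) : ((2:ℤ) ∣ x ∧ x^2 % 4 = 0) ∨ (¬ (2:ℤ) ∣ x ∧ x^2 % 8 = 1) := by
  by_cases h : (2:ℤ) ∣ x
  · left; refine ⟨h, ?_⟩
    obtain ⟨y, rfl⟩ := h
    ring_nf; omega
  · right; exact ⟨h, aux_sq8 x h⟩

/-- extraction of the common factor -/
theorem aux_common (A B s t : ℤ) (hst : IsCoprime s t) (ht : t ≠ 0)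
    (h : s^2 * A = t^2 * B) : ∃ c, A = t^2 * c ∧ B = s^2 * c := by
  have hd : t^2 ∣ A := by
    have : IsCoprime (t^2) (s^2) := (hst.symm.pow)
    exact this.dvd_of_dvd_mul_left ⟨B, h⟩
  obtain ⟨c, rfl⟩ := hd
  refine ⟨c, rfl, ?_⟩
  have : t^2 ≠ 0 := pow_ne_zero 2 ht
  apply mul_left_cancel₀ this
  linarith

theorem aux_dvd8 (x y c : ℤ) (hxy : IsCoprime x y) (h1 : c ∣ 8 * x^2) (h2 : c ∣ 8 * y^2) :
    c ∣ 8 := by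
  obtain ⟨a, b, hab⟩ := (hxy.pow (m := 2) (n := 2))
  have : (8:ℤ) = a * (8 * x^2) + b * (8 * y^2) := by linear_combination (-8) * hab
  rw [this]
  exact dvd_add (h1.mul_left _) (h2.mul_left _)

theorem aux_div8 (c : ℤ) (hc : 0 < c) (h : c ∣ 8) : c = 1 ∨ c = 2 ∨ c = 4 ∨ c = 8 := by
  have := Int.le_of_dvd (by norm_num) h
  interval_cases c <;> omega

theorem aux_C (n r s t : ℤ) (hnr : IsCoprime n r) (hst : IsCoprime s t) (ht : t ≠ 0)
    (hpar : (2:ℤ) ∣ n ∨ (2:ℤ) ∣ r ∨ (2:ℤ) ∣ s ∨ (2:ℤ) ∣ t)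
    (h : s^2 * (n^2 + r^2) = t^2 * (n^2 + 9 * r^2)) :
    n^2 + r^2 = t^2 ∧ n^2 + 9 * r^2 = s^2 := by
  obtain ⟨c, hA, hB⟩ := aux_common _ _ s t hst ht h
  have h2 : ¬ ((2:ℤ) ∣ n ∧ (2:ℤ) ∣ r) := by
    rintro ⟨h1, h2⟩
    have := hnr.isUnit_of_dvd' h1 h2
    rw [Int.isUnit_iff] at this; omega
  have hc8 : c ∣ 8 := by
    apply aux_dvd8 n r c hnr
    · exact ⟨9 * t^2 - s^2, by linear_combination 9 * hA - hB⟩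
    · exact ⟨s^2 - t^2, by linear_combination hB - hA⟩
  have htp : 0 < t^2 := by positivity
  have hpos : 0 < c := by
    have h0 : 0 < n^2 + r^2 := by
      rcases eq_or_ne n 0 with rfl | hn
      · rcases eq_or_ne r 0 with rfl | hr
        · simp at h2
        · positivity
      · positivity
    rw [hA] at h0
    exact pos_of_mul_pos_right h0 htp.le
  have h4 : ¬ (4:ℤ) ∣ c := fun hd => h2 (aux_par4 n r (hA ▸ hd.mul_left _))
  rcases aux_div8 c hpos hc8 with rfl | rfl | rfl | rfl
  · constructor <;> linarith
  · exfalso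
    rcases aux_sq4 n with hn | hn <;> rcases aux_sq4 r with hr | hr <;>
    rcases aux_sq4 s with hs | hs <;> rcases aux_sq4 t with ht | ht <;> omega
  · omega
  · omega

theorem aux_D (x y s t : ℤ) (hxy : IsCoprime x y) (hst : IsCoprime s t) (ht : t ≠ 0)
    (hpar : (2:ℤ) ∣ x ∨ (2:ℤ) ∣ y ∨ (2:ℤ) ∣ s ∨ (2:ℤ) ∣ t)
    (h : s^2 * (3 * x^2 + y^2) = t^2 * (x^2 + 3 * y^2)) : False := by
  obtain ⟨c, hA, hB⟩ := aux_common _ _ s t hst ht h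
  have h2 : ¬ ((2:ℤ) ∣ x ∧ (2:ℤ) ∣ y) := by
    rintro ⟨h1, h2⟩
    have := hxy.isUnit_of_dvd' h1 h2
    rw [Int.isUnit_iff] at this; omega
  have h2' : ¬ ((2:ℤ) ∣ s ∧ (2:ℤ) ∣ t) := by
    rintro ⟨h1, h2⟩
    have := hst.isUnit_of_dvd' h1 h2
    rw [Int.isUnit_iff] at this; omega
  have hc8 : c ∣ 8 := by
    apply aux_dvd8 x y c hxy
    · exact ⟨3 * t^2 - s^2, by linear_combination 3 * hA - hB⟩
    · exact ⟨3 * s^2 - t^2, by linear_combination 3 * hB - hA⟩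
  have htp : 0 < t^2 := by positivity
  have hpos : 0 < c := by
    have h0 : 0 < 3 * x^2 + y^2 := by
      rcases eq_or_ne x 0 with rfl | hn
      · rcases eq_or_ne y 0 with rfl | hr
        · simp at h2
        · positivity
      · positivity
    rw [hA] at h0
    exact pos_of_mul_pos_right h0 htp.le
  rcases aux_div8 c hpos hc8 with rfl | rfl | rfl | rfl <;>
    rcases aux_sq4 x with hn | hn <;> rcases aux_sq4 y with hr | hr <;>
    rcases aux_sq4 s with hs | hs <;> rcases aux_sq4 t with ht | ht <;> omega

theorem aux_four (k l g h : ℤ) (hk : k ≠ 0) (e : k * l = g * h) :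
    ∃ a b c d : ℤ, k = a * b ∧ l = c * d ∧ g = a * c ∧ h = b * d := by
  obtain ⟨a, b, ⟨c, hc⟩, ⟨d, hd⟩, hab⟩ := exists_dvd_and_dvd_of_dvd_mul (Dvd.intro l e)
  refine ⟨a, b, c, d, hab, ?_, hc, hd⟩
  apply mul_left_cancel₀ hk
  rw [e, hc, hd, hab]; ring

theorem aux_copr {k l g h a b c d : ℤ} (hkl : IsCoprime k l) (hgh : IsCoprime g h)
    (h1 : k = a * b) (h2 : l = c * d) (h3 : g = a * c) (h4 : h = b * d) :
    IsCoprime a d ∧ IsCoprime b c := by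
  subst h1 h2 h3 h4
  exact ⟨hkl.of_mul_left_left.of_mul_right_right, hkl.of_mul_left_right.of_mul_right_left⟩

theorem aux_par {k l a b c d : ℤ} (hp : k % 2 = 0 ∧ l % 2 = 1 ∨ k % 2 = 1 ∧ l % 2 = 0)
    (h1 : k = a * b) (h2 : l = c * d) :
    (2:ℤ) ∣ a ∨ (2:ℤ) ∣ b ∨ (2:ℤ) ∣ c ∨ (2:ℤ) ∣ d := by
  rcases hp with ⟨h, -⟩ | ⟨-, h⟩
  · have : (2:ℤ) ∣ a * b := by omega
    rcases Int.prime_two.dvd_or_dvd this with h | h <;> simp [h]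
  · have : (2:ℤ) ∣ c * d := by omega
    rcases Int.prime_two.dvd_or_dvd this with h | h <;> simp [h]

theorem aux_small {k l x y : ℤ} (hk : k ≠ 0) (hl : l ≠ 0) (h : x * y = k ∨ x * y = l) :
    x.natAbs < (2 * k * l).natAbs := by
  have hk' : 0 < k.natAbs := Int.natAbs_pos.mpr hk
  have hl' : 0 < l.natAbs := Int.natAbs_pos.mpr hl
  rw [Int.natAbs_mul, Int.natAbs_mul]
  have : (2:ℤ).natAbs = 2 := rfl
  rw [this]
  rcases h with h | h
  · have : x.natAbs ≤ k.natAbs := Nat.le_of_dvd hk' (Int.natAbs_dvd_natAbs.mpr ⟨y, h.symm⟩)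
    nlinarith
  · have : x.natAbs ≤ l.natAbs := Nat.le_of_dvd hl' (Int.natAbs_dvd_natAbs.mpr ⟨y, h.symm⟩)
    nlinarith

theorem aux_A (N : ℕ) : ∀ n r m q : ℤ, r.natAbs = N → IsCoprime n r → ¬ (3:ℤ) ∣ n → r ≠ 0 →
    n^2 + r^2 = m^2 → n^2 + 9 * r^2 = q^2 → False := by
  induction N using Nat.strong_induction_on with
  | _ N ih =>
  intro n r m q hN hnr h3 hr hm hq
  wlog hm0 : 0 < m generalizing m
  · have hmne : m ≠ 0 := by
      rintro rfl
      have : 0 < r^2 := by positivity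
      nlinarith [sq_nonneg n]
    exact this (-m) (by rw [hm]; ring) (by omega)
  wlog hq0 : 0 < q generalizing q
  · have hmne : q ≠ 0 := by
      rintro rfl
      have : 0 < r^2 := by positivity
      nlinarith [sq_nonneg n]
    exact this (-q) (by rw [hq]; ring) (by omega)
  have hn3 : IsCoprime n 3 := by
    rw [isCoprime_comm]
    exact (Int.prime_three.coprime_iff_not_dvd).mpr h3
  have hn3r : IsCoprime n (3 * r) := hn3.mul_right hnr
  by_cases hpar : n % 2 = 1
  · obtain ⟨k, l, hn1, hr1, -, hkl, hp, -⟩ :=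
      PythagoreanTriple.coprime_classification' (x := n) (y := r) (z := m)
        (by unfold PythagoreanTriple; linarith) (Int.isCoprime_iff_gcd_eq_one.mp hnr) hpar hm0
    obtain ⟨g, h, hn2, hr2, -, hgh, -, -⟩ :=
      PythagoreanTriple.coprime_classification' (x := n) (y := 3 * r) (z := q)
        (by unfold PythagoreanTriple; linarith) (Int.isCoprime_iff_gcd_eq_one.mp hn3r) hpar hq0
    have hk : k ≠ 0 := by rintro rfl; simp at hr1; exact hr hr1
    have hl : l ≠ 0 := by rintro rfl; simp at hr1; exact hr hr1
    rw [← Int.isCoprime_iff_gcd_eq_one] at hkl hgh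
    have e : 3 * (k * l) = g * h := by linarith
    rcases Int.prime_three.dvd_or_dvd (Dvd.intro _ e) with ⟨g', hg⟩ | ⟨h', hh⟩
    · subst hg
      have hng : ¬ (3:ℤ) ∣ h := by
        intro hd
        apply h3
        rw [hn2]
        exact dvd_sub (by exact ⟨3 * g'^2, by ring⟩) (hd.trans (Dvd.intro_left h (by ring)))
      obtain ⟨a, b, c, d, h1, h2, h4, h5⟩ := aux_four k l g' h hk (by linarith)
      obtain ⟨c1, c2⟩ := aux_copr hkl hgh.of_mul_left_right h1 h2 h4 h5
      have hp' := aux_par hp h1 h2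
      have hc0 : c ≠ 0 := by rintro rfl; simp at h2; exact hl h2
      have ha0 : a ≠ 0 := by rintro rfl; simp at h1; exact hk h1
      obtain ⟨e1, e2⟩ := aux_C d a b c c1.symm c2 hc0 (by tauto) (by
        have := hn1.symm.trans hn2
        rw [h1, h2, h4, h5] at this
        linear_combination this)
      refine ih a.natAbs ?_ d a c b rfl c1.symm ?_ ha0 e1 e2
      · rw [← hN, hr1]; exact aux_small hk hl (Or.inl h1.symm)
      · intro hd; exact hng (h5 ▸ hd.mul_left _)
    · subst hh
      have hng : ¬ (3:ℤ) ∣ g := by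
        intro hd
        apply h3
        rw [hn2]
        exact dvd_sub (hd.trans (Dvd.intro_left g (by ring))) (by exact ⟨3 * h'^2, by ring⟩)
      obtain ⟨a, b, c, d, h1, h2, h4, h5⟩ := aux_four k l g h' hk (by linarith)
      obtain ⟨c1, c2⟩ := aux_copr hkl hgh.of_mul_right_right h1 h2 h4 h5
      have hp' := aux_par hp h1 h2
      have hb0 : b ≠ 0 := by rintro rfl; simp at h1; exact hk h1
      have hd0 : d ≠ 0 := by rintro rfl; simp at h2; exact hl h2
      obtain ⟨e1, e2⟩ := aux_C a d c b c1 c2.symm hb0 (by tauto) (by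
        have := hn1.symm.trans hn2
        rw [h1, h2, h4, h5] at this
        linear_combination -this)
      refine ih d.natAbs ?_ a d b c rfl c1 ?_ hd0 e1 e2
      · rw [← hN, hr1]; exact aux_small hk hl (Or.inr ((mul_comm d c).trans h2.symm))
      · intro hd; exact hng (h4 ▸ hd.mul_right _)
  · have hro : r % 2 = 1 := by
      by_contra hcon
      have := hnr.isUnit_of_dvd' (x := 2) (by omega) (by omega)
      rw [Int.isUnit_iff] at this; omega
    have hn0 : n ≠ 0 := by rintro rfl; simp at h3
    obtain ⟨k, l, hr1, hn1, -, hkl, hp, -⟩ :=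
      PythagoreanTriple.coprime_classification' (x := r) (y := n) (z := m)
        (by unfold PythagoreanTriple; linarith) (Int.isCoprime_iff_gcd_eq_one.mp hnr.symm) hro hm0
    obtain ⟨g, h, hr2, hn2, -, hgh, -, -⟩ :=
      PythagoreanTriple.coprime_classification' (x := 3 * r) (y := n) (z := q)
        (by unfold PythagoreanTriple; linarith) (Int.isCoprime_iff_gcd_eq_one.mp hn3r.symm)
        (by omega) hq0
    have hk : k ≠ 0 := by rintro rfl; simp at hn1; exact hn0 hn1
    have hl : l ≠ 0 := by rintro rfl; simp at hn1; exact hn0 hn1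
    rw [← Int.isCoprime_iff_gcd_eq_one] at hkl hgh
    obtain ⟨a, b, c, d, h1, h2, h4, h5⟩ := aux_four k l g h hk (by linarith)
    obtain ⟨c1, c2⟩ := aux_copr hkl hgh h1 h2 h4 h5
    have hp' := aux_par hp h1 h2
    have hc0 : c ≠ 0 := by rintro rfl; simp at h2; exact hl h2
    refine aux_D a d b c c1 c2 hc0 (by tauto) ?_
    rw [hr1, h1, h2, h4, h5] at hr2
    linear_combination hr2

theorem star_no_solution_of_three_dvd_au (a u : ℤ) (ha : 0 < a) (hu : 0 < u)
    (hco : IsCoprime a u) (hne : a ≠ u) (h3 : (3 : ℤ) ∣ a * u) :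
    ¬ ∃ X : ℤ, (X ^ 2 - 8 * (u ^ 2 - a ^ 2) ^ 2) * (X ^ 2 - 9 * (u ^ 2 - a ^ 2) ^ 2) =
      4 * a ^ 2 * u ^ 2 * X ^ 2 := by
  rintro ⟨X, hX⟩
  have hP0 : a * u ≠ 0 := by positivity
  have hD0 : u^2 - a^2 ≠ 0 := by
    intro h
    have : (u - a) * (u + a) = 0 := by linear_combination h
    rcases mul_eq_zero.mp this with h | h <;> omega
  have hD3 : ¬ (3:ℤ) ∣ u^2 - a^2 := by
    intro h
    have key : (3:ℤ) ∣ a ∧ (3:ℤ) ∣ u := by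
      rcases Int.prime_three.dvd_or_dvd h3 with h1 | h1
      · refine ⟨h1, Int.prime_three.dvd_of_dvd_pow (n := 2) ?_⟩
        have := dvd_add h (h1.mul_right a)
        rwa [show u^2 - a^2 + a * a = u^2 by ring] at this
      · refine ⟨Int.prime_three.dvd_of_dvd_pow (n := 2) ?_, h1⟩
        have := dvd_sub (h1.mul_right u) h
        rwa [show u * u - (u^2 - a^2) = a^2 by ring] at this
    have := hco.isUnit_of_dvd' key.1 key.2
    rw [Int.isUnit_iff] at this; omega
  generalize u^2 - a^2 = D at *
  obtain ⟨p, hp⟩ := h3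
  have hX' : (X ^ 2 - 8 * D ^ 2) * (X ^ 2 - 9 * D ^ 2) = 4 * (a * u)^2 * X ^ 2 := by
    rw [hX]; ring
  have hX3 : (3:ℤ) ∣ X := by
    by_contra hx
    have e1 : X^2 % 3 = 1 := by
      have : X % 3 = 1 ∨ X % 3 = 2 := by omega
      rcases this with h | h <;> simp [pow_two, Int.mul_emod, h]
    have e2 : D^2 % 3 = 1 := by
      have : D % 3 = 1 ∨ D % 3 = 2 := by omega
      rcases this with h | h <;> simp [pow_two, Int.mul_emod, h]
    have : (3:ℤ) ∣ (X ^ 2 - 8 * D ^ 2) * (X ^ 2 - 9 * D ^ 2) := by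
      rw [hX', hp]; exact ⟨12 * p^2 * X^2, by ring⟩
    rcases Int.prime_three.dvd_or_dvd this with h | h <;> omega
  obtain ⟨Y, rfl⟩ := hX3
  have hY : (9 * Y^2 - 8 * D^2) * (Y^2 - D^2) = (2 * (a * u) * Y)^2 := by
    have : (9:ℤ) * ((9 * Y^2 - 8 * D^2) * (Y^2 - D^2)) = 9 * (2 * (a * u) * Y)^2 := by
      linear_combination hX'
    linarith
  have hY0 : Y ≠ 0 := by
    rintro rfl
    have : 0 < D^2 := by positivity
    simp at hY; exact hD0 hY
  obtain ⟨g, m, n, hg0, hmn, rfl, rfl⟩ : ∃ g m n : ℤ, g ≠ 0 ∧ IsCoprime m n ∧ Y = g * m ∧ D = g * n := by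
    obtain ⟨m, n, hmn, h1, h2⟩ := Int.exists_gcd_one (m := Y) (n := D) (Int.gcd_pos_of_ne_zero_left _ hY0)
    refine ⟨Int.gcd Y D, m, n, ?_, ?_, ?_, ?_⟩
    · have := Int.gcd_pos_of_ne_zero_left D hY0
      omega
    · exact Int.isCoprime_iff_gcd_eq_one.mpr hmn
    · rw [mul_comm]; exact h1
    · rw [mul_comm]; exact h2
  have hn3 : ¬ (3:ℤ) ∣ n := fun h => hD3 (h.mul_left _)
  have hm0 : m ≠ 0 := right_ne_zero_of_mul hY0
  have hE : (9 * m^2 - 8 * n^2) * (m^2 - n^2) * g^2 = (2 * (a * u) * m)^2 := by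
    have hg2 : g^2 ≠ 0 := pow_ne_zero 2 hg0
    apply mul_left_cancel₀ hg2
    linear_combination hY
  obtain ⟨t, ht⟩ : g ∣ 2 * (a * u) * m := by
    rw [← Int.pow_dvd_pow_iff (n := 2) (by norm_num)]
    exact Dvd.intro_left _ hE
  have hF : (9 * m^2 - 8 * n^2) * (m^2 - n^2) = t^2 := by
    have hg2 : g^2 ≠ 0 := pow_ne_zero 2 hg0
    apply mul_left_cancel₀ hg2
    rw [ht] at hE
    linear_combination hE
  have ht0 : t ≠ 0 := by
    rintro rfl
    rw [mul_zero] at ht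
    have : 2 * (a * u) * m ≠ 0 := by positivity
    exact this ht
  have hcop : IsCoprime (9 * m^2 - 8 * n^2) (m^2 - n^2) := by
    obtain ⟨x, y, hxy⟩ := (hmn.pow (m := 2) (n := 2))
    exact ⟨x + y, -8 * x - 9 * y, by linear_combination hxy⟩
  have hn2 : n^2 % 3 = 1 := by
    have : n % 3 = 1 ∨ n % 3 = 2 := by omega
    rcases this with h | h <;> simp [pow_two, Int.mul_emod, h]
  have hsq3 : ∀ q : ℤ, q^2 % 3 = 0 ∨ q^2 % 3 = 1 := by
    intro q
    have : q % 3 = 0 ∨ q % 3 = 1 ∨ q % 3 = 2 := by omega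
    rcases this with h | h | h <;> simp [pow_two, Int.mul_emod, h]
  obtain ⟨q, hq⟩ := Int.sq_of_isCoprime hcop hF
  obtain ⟨r, hr⟩ := Int.sq_of_isCoprime hcop.symm ((mul_comm _ _).trans hF)
  have hq' : 9 * m^2 - 8 * n^2 = q^2 := by
    rcases hq with h | h
    · exact h
    · exfalso; have := hsq3 q; omega
  have hq0 : 0 < 9 * m^2 - 8 * n^2 := by
    have : q ≠ 0 := by
      rintro rfl
      have := hsq3 0
      omega
    rw [hq']; positivity
  have hr0 : 0 < m^2 - n^2 := by
    have : 0 < t^2 := by positivity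
    rw [← hF] at this
    exact pos_of_mul_pos_right this hq0.le
  have hr' : m^2 - n^2 = r^2 := by
    rcases hr with h | h
    · exact h
    · exfalso; nlinarith [sq_nonneg r]
  have hrne : r ≠ 0 := by
    rintro rfl
    simp at hr'; omega
  refine aux_A _ n r m q rfl ?_ hn3 hrne (by linarith) (by linarith)
  have : IsCoprime (n^2) (r^2) := by
    rw [← hr']
    obtain ⟨x, y, hxy⟩ := (hmn.pow (m := 2) (n := 2))
    exact ⟨x + y, x, by linear_combination hxy⟩
  exact (IsCoprime.pow_iff (by norm_num) (by norm_num)).mp this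
end

section
/- Let a, u be coprime positive integers with a ≠ u, Δ = u² − a², and suppose 3 does not divide au. Then there is no integer X satisfying (X² − 8Δ²)(X² − 9Δ²) = 4a²u²X². -/
lemma sq3_s8 (x : ℤ) : (x ^ 2 % 3 = 0 ∧ x % 3 = 0) ∨ (x ^ 2 % 3 = 1 ∧ x % 3 ≠ 0) := by
  have : x % 3 = 0 ∨ x % 3 = 1 ∨ x % 3 = 2 := by omega
  rcases this with h | h | h <;> simp [pow_two, Int.mul_emod, h]

lemma sq4 (x : ℤ) : (x ^ 2 % 4 = 0 ∧ x % 2 = 0) ∨ (x ^ 2 % 4 = 1 ∧ x % 2 = 1) := by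
  have : x % 4 = 0 ∨ x % 4 = 1 ∨ x % 4 = 2 ∨ x % 4 = 3 := by omega
  rcases this with h | h | h | h <;> simp [pow_two, Int.mul_emod, h] <;> omega

lemma cop_of_prime {x y : ℤ} (h : ∀ r : ℤ, Prime r → r ∣ x → r ∣ y → False) (hx : x ≠ 0) :
    IsCoprime x y :=
  isCoprime_of_prime_dvd (fun h' => hx h'.1) (fun r hr h1 h2 => h r hr h1 h2)

lemma norm3 (c x : ℤ) (hc : c = 1 ∨ c = 2) (hx : x % 3 ≠ 0) :
    ∃ y : ℤ, y ^ 2 = x ^ 2 ∧ y % 3 = c := by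
  by_cases h : x % 3 = c
  · exact ⟨x, rfl, h⟩
  · exact ⟨-x, by ring, by omega⟩

lemma sq_of_cop {x y z : ℤ} (h : IsCoprime x y) (he : x * y = z ^ 2) :
    ∃ w, x = w ^ 2 ∨ x = -w ^ 2 := Int.sq_of_isCoprime h he

/-- coprimality of the half sum and half difference -/
lemma cop_half {s t x y c q : ℤ} (hs : s + t = x) (ht : s - t = y) (hst : s * t = c * q ^ 2)
    (h : ∀ r : ℤ, Prime r → r ∣ c * q ^ 2 → r ∣ x → r ∣ y → False) (h0 : s ≠ 0) :
    IsCoprime s t := by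
  refine cop_of_prime (fun r hr h1 h2 => ?_) h0
  exact h r hr (hst ▸ h1.mul_right t) (hs ▸ dvd_add h1 h2) (ht ▸ dvd_sub h1 h2)

lemma half_prod {x y s t : ℤ} (h1 : x + y = 2 * s) (h2 : x - y = 2 * t) :
    4 * (s * t) = x ^ 2 - y ^ 2 := by
  have : (x + y) * (x - y) = (2 * s) * (2 * t) := by rw [h1, h2]
  linarith

set_option maxHeartbeats 4000000 in
lemma descent (N : ℕ) : ∀ n q m p : ℤ, q.natAbs ≤ N → IsCoprime n q → 3 ∣ q → q ≠ 0 →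
    n ^ 2 + q ^ 2 = m ^ 2 → n ^ 2 + 9 * q ^ 2 = p ^ 2 → False := by
  induction N with
  | zero => intro n q m p h _ _ hq; omega
  | succ N ih =>
  intro n q m p hN hco h3 hq hm hp
  have hn3 : n % 3 ≠ 0 := by
    intro h
    have : (3:ℤ) ∣ 1 := by
      obtain ⟨a, b, hab⟩ := hco
      rw [← hab]
      exact dvd_add (Dvd.dvd.mul_left (Int.dvd_of_emod_eq_zero h) _) (h3.mul_left _)
    omega
  have hq2 : (3:ℤ) ∣ q ^ 2 := dvd_pow h3 two_ne_zero
  have hn2 : n ^ 2 % 3 = 1 := by rcases sq3_s8 n with h | h <;> [exact absurd h.2 hn3; exact h.1]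
  have hm3 : m % 3 ≠ 0 := by rcases sq3_s8 m with h | h <;> omega
  have hp3 : p % 3 ≠ 0 := by rcases sq3_s8 p with h | h <;> omega
  have hqpos : 0 < q ^ 2 := by positivity
  have hcop : ∀ r : ℤ, Prime r → r ∣ n → r ∣ q → False := fun r hr h1 h2 =>
    hr.not_isUnit (hco.isUnit_of_dvd' h1 h2)
  have h3n : ∀ r : ℤ, Prime r → r ∣ n → r ∣ 9 * q ^ 2 → False := by
    intro r hr h1 h2
    rcases hr.dvd_or_dvd h2 with h | h
    · have : r ∣ 3 := hr.dvd_of_dvd_pow (n := 2) (by norm_num; exact h)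
      exact hcop r hr h1 (this.trans h3)
    · exact hcop r hr h1 (hr.dvd_of_dvd_pow h)
  -- normalisation of signs
  obtain ⟨c, hc, hcq⟩ : ∃ c : ℤ, (c = 1 ∨ c = 2) ∧ (c = 1 ↔ q % 2 = 0) := by
    by_cases h : q % 2 = 0
    · exact ⟨1, Or.inl rfl, by simp [h]⟩
    · exact ⟨2, Or.inr rfl, by simp [h]⟩
  obtain ⟨n', en, hn'⟩ := norm3 c n hc hn3
  obtain ⟨m', em, hm'⟩ := norm3 c m hc hm3
  obtain ⟨p', ep, hp'⟩ := norm3 c p hc hp3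
  have hdn : ∀ r : ℤ, Prime r → r ∣ n' → r ∣ n := fun r hr h =>
    hr.dvd_of_dvd_pow (n := 2) (en ▸ dvd_pow h two_ne_zero)
  rw [← en, ← em] at hm
  rw [← en, ← ep] at hp
  have cmn : ∀ r : ℤ, Prime r → r ∣ n' → r ∣ q ^ 2 → False := fun r hr h1 h2 =>
    hcop r hr (hdn r hr h1) (hr.dvd_of_dvd_pow h2)
  have cpn : ∀ r : ℤ, Prime r → r ∣ n' → r ∣ 9 * q ^ 2 → False := fun r hr h1 h2 =>
    h3n r hr (hdn r hr h1) h2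
  have cpm : ∀ r : ℤ, Prime r → r ∣ p' → r ∣ m' → r ∣ q ^ 2 → False := by
    intro r hr h1 h2 h3
    refine cmn r hr (hr.dvd_of_dvd_pow (n := 2) ?_) h3
    have : n' ^ 2 = m' ^ 2 - q ^ 2 := by linarith
    rw [this]
    exact dvd_sub (dvd_pow h2 two_ne_zero) h3
  have hpos : 0 ≤ p' + n' → 0 < p' := by
    intro h
    by_contra hneg
    have : p' + n' ≠ 0 := by omega
    nlinarith
  -- parity
  have hpm2 : m' % 2 = 1 ∧ p' % 2 = 1 ∧ (n' + q) % 2 = 1 := by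
    have hnn : ¬ (n' % 2 = 0 ∧ q % 2 = 0) := by
      rintro ⟨h1, h2⟩
      exact cmn 2 Int.prime_two (Int.dvd_of_emod_eq_zero h1)
        (dvd_pow (Int.dvd_of_emod_eq_zero h2) two_ne_zero)
    rcases sq4 n' with h1 | h1 <;> rcases sq4 q with h2 | h2 <;> rcases sq4 m' with h3 | h3 <;>
      rcases sq4 p' with h4 | h4 <;> omega
  obtain ⟨hmo, hpo, hnq⟩ := hpm2
  -- p + m
  obtain ⟨s, hs⟩ : ∃ s, p' + m' = 2 * s := ⟨(p' + m') / 2, by omega⟩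
  obtain ⟨t, ht⟩ : ∃ t, p' - m' = 2 * t := ⟨(p' - m') / 2, by omega⟩
  have hst : s * t = 2 * q ^ 2 := by linarith [half_prod hs ht]
  have hst0 : s ≠ 0 := by rintro rfl; omega
  have hsp : s + t = p' := by omega
  have hsm : s - t = m' := by omega
  have hcst : IsCoprime s t := by
    refine cop_half hsp hsm hst (fun r hr h1 h2 h3 => ?_) hst0
    rcases hr.dvd_or_dvd h1 with h | h
    · have h22 : (r.natAbs : ℤ) ∣ 2 := Int.natAbs_dvd.mpr h
      have h5 : r.natAbs ∣ 2 := by exact_mod_cast h22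
      have h6 := (Nat.dvd_prime Nat.prime_two).1 h5
      have h7 := Int.prime_iff_natAbs_prime.1 hr
      rcases h6 with h6 | h6
      · rw [h6] at h7; exact Nat.not_prime_one h7
      · have : (2:ℤ) ∣ p' := by
          have := Int.natAbs_dvd.mpr h2
          rw [h6] at this; exact_mod_cast this
        omega
    · exact cpm r hr h2 h3 h
  have hs_cases : (∃ e, s = e ^ 2 ∨ s = - e ^ 2) ∨ (∃ f, s = 2 * f ^ 2 ∨ s = - (2 * f ^ 2)) := by
    have : (2:ℤ) ∣ s * t := ⟨_, hst⟩
    rcases Int.prime_two.dvd_or_dvd this with ⟨s', rfl⟩ | ⟨t', rfl⟩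
    · right
      have h : s' * t = q ^ 2 := by linarith
      obtain ⟨w, hw⟩ := sq_of_cop (hcst.of_mul_left_right) h
      exact ⟨w, by rcases hw with rfl | rfl <;> [left; right] <;> ring⟩
    · left
      have h : s * t' = q ^ 2 := by linarith
      exact sq_of_cop (hcst.of_mul_right_right) h
  have hsneg : s < 0 → ¬ (0 < p') := by
    intro h1 h2
    have : t < 0 := by nlinarith
    omega
  rcases hc with rfl | rfl
  · -- even case
    have hqe : q % 2 = 0 := hcq.1 rfl
    obtain ⟨Q, rfl⟩ : ∃ Q, q = 2 * Q := ⟨q / 2, by omega⟩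
    have hQ0 : Q ≠ 0 := by rintro rfl; simp at hq
    obtain ⟨α, hα⟩ : ∃ s, m' + n' = 2 * s := ⟨(m' + n') / 2, by omega⟩
    obtain ⟨β, hβ⟩ : ∃ s, m' - n' = 2 * s := ⟨(m' - n') / 2, by omega⟩
    obtain ⟨γ, hγ⟩ : ∃ s, p' + n' = 2 * s := ⟨(p' + n') / 2, by omega⟩
    obtain ⟨δ, hδ⟩ : ∃ s, p' - n' = 2 * s := ⟨(p' - n') / 2, by omega⟩
    have hαβ : α * β = 1 * Q ^ 2 := by linarith [half_prod hα hβ]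
    have hγδ : γ * δ = 9 * Q ^ 2 := by linarith [half_prod hγ hδ]
    have c1 : IsCoprime α β := by
      refine cop_half (x := m') (y := n') (by omega) (by omega) hαβ
        (fun r hr h1 _ h3 => cmn r hr h3 ?_) (by rintro rfl; omega)
      exact h1.trans ⟨4, by ring⟩
    have c2 : IsCoprime γ δ := by
      refine cop_half (x := p') (y := n') (by omega) (by omega) hγδ
        (fun r hr h1 _ h3 => cpn r hr h3 ?_) (by rintro rfl; omega)
      exact h1.trans ⟨4, by ring⟩
    obtain ⟨k, hk⟩ := sq_of_cop c1 (z := Q) (by linarith)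
    obtain ⟨g, hg⟩ := sq_of_cop c2 (z := 3 * Q) (by rw [hγδ]; ring)
    have hk : α = k ^ 2 := by
      rcases hk with h | h
      · exact h
      · rcases sq3_s8 k with h' | h' <;> omega
    have hg : γ = g ^ 2 := by
      rcases hg with h | h
      · exact h
      · rcases sq3_s8 g with h' | h' <;> omega
    have hpp : 0 < p' := hpos (by linarith [sq_nonneg g])
    have hs0 : ¬ s < 0 := fun h => hsneg h hpp
    obtain ⟨e, he⟩ : ∃ e, s = e ^ 2 := by
      rcases hs_cases with ⟨e, h | h⟩ | ⟨e, h | h⟩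
      · exact ⟨e, h⟩
      · exfalso; have := sq_nonneg e; omega
      · exfalso; rcases sq3_s8 e with h' | h' <;> omega
      · exfalso; have := sq_nonneg e; omega
    rw [hk] at hα
    rw [hg] at hγ
    rw [he] at hs
    have hk0 : k ≠ 0 := by rintro rfl; omega
    have E1 : Q ^ 2 = k ^ 2 * (e ^ 2 - g ^ 2) := by
      have : (n' + m') * (n' + p') + (2 * Q) ^ 2 = (m' + n') * (m' + p') := by linarith
      rw [add_comm n' m', add_comm n' p', add_comm m' p', hα, hγ, hs] at this
      linarith
    obtain ⟨l, rfl⟩ : k ∣ Q := (Int.pow_dvd_pow_iff two_ne_zero).1 ⟨_, E1⟩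
    have hl0 : l ≠ 0 := by rintro rfl; simp at hQ0
    have E2 : g ^ 2 + l ^ 2 = e ^ 2 := by
      have : k ^ 2 * (g ^ 2 + l ^ 2) = k ^ 2 * e ^ 2 := by linarith
      exact mul_left_cancel₀ (pow_ne_zero 2 hk0) this
    have E3 : (e * g) ^ 2 = k ^ 2 * (g ^ 2 + 9 * l ^ 2) := by
      have : (n' + m') * (n' + p') + 9 * (2 * (k * l)) ^ 2 = (p' + m') * (p' + n') := by linarith
      rw [add_comm n' m', add_comm n' p', hα, hγ, hs] at this
      linarith
    obtain ⟨w, hw⟩ : k ∣ e * g := (Int.pow_dvd_pow_iff two_ne_zero).1 ⟨_, E3⟩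
    have E4 : g ^ 2 + 9 * l ^ 2 = w ^ 2 := by
      rw [hw] at E3
      have : k ^ 2 * (g ^ 2 + 9 * l ^ 2) = k ^ 2 * w ^ 2 := by linarith
      exact mul_left_cancel₀ (pow_ne_zero 2 hk0) this
    have hg3 : g % 3 ≠ 0 := by rcases sq3_s8 g with h' | h' <;> omega
    have hk3 : k % 3 ≠ 0 := by rcases sq3_s8 k with h' | h' <;> omega
    have hl3 : (3:ℤ) ∣ l := by
      rcases Int.prime_three.dvd_or_dvd h3 with h | h
      · omega
      · rcases Int.prime_three.dvd_or_dvd h with h | h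
        · omega
        · exact h
    have hlt : l.natAbs ≤ N := by
      have h1 : 0 < k.natAbs := Int.natAbs_pos.2 hk0
      have h2 : 0 < l.natAbs := Int.natAbs_pos.2 hl0
      rw [Int.natAbs_mul, Int.natAbs_mul] at hN
      have : (2:ℤ).natAbs = 2 := rfl
      rw [this] at hN
      nlinarith
    obtain ⟨d, g', l', hd, hgl, rfl, rfl⟩ : ∃ d g' l' : ℤ, d ≠ 0 ∧ IsCoprime g' l' ∧
        g = d * g' ∧ l = d * l' := by
      obtain ⟨g', hg'⟩ := Int.gcd_dvd_left g l
      obtain ⟨l', hl'⟩ := Int.gcd_dvd_right g l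
      have h0 : (Int.gcd g l : ℤ) ≠ 0 := by
        intro h; rw [h] at hl'; simp at hl'; exact hl0 hl'
      refine ⟨Int.gcd g l, g', l', h0, ?_, hg', hl'⟩
      have := Int.gcd_eq_gcd_ab g l
      refine ⟨Int.gcdA g l, Int.gcdB g l, mul_left_cancel₀ h0 ?_⟩
      nth_rewrite 2 [hg'] at this
      nth_rewrite 4 [hl'] at this
      linarith
    have hd2 : d ^ 2 ≠ 0 := pow_ne_zero 2 hd
    obtain ⟨e', rfl⟩ : d ∣ e :=
      (Int.pow_dvd_pow_iff two_ne_zero).1 ⟨g' ^ 2 + l' ^ 2, by rw [← E2]; ring⟩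
    obtain ⟨w', rfl⟩ : d ∣ w :=
      (Int.pow_dvd_pow_iff two_ne_zero).1 ⟨g' ^ 2 + 9 * l' ^ 2, by rw [← E4]; ring⟩
    refine ih g' l' e' w' ?_ hgl ?_ ?_ ?_ ?_
    · rw [Int.natAbs_mul] at hlt
      have h1 : 0 < d.natAbs := Int.natAbs_pos.2 hd
      nlinarith
    · rcases Int.prime_three.dvd_or_dvd hl3 with h | h
      · exact absurd (Int.emod_eq_zero_of_dvd (h.mul_right g')) hg3
      · exact h
    · rintro rfl; simp at hl0
    · exact mul_left_cancel₀ hd2 (by linarith)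
    · exact mul_left_cancel₀ hd2 (by linarith)
  · -- odd case
    have hqo : q % 2 = 1 := by
      have : ¬ q % 2 = 0 := fun h => by have := hcq.2 h; omega
      omega
    have hne2 : n' % 2 = 0 := by omega
    have key : ∀ x c : ℤ, x % 2 = 1 → x % 3 = 2 → (x + n') * (x - n') = c ^ 2 →
        (∀ r : ℤ, Prime r → r ∣ n' → r ∣ c ^ 2 → False) → ∃ k, x + n' = k ^ 2 := by
      intro x c hx2 hx3 hxc hr
      have : IsCoprime (x + n') (x - n') := by
        refine cop_of_prime (fun r hr' h1 h2 => ?_) (by omega)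
        have h3 : r ∣ 2 * n' := by
          have := dvd_sub h1 h2
          ring_nf at this; rwa [mul_comm] at this
        rcases hr'.dvd_or_dvd h3 with h | h
        · have h22 : (r.natAbs : ℤ) ∣ 2 := Int.natAbs_dvd.mpr h
          have h5 : r.natAbs ∣ 2 := by exact_mod_cast h22
          have h6 := (Nat.dvd_prime Nat.prime_two).1 h5
          have h7 := Int.prime_iff_natAbs_prime.1 hr'
          rcases h6 with h6 | h6
          · rw [h6] at h7; exact Nat.not_prime_one h7
          · have : (2:ℤ) ∣ x + n' := by
              have := Int.natAbs_dvd.mpr h1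
              rw [h6] at this; exact_mod_cast this
            omega
        · exact hr r hr' h (hxc ▸ h1.mul_right _)
      obtain ⟨k, h | h⟩ := sq_of_cop this hxc
      · exact ⟨k, h⟩
      · exfalso; rcases sq3_s8 k with h' | h' <;> omega
    obtain ⟨k, hk⟩ := key m' q hmo hm' (by linarith) cmn
    obtain ⟨g, hg⟩ := key p' (3 * q) hpo hp' (by linarith)
      (fun r hr h1 h2 => cpn r hr h1 (h2.trans ⟨1, by ring⟩))
    have hpp : 0 < p' := hpos (by rw [hg]; positivity)
    have hs0 : ¬ s < 0 := fun h => hsneg h hpp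
    obtain ⟨f, hf⟩ : ∃ f, s = 2 * f ^ 2 := by
      rcases hs_cases with ⟨e, h | h⟩ | ⟨e, h | h⟩
      · exfalso; rcases sq3_s8 e with h' | h' <;> omega
      · exfalso; have := sq_nonneg e; omega
      · exact ⟨e, h⟩
      · exfalso; have := sq_nonneg e; omega
    have E1 : (k * g) ^ 2 + q ^ 2 = 4 * (k * f) ^ 2 := by
      have : (n' + m') * (n' + p') + q ^ 2 = (m' + n') * (p' + m') := by linarith
      rw [add_comm n' m', add_comm n' p', hk, hg, hs, hf] at this
      linarith
    rcases sq4 (k * g) with h1 | h1 <;> rcases sq4 q with h2 | h2 <;> omega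

theorem star_no_solution_of_three_not_dvd_au (a u : ℤ) (ha : 0 < a) (hu : 0 < u)
    (hco : IsCoprime a u) (hne : a ≠ u) (h3 : ¬ (3 : ℤ) ∣ a * u) :
    ¬ ∃ X : ℤ, (X ^ 2 - 8 * (u ^ 2 - a ^ 2) ^ 2) * (X ^ 2 - 9 * (u ^ 2 - a ^ 2) ^ 2) =
      4 * a ^ 2 * u ^ 2 * X ^ 2 := by
  rintro ⟨X, hX⟩
  have ha3 : a % 3 ≠ 0 := fun h => h3 ((Int.dvd_of_emod_eq_zero h).mul_right _)
  have hu3 : u % 3 ≠ 0 := fun h => h3 ((Int.dvd_of_emod_eq_zero h).mul_left _)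
  have hD3 : (3:ℤ) ∣ u ^ 2 - a ^ 2 := by
    rcases sq3_s8 a with h | h <;> rcases sq3_s8 u with h' | h' <;> omega
  have hD0 : u ^ 2 - a ^ 2 ≠ 0 := by
    intro h
    have : (u - a) * (u + a) = 0 := by linarith
    rcases mul_eq_zero.1 this with h | h <;> omega
  generalize u ^ 2 - a ^ 2 = D at *
  obtain ⟨g, p, q, hg, hpq, rfl, rfl⟩ : ∃ d g' l' : ℤ, d ≠ 0 ∧ IsCoprime g' l' ∧
      X = d * g' ∧ D = d * l' := by
    obtain ⟨g', hg'⟩ := Int.gcd_dvd_left X D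
    obtain ⟨l', hl'⟩ := Int.gcd_dvd_right X D
    have h0 : (Int.gcd X D : ℤ) ≠ 0 := by
      intro h; rw [h] at hl'; simp at hl'; exact hD0 hl'
    refine ⟨Int.gcd X D, g', l', h0, ?_, hg', hl'⟩
    have := Int.gcd_eq_gcd_ab X D
    refine ⟨Int.gcdA X D, Int.gcdB X D, mul_left_cancel₀ h0 ?_⟩
    nth_rewrite 2 [hg'] at this
    nth_rewrite 4 [hl'] at this
    linarith
  have hq0 : q ≠ 0 := by rintro rfl; simp at hD0
  have hS : g ^ 2 * ((p ^ 2 - 8 * q ^ 2) * (p ^ 2 - 9 * q ^ 2)) = (2 * (a * u) * p) ^ 2 :=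
    mul_left_cancel₀ (pow_ne_zero 2 hg) (by linarith)
  obtain ⟨z, hz⟩ : g ∣ 2 * (a * u) * p := (Int.pow_dvd_pow_iff two_ne_zero).1 ⟨_, hS.symm⟩
  have hSz : (p ^ 2 - 8 * q ^ 2) * (p ^ 2 - 9 * q ^ 2) = z ^ 2 := by
    rw [hz] at hS
    exact mul_left_cancel₀ (pow_ne_zero 2 hg) (by linarith)
  have hdp : ∀ y : ℤ, (3:ℤ) ∣ 2 * (a * u) * y → (3:ℤ) ∣ y := by
    intro y h
    rcases Int.prime_three.dvd_or_dvd h with h | h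
    · rcases Int.prime_three.dvd_or_dvd h with h | h
      · omega
      · exact absurd h h3
    · exact h
  have hq3 : (3:ℤ) ∣ q := by
    by_contra hq
    have hg3 : (3:ℤ) ∣ g := (Int.prime_three.dvd_or_dvd hD3).resolve_right hq
    obtain ⟨p1, rfl⟩ := hdp p (hz ▸ hg3.mul_right z)
    obtain ⟨z1, rfl⟩ : (3:ℤ) ∣ z := by
      refine Int.prime_three.dvd_of_dvd_pow (n := 2) ?_
      rw [← hSz]
      exact ⟨((3 * p1) ^ 2 - 8 * q ^ 2) * (3 * p1 ^ 2 - 3 * q ^ 2), by ring⟩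
    obtain ⟨p2, rfl⟩ := hdp p1 (by
      have : 2 * (a * u) * p1 = g * z1 := by linarith
      rw [this]; exact hg3.mul_right _)
    have h1 : ((3 * (3 * p2)) ^ 2 - 8 * q ^ 2) * ((3 * p2) ^ 2 - q ^ 2) = z1 ^ 2 := by linarith
    have h2 : z1 ^ 2 = 3 * (243 * p2 ^ 4 - 51 * p2 ^ 2 * q ^ 2 + 2 * (q ^ 2) ^ 2) + 2 * (q ^ 2) ^ 2
      := by rw [← h1]; ring
    rcases sq3_s8 z1 with h | h <;> rcases sq3_s8 q with h' | h' <;> rcases sq3_s8 (q ^ 2) with h'' | h''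
      <;> omega
  have hp3 : p % 3 ≠ 0 := by
    intro h
    exact Int.prime_three.not_isUnit (hpq.isUnit_of_dvd' (Int.dvd_of_emod_eq_zero h) hq3)
  have hq32 : (3:ℤ) ∣ q ^ 2 := dvd_pow hq3 two_ne_zero
  have hcq : IsCoprime (p ^ 2 - 8 * q ^ 2) (p ^ 2 - 9 * q ^ 2) := by
    obtain ⟨x, y, hxy⟩ : IsCoprime (p ^ 2) (q ^ 2) := hpq.pow
    refine ⟨9 * x + y, -8 * x - y, ?_⟩
    rw [← hxy]; ring
  obtain ⟨m, hm⟩ := sq_of_cop hcq hSz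
  obtain ⟨n, hn⟩ := sq_of_cop hcq.symm (z := z) (by rw [← hSz]; ring)
  have hm : p ^ 2 - 8 * q ^ 2 = m ^ 2 := by
    rcases hm with h | h
    · exact h
    · rcases sq3_s8 m with h' | h' <;> rcases sq3_s8 p with h'' | h'' <;> omega
  have hn : p ^ 2 - 9 * q ^ 2 = n ^ 2 := by
    rcases hn with h | h
    · exact h
    · rcases sq3_s8 n with h' | h' <;> rcases sq3_s8 p with h'' | h'' <;> omega
  refine descent q.natAbs n q m p le_rfl ?_ hq3 hq0 (by linarith) (by linarith)
  have : IsCoprime (n ^ 2) (q ^ 2) := by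
    obtain ⟨x, y, hxy⟩ : IsCoprime (p ^ 2) (q ^ 2) := hpq.pow
    refine ⟨x, 9 * x + y, ?_⟩
    rw [← hxy, ← hn]; ring
  exact (IsCoprime.pow_iff two_pos two_pos).1 this
end

section
/- For any coprime positive integers a and u with a ≠ u and Δ = u² − a², the Diophantine equation (X² − 8Δ²)(X² − 9Δ²) = 4a²u²X² has no integer solutions X. -/
lemma sq_mod8 (x : ℤ) (h : x % 2 = 1) : x ^ 2 % 8 = 1 := by
  have : x % 8 = 1 ∨ x % 8 = 3 ∨ x % 8 = 5 ∨ x % 8 = 7 := by omega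
  rcases this with h | h | h | h <;> simp [pow_two, Int.mul_emod, h]

lemma sq_mod4 (x : ℤ) (h : x % 2 = 0) : x ^ 2 % 4 = 0 := by
  have : x % 4 = 0 ∨ x % 4 = 2 := by omega
  rcases this with h | h <;> simp [pow_two, Int.mul_emod, h]

lemma odd_of_mul {x y : ℤ} (h : (x * y) % 2 = 1) : x % 2 = 1 ∧ y % 2 = 1 := by
  rcases Int.emod_two_eq_zero_or_one x with h1 | h1 <;>
  rcases Int.emod_two_eq_zero_or_one y with h2 | h2 <;>
  simp [Int.mul_emod, h1, h2] at h ⊢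

lemma core (r s m n : ℤ) (h1 : r * s = m * n) (h2 : 4 * r ^ 2 + s ^ 2 = m ^ 2 + n ^ 2)
    (hc : IsCoprime m n) (hs : s % 2 = 1) (hm : m % 2 = 1) (hn : n % 2 = 0) (h0 : m * n ≠ 0) :
    ∃ a b c d : ℤ, c ^ 2 - b ^ 2 = a ^ 2 ∧ c ^ 2 - 4 * b ^ 2 = d ^ 2 ∧ b ∣ n := by
  obtain ⟨a, b, ⟨c, hac⟩, ⟨d, hbd⟩, hr⟩ := exists_dvd_and_dvd_of_dvd_mul (Dvd.intro s h1)
  have hab : a * b ≠ 0 := by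
    rintro h
    rw [← h1, hr, h] at h0
    simp at h0
  have hs' : s = c * d := by
    apply mul_left_cancel₀ hab
    rw [hr, hac, hbd] at h1; linear_combination h1
  subst hac hbd hr hs'
  obtain ⟨hc2, hd2⟩ := odd_of_mul hs
  obtain ⟨ha2, -⟩ := odd_of_mul hm
  have hb2 : b % 2 = 0 := by
    rcases Int.emod_two_eq_zero_or_one b with h | h
    · exact h
    · simp [Int.mul_emod, h, hd2] at hn
  have cad : IsCoprime a d := (hc.of_mul_left_left).of_mul_right_right
  have ccb : IsCoprime c b := (hc.of_mul_left_right).of_mul_right_left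
  have ha0 : a ≠ 0 := left_ne_zero_of_mul hab
  have key : a ^ 2 * (4 * b ^ 2 - c ^ 2) = d ^ 2 * (b ^ 2 - c ^ 2) := by linear_combination h2
  have hdvd : a ^ 2 ∣ b ^ 2 - c ^ 2 :=
    (cad.pow (m := 2) (n := 2)).dvd_of_dvd_mul_left (Dvd.intro _ key)
  obtain ⟨k, hk⟩ := hdvd
  have hk2 : 4 * b ^ 2 - c ^ 2 = d ^ 2 * k := by
    apply mul_left_cancel₀ (pow_ne_zero 2 ha0)
    rw [key, hk]; ring
  have hk3 : k ∣ 3 := by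
    have e1 : k ∣ 3 * b ^ 2 := ⟨d ^ 2 - a ^ 2, by linear_combination hk2 - hk⟩
    have e2 : k ∣ 3 * c ^ 2 := ⟨d ^ 2 - 4 * a ^ 2, by linear_combination hk2 - 4 * hk⟩
    obtain ⟨p, q, hpq⟩ := ccb.pow (m := 2) (n := 2)
    have := dvd_add (e2.mul_left p) (e1.mul_left q)
    have e : p * (3 * c ^ 2) + q * (3 * b ^ 2) = 3 := by linear_combination 3 * hpq
    rwa [e] at this
  have hk4 : k = 1 ∨ k = -1 ∨ k = 3 ∨ k = -3 := by
    have u1 := Int.le_of_dvd (by norm_num) hk3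
    have u2 := Int.le_of_dvd (by norm_num) ((neg_dvd).2 hk3)
    have : -3 ≤ k := by linarith
    interval_cases k <;> first | omega | (exfalso; revert hk3; decide)
  have sa := sq_mod8 a ha2
  have sc := sq_mod8 c hc2
  have sd := sq_mod8 d hd2
  have sb := sq_mod4 b hb2
  refine ⟨a, b, c, d, ?_, ?_, Dvd.intro _ rfl⟩ <;> rcases hk4 with rfl | rfl | rfl | rfl <;> omega

lemma descent_s9 (N : ℕ) : ∀ x y α δ : ℤ, y.natAbs = N → x ^ 2 - y ^ 2 = α ^ 2 →
    x ^ 2 - 4 * y ^ 2 = δ ^ 2 → y = 0 := by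
  induction N using Nat.strong_induction_on with
  | _ N ih =>
  intro X Y A B hN hA hB
  by_contra hY
  have hg := Int.gcd_pos_of_ne_zero_right X hY
  obtain ⟨x, y, hxy, hx, hy⟩ := Int.exists_gcd_one hg
  generalize (X.gcd Y) = g at *
  have hg0 : (g : ℤ) ≠ 0 := by exact_mod_cast hg.ne'
  have gA : (g : ℤ) ∣ A := by
    rw [← Int.pow_dvd_pow_iff (n := 2) two_ne_zero]
    exact ⟨x ^ 2 - y ^ 2, by rw [← hA, hx, hy]; ring⟩
  have gB : (g : ℤ) ∣ B := by
    rw [← Int.pow_dvd_pow_iff (n := 2) two_ne_zero]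
    exact ⟨x ^ 2 - 4 * y ^ 2, by rw [← hB, hx, hy]; ring⟩
  obtain ⟨α, rfl⟩ := gA
  obtain ⟨δ, rfl⟩ := gB
  have hα : x ^ 2 - y ^ 2 = α ^ 2 := by
    apply mul_left_cancel₀ (pow_ne_zero 2 hg0)
    rw [hx, hy] at hA; linear_combination hA
  have hδ : x ^ 2 - 4 * y ^ 2 = δ ^ 2 := by
    apply mul_left_cancel₀ (pow_ne_zero 2 hg0)
    rw [hx, hy] at hB; linear_combination hB
  have hy0 : y ≠ 0 := by rintro rfl; simp at hy; exact hY hy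
  have hle : y.natAbs ≤ N := by
    rw [← hN]
    exact Int.natAbs_le_of_dvd_ne_zero ⟨g, hy⟩ hY
  have cxy : IsCoprime |x| y := (Int.isCoprime_iff_gcd_eq_one.2 hxy).abs_left
  have hxpos : 0 < |x| := by
    rw [abs_pos]; rintro rfl
    have := sq_nonneg α
    have : 0 < y ^ 2 := by positivity
    linarith
  rw [← sq_abs x] at hα hδ
  generalize |x| = z at *
  clear hx hy hA hB hxy
  -- parity
  have par : z % 2 = 1 ∧ y % 2 = 0 ∧ α % 2 = 1 ∧ δ % 2 = 1 := by
    have q (t : ℤ) : (t % 2 = 1 ∧ t ^ 2 % 8 = 1) ∨ (t % 2 = 0 ∧ t ^ 2 % 4 = 0) := by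
      rcases Int.emod_two_eq_zero_or_one t with h | h
      · exact Or.inr ⟨h, sq_mod4 t h⟩
      · exact Or.inl ⟨h, sq_mod8 t h⟩
    have nb : ¬ (z % 2 = 0 ∧ y % 2 = 0) := by
      rintro ⟨h1, h2⟩
      have := cxy.isUnit_of_dvd' (Int.dvd_of_emod_eq_zero h1) (Int.dvd_of_emod_eq_zero h2)
      exact absurd this (by decide)
    have := q z
    have := q y
    have := q α
    have := q δ
    omega
  obtain ⟨pz, py, pα, pδ⟩ := par
  have c1 : IsCoprime α y := by
    have : IsCoprime (α ^ 2) y := by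
      have := (cxy.pow_left (m := 2)).add_mul_left_left (-y)
      rw [show α ^ 2 = z ^ 2 + y * (-y) by linear_combination -hα]
      exact this
    exact (IsCoprime.pow_left_iff two_pos).1 this
  have c2 : IsCoprime δ (2 * y) := by
    have z2 : IsCoprime z (2 * y) := by
      refine IsCoprime.mul_right ⟨1, -(z / 2), by omega⟩ cxy
    have : IsCoprime (δ ^ 2) (2 * y) := by
      have := (z2.pow_left (m := 2)).add_mul_left_left (-(2 * y))
      rw [show δ ^ 2 = z ^ 2 + (2 * y) * (-(2 * y)) by linear_combination -hδ]
      exact this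
    exact (IsCoprime.pow_left_iff two_pos).1 this
  have t1 : PythagoreanTriple α y z := by
    unfold PythagoreanTriple; linear_combination -hα
  have t2 : PythagoreanTriple δ (2 * y) z := by
    unfold PythagoreanTriple; linear_combination -hδ
  obtain ⟨m, n, -, hm2, hm3, hm4, hm5, -⟩ :=
    t1.coprime_classification' (Int.isCoprime_iff_gcd_eq_one.1 c1) pα hxpos
  obtain ⟨r, s, -, hr2, hr3, hr4, hr5, -⟩ :=
    t2.coprime_classification' (Int.isCoprime_iff_gcd_eq_one.1 c2) pδ hxpos
  have cmn := Int.isCoprime_iff_gcd_eq_one.2 hm4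
  have hmn0 : m * n ≠ 0 := by
    rintro h; apply hy0; rw [hm2]; linear_combination 2 * h
  have fin : ∃ a b c d : ℤ, c ^ 2 - b ^ 2 = a ^ 2 ∧ c ^ 2 - 4 * b ^ 2 = d ^ 2 ∧
      (b ∣ n ∨ b ∣ m) := by
    have main : ∀ r s : ℤ, r % 2 = 0 → s % 2 = 1 → r * s = 2 * (m * n) →
        r ^ 2 + s ^ 2 = m ^ 2 + n ^ 2 → ∃ a b c d : ℤ, c ^ 2 - b ^ 2 = a ^ 2 ∧
        c ^ 2 - 4 * b ^ 2 = d ^ 2 ∧ (b ∣ n ∨ b ∣ m) := by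
      intro r s hr hs e1 e2
      obtain ⟨t, rfl⟩ := Int.dvd_of_emod_eq_zero hr
      rcases hm5 with ⟨h1, h2⟩ | ⟨h1, h2⟩
      · obtain ⟨a, b, c, d, i, j, k⟩ := core t s n m (by linarith) (by linarith) cmn.symm hs h2 h1
          (by rwa [mul_comm])
        exact ⟨a, b, c, d, i, j, Or.inr k⟩
      · obtain ⟨a, b, c, d, i, j, k⟩ := core t s m n (by linarith) (by linarith) cmn hs h1 h2 hmn0
        exact ⟨a, b, c, d, i, j, Or.inl k⟩
    rcases hr5 with ⟨h1, h2⟩ | ⟨h1, h2⟩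
    · exact main r s h1 h2 (by linarith) (by linarith)
    · exact main s r h2 h1 (by linarith) (by linarith)
  obtain ⟨a, b, c, d, e1, e2, hb⟩ := fin
  have hm0 := left_ne_zero_of_mul hmn0
  have hn0 := right_ne_zero_of_mul hmn0
  have hb2 : 2 * b ∣ y := by
    rw [hm2]
    rcases hb with h | h
    · rw [mul_right_comm]; exact (mul_dvd_mul_left 2 h).mul_right m
    · exact (mul_dvd_mul_left 2 h).mul_right n
  have hb0 : b ≠ 0 := by
    rintro rfl
    rcases hb with h | h
    · exact hn0 (zero_dvd_iff.1 h)
    · exact hm0 (zero_dvd_iff.1 h)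
  have := Int.natAbs_le_of_dvd_ne_zero hb2 hy0
  exact hb0 (ih b.natAbs (by omega) c b a d rfl e1 e2)

lemma quartic (X D Y : ℤ) (hD : D ≠ 0)
    (h : (X ^ 2 - 8 * D ^ 2) * (X ^ 2 - 9 * D ^ 2) = Y ^ 2) : Y = 0 := by
  by_contra hY
  have hg := Int.gcd_pos_of_ne_zero_right X hD
  obtain ⟨x, d, hxd, hx, hd⟩ := Int.exists_gcd_one hg
  generalize (X.gcd D) = g at *
  have hg0 : (g : ℤ) ≠ 0 := by exact_mod_cast hg.ne'
  have gY : (g : ℤ) ^ 2 ∣ Y := by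
    rw [← Int.pow_dvd_pow_iff (n := 2) two_ne_zero]
    exact ⟨(x ^ 2 - 8 * d ^ 2) * (x ^ 2 - 9 * d ^ 2), by rw [← h, hx, hd]; ring⟩
  obtain ⟨y, rfl⟩ := gY
  have hy : (x ^ 2 - 8 * d ^ 2) * (x ^ 2 - 9 * d ^ 2) = y ^ 2 := by
    apply mul_left_cancel₀ (pow_ne_zero 4 hg0)
    rw [hx, hd] at h; linear_combination h
  have hy0 : y ≠ 0 := right_ne_zero_of_mul hY
  have hd0 : d ≠ 0 := by rintro rfl; simp at hd; exact hD hd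
  have cxd := Int.isCoprime_iff_gcd_eq_one.2 hxd
  have cop : IsCoprime (x ^ 2 - 8 * d ^ 2) (x ^ 2 - 9 * d ^ 2) := by
    obtain ⟨p, q, hpq⟩ := cxd.pow (m := 2) (n := 2)
    exact ⟨9 * p + q, -8 * p - q, by linear_combination hpq⟩
  obtain ⟨z, hz⟩ := Int.sq_of_isCoprime cop hy
  obtain ⟨p, hp⟩ := Int.sq_of_isCoprime cop.symm (by rw [mul_comm]; exact hy)
  have ypos : 0 < y ^ 2 := by positivity
  rcases hz with hz | hz <;> rcases hp with hp | hp
  · have e := descent_s9 _ (z * x) (2 * (p * d)) (p ^ 2 + 3 * d ^ 2) (p ^ 2 - 3 * d ^ 2) rfl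
      (by
        have e1 : x ^ 2 = p ^ 2 + 9 * d ^ 2 := by linarith
        have e2 : z ^ 2 = p ^ 2 + d ^ 2 := by linarith
        rw [mul_pow, e1, e2]; ring)
      (by
        have e1 : x ^ 2 = p ^ 2 + 9 * d ^ 2 := by linarith
        have e2 : z ^ 2 = p ^ 2 + d ^ 2 := by linarith
        rw [mul_pow, e1, e2]; ring)
    have : p = 0 := by simpa [hd0] using e
    rw [hp, this] at hy
    apply hy0
    simpa using hy.symm
  · rw [hz, hp] at hy
    nlinarith [mul_nonneg (sq_nonneg z) (sq_nonneg p)]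
  · rw [hz, hp] at hy
    nlinarith [mul_nonneg (sq_nonneg z) (sq_nonneg p)]
  · have q (t : ℤ) : (t % 3 = 0 ∧ t ^ 2 % 3 = 0) ∨ t ^ 2 % 3 = 1 := by
      have : t % 3 = 0 ∨ t % 3 = 1 ∨ t % 3 = 2 := by omega
      rcases this with h | h | h <;> simp [pow_two, Int.mul_emod, h]
    have h3 : x % 3 = 0 ∧ d % 3 = 0 := by
      have := q x
      have := q d
      have := q z
      have := q p
      omega
    have := cxd.isUnit_of_dvd' (Int.dvd_of_emod_eq_zero h3.1) (Int.dvd_of_emod_eq_zero h3.2)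
    exact absurd this (by decide)

theorem star_no_solution (a u : ℤ) (ha : 0 < a) (hu : 0 < u)
    (hco : IsCoprime a u) (hne : a ≠ u) :
    ¬ ∃ X : ℤ, (X ^ 2 - 8 * (u ^ 2 - a ^ 2) ^ 2) * (X ^ 2 - 9 * (u ^ 2 - a ^ 2) ^ 2) =
      4 * a ^ 2 * u ^ 2 * X ^ 2 := by
  rintro ⟨X, h⟩
  have hD : u ^ 2 - a ^ 2 ≠ 0 := by
    intro h
    have : (u - a) * (u + a) = 0 := by linear_combination h
    rcases mul_eq_zero.1 this with h | h
    · exact hne (by linarith)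
    · linarith
  have e := quartic X (u ^ 2 - a ^ 2) (2 * a * u * X) hD (by rw [h]; ring)
  have hX : X = 0 := by simpa [ha.ne', hu.ne'] using e
  subst hX
  have : 0 < (u ^ 2 - a ^ 2) ^ 4 := by positivity
  nlinarith
end

section
/- Let a, u be coprime positive integers with a ≠ u and Δ = u² − a², and let k = ν₃(au) ≥ 1 (the 3-adic valuation of au). Then there is no integer X with ν₃(X) = 1 and ν₃((X/3)² − Δ²) = 2k satisfying the equation (X² − 8Δ²)(X² − 9Δ²) = 4a²u²X². -/
theorem aux_cv {x y x' y' : ℤ} (h : IsCoprime x y) (h1 : x = x') (h2 : y = y') :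
    IsCoprime x' y' := by
  subst h1 h2; exact h

theorem aux_sq4_s10 (c : ℤ) (h : ¬ 2 ∣ c) : c ^ 2 % 4 = 1 := by
  have : c % 4 = 1 ∨ c % 4 = 3 := by omega
  rcases this with h | h <;> simp [pow_two, Int.mul_emod, h]

theorem aux_sq3 (c : ℤ) (h : ¬ 3 ∣ c) : c ^ 2 % 3 = 1 := by
  have : c % 3 = 1 ∨ c % 3 = 2 := by omega
  rcases this with h | h <;> simp [pow_two, Int.mul_emod, h]

theorem aux_sq4' (c : ℤ) : c ^ 2 % 4 = 0 ∨ c ^ 2 % 4 = 1 := by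
  have : c % 4 = 0 ∨ c % 4 = 1 ∨ c % 4 = 2 ∨ c % 4 = 3 := by omega
  rcases this with h | h | h | h <;> simp [pow_two, Int.mul_emod, h]

theorem aux_two_not_dvd {x y : ℤ} (hc : IsCoprime x y) (hx : 2 ∣ x) : ¬ 2 ∣ y := by
  intro hy
  have := hc.isUnit_of_dvd' hx hy
  rw [Int.isUnit_iff] at this
  omega

theorem aux_three_not_dvd {x y : ℤ} (hc : IsCoprime x y) (hx : 3 ∣ x) : ¬ 3 ∣ y := by
  intro hy
  have := hc.isUnit_of_dvd' hx hy
  rw [Int.isUnit_iff] at this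
  omega

theorem aux_core (x y z w : ℤ) (hne : x * y ≠ 0) (h1 : x * y = z * w)
    (h2 : 4 * x ^ 2 + y ^ 2 = z ^ 2 + w ^ 2) (hc : IsCoprime (2 * x) y) :
    ∃ A B e f : ℤ, A ≠ 0 ∧ IsCoprime A B ∧ f ^ 2 + A ^ 2 = B ^ 2 ∧
      e ^ 2 + 4 * A ^ 2 = B ^ 2 ∧ A ∣ x * y := by
  have hx : x ≠ 0 := left_ne_zero_of_mul hne
  have hy : y ≠ 0 := right_ne_zero_of_mul hne
  have hg : 0 < Int.gcd x z := Int.gcd_pos_of_ne_zero_left _ hx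
  obtain ⟨b, hb⟩ := Int.gcd_dvd_left x z
  obtain ⟨c, hcc⟩ := Int.gcd_dvd_right x z
  have hbc : IsCoprime b c := by
    have := Int.gcd_div_gcd_div_gcd hg
    rw [Int.isCoprime_iff_gcd_eq_one]
    have hg' : ((Int.gcd x z : ℕ) : ℤ) ≠ 0 := by positivity
    rwa [Int.ediv_eq_of_eq_mul_right hg' hb, Int.ediv_eq_of_eq_mul_right hg' hcc] at this
  have ha : ((Int.gcd x z : ℕ) : ℤ) ≠ 0 := by positivity
  generalize ((Int.gcd x z : ℕ) : ℤ) = a at *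
  subst hb hcc
  have h3 : b * y = c * w := by
    apply mul_left_cancel₀ ha; linear_combination h1
  obtain ⟨d, rfl⟩ : b ∣ w := hbc.dvd_of_dvd_mul_left ⟨y, h3.symm⟩
  have hb0 : b ≠ 0 := right_ne_zero_of_mul hx
  have hyd : y = c * d := by
    apply mul_left_cancel₀ hb0; linear_combination h3
  subst hyd
  have hodd := aux_two_not_dvd hc ⟨_, rfl⟩
  have hc2 : ¬ 2 ∣ c := fun h => hodd (h.mul_right _)
  have hd2 : ¬ 2 ∣ d := fun h => hodd (h.mul_left _)
  have had : IsCoprime a d := by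
    have := hc.of_mul_left_right
    exact this.of_mul_left_left.of_mul_right_right
  have h4 : a ^ 2 * (4 * b ^ 2 - c ^ 2) = d ^ 2 * (b ^ 2 - c ^ 2) := by linear_combination h2
  obtain ⟨k, hk⟩ : a ^ 2 ∣ b ^ 2 - c ^ 2 :=
    (had.pow : IsCoprime (a ^ 2) (d ^ 2)).dvd_of_dvd_mul_left ⟨_, h4.symm⟩
  have hk2 : 4 * b ^ 2 - c ^ 2 = d ^ 2 * k := by
    apply mul_left_cancel₀ (pow_ne_zero 2 ha); rw [h4, hk]; ring
  have hk3 : k ∣ 3 := by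
    obtain ⟨p, q, hpq⟩ := (hbc.pow : IsCoprime (b ^ 2) (c ^ 2))
    refine ⟨p * (d ^ 2 - a ^ 2) + q * (d ^ 2 - 4 * a ^ 2), ?_⟩
    linear_combination (-3) * hpq + (p + q) * hk2 - (p + 4 * q) * hk
  have hkk : k = 1 ∨ k = -1 ∨ k = 3 ∨ k = -3 := by
    have h5 := Int.le_of_dvd (by norm_num) hk3
    have h6 := Int.le_of_dvd (by norm_num) (neg_dvd.mpr hk3)
    have : k ≠ 0 := by rintro rfl; simp at hk3
    have h7 : -3 ≤ k := by linarith
    clear hk hk2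
    interval_cases k <;> first | omega | (exact absurd hk3 (by decide))
  have c4 := aux_sq4_s10 c hc2
  have d4 := aux_sq4_s10 d hd2
  rcases hkk with rfl | rfl | rfl | rfl
  · omega
  · exact ⟨b, c, d, a, hb0, hbc, by linarith, by linarith, ⟨a * (c * d), by ring⟩⟩
  · exact ⟨a, d, c, b, ha, had, by linarith, by linarith, ⟨b * (c * d), by ring⟩⟩
  · omega

theorem aux_pos_sq {x y e : ℤ} (hc : IsCoprime x y) (h : x * y = e ^ 2) (hs : 0 < x + y) :
    ∃ p q : ℤ, x = p ^ 2 ∧ y = q ^ 2 := by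
  have h1 := Int.sq_of_isCoprime hc h
  have h2 := Int.sq_of_isCoprime hc.symm (by rw [mul_comm]; exact h)
  obtain ⟨p, hp⟩ := h1
  obtain ⟨q, hq⟩ := h2
  have hx : 0 ≤ x := by nlinarith [sq_nonneg e]
  have hy : 0 ≤ y := by nlinarith [sq_nonneg e]
  refine ⟨p, q, ?_, ?_⟩
  · rcases hp with hp | hp
    · exact hp
    · nlinarith [sq_nonneg p]
  · rcases hq with hq | hq
    · exact hq
    · nlinarith [sq_nonneg q]

theorem aux_sys (n : ℕ) : ∀ A B e f : ℤ, A.natAbs ≤ n → A ≠ 0 → IsCoprime A B →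
    f ^ 2 + A ^ 2 = B ^ 2 → e ^ 2 + 4 * A ^ 2 = B ^ 2 → False := by
  induction n with
  | zero => intro A B e f h h0; omega
  | succ n ih =>
    intro A B e f hn hA hc h1 h2
    wlog hB : 0 < B generalizing B
    · have hB0 : B ≠ 0 := by
        rintro rfl
        have : 0 < A ^ 2 := by positivity
        nlinarith [sq_nonneg f]
      exact this (-B) hc.neg_right (by rw [h1]; ring) (by rw [h2]; ring) (by omega)
    have hBodd : ¬ 2 ∣ B := by
      intro hd
      have hA2 := aux_sq4_s10 A (aux_two_not_dvd hc.symm hd)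
      obtain ⟨t, rfl⟩ := hd
      have : (2 * t) ^ 2 % 4 = 0 := by ring_nf; omega
      have := aux_sq4' f
      omega
    have hB2 : IsCoprime (2 : ℤ) B :=
      (Int.prime_two.coprime_iff_not_dvd).2 hBodd
    have hAB : IsCoprime (2 * A) B := hB2.mul_left hc
    have c1 : IsCoprime (B - 2 * A) (B + 2 * A) := by
      have h : IsCoprime (2 * (2 * A)) (B - 2 * A) := by
        have := (hB2.mul_left hAB).add_mul_left_right 0
        refine IsCoprime.mul_left ?_ ?_
        · have := hB2.add_mul_left_right (-A)
          exact aux_cv this (by ring) (by ring)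
        · have := hAB.add_mul_left_right (-1)
          exact aux_cv this (by ring) (by ring)
      have := h.symm.add_mul_left_right 1
      exact aux_cv this (by ring) (by ring)
    have c2 : IsCoprime (B - A) (B + A) := by
      have hAodd : 2 ∣ A := by
        by_contra hA2
        have e2 : e % 8 = 0 ∨ e % 8 = 1 ∨ e % 8 = 2 ∨ e % 8 = 3 ∨ e % 8 = 4 ∨ e % 8 = 5 ∨ e % 8 = 6 ∨ e % 8 = 7 := by omega
        have a4 := aux_sq4_s10 A hA2
        have b4 := aux_sq4_s10 B hBodd
        have := aux_sq4' f
        obtain ⟨t, ht⟩ : ∃ t, B = 2 * t + 1 := ⟨B / 2, by omega⟩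
        have b8 : B ^ 2 % 8 = 1 := by
          have : B % 8 = 1 ∨ B % 8 = 3 ∨ B % 8 = 5 ∨ B % 8 = 7 := by omega
          rcases this with h | h | h | h <;> simp [pow_two, Int.mul_emod, h]
        have e8 : e ^ 2 % 8 = 0 ∨ e ^ 2 % 8 = 1 ∨ e ^ 2 % 8 = 4 := by
          rcases e2 with h | h | h | h | h | h | h | h <;> simp [pow_two, Int.mul_emod, h]
        omega
      have h : IsCoprime (2 * A) (B - A) := by
        refine IsCoprime.mul_left ?_ ?_
        · refine (Int.prime_two.coprime_iff_not_dvd).2 ?_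
          omega
        · have := hc.add_mul_left_right (-1)
          exact aux_cv this (by ring) (by ring)
      have := h.symm.add_mul_left_right 1
      exact aux_cv this (by ring) (by ring)
    obtain ⟨P, Q, hP, hQ⟩ := aux_pos_sq (e := e) c1 (by linear_combination -h2) (by linarith)
    obtain ⟨M, N, hM, hN⟩ := aux_pos_sq (e := f) c2 (by linear_combination -h1) (by linarith)
    have hPo : ¬ 2 ∣ P := by
      rintro ⟨t, rfl⟩; apply hBodd; exact ⟨2 * t ^ 2 + A, by linear_combination hP⟩
    have hQo : ¬ 2 ∣ Q := by
      rintro ⟨t, rfl⟩; apply hBodd; exact ⟨2 * t ^ 2 - A, by linear_combination hQ⟩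
    have m4 := aux_sq4' M
    have n4 := aux_sq4' N
    have p4 := aux_sq4_s10 P hPo
    have q4 := aux_sq4_s10 Q hQo
    have hMo : ¬ 2 ∣ M := by
      rintro ⟨t, rfl⟩
      have : (2 * t) ^ 2 % 4 = 0 := by ring_nf; omega
      omega
    have hNo : ¬ 2 ∣ N := by
      rintro ⟨t, rfl⟩
      have : (2 * t) ^ 2 % 4 = 0 := by ring_nf; omega
      omega
    obtain ⟨α, hα⟩ : ∃ α, Q + P = 2 * α := ⟨(Q + P) / 2, by omega⟩
    obtain ⟨β, hβ⟩ : ∃ β, Q - P = 2 * β := ⟨(Q - P) / 2, by omega⟩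
    obtain ⟨γ, hγ⟩ : ∃ α, N + M = 2 * α := ⟨(N + M) / 2, by omega⟩
    obtain ⟨δ, hδ⟩ : ∃ β, N - M = 2 * β := ⟨(N - M) / 2, by omega⟩
    obtain rfl : Q = α + β := by omega
    obtain rfl : P = α - β := by omega
    obtain rfl : N = γ + δ := by omega
    obtain rfl : M = γ - δ := by omega
    have k1 : α * β = A := by linarith
    have k2 : 2 * (γ * δ) = A := by linarith
    have k3 : α ^ 2 + β ^ 2 = γ ^ 2 + δ ^ 2 := by linarith
    have k4 : α ^ 2 + β ^ 2 = B := by linarith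
    have hab : IsCoprime α β := by
      rw [← k1, ← k4] at hc
      have h := hc.of_mul_left_left
      have h' : IsCoprime α (β ^ 2) := by
        have := h.add_mul_left_right (-α)
        exact aux_cv this (by ring) (by ring)
      exact (IsCoprime.pow_right_iff (by norm_num)).1 h'
    have fin : ∀ x y : ℤ, 2 * x * y = A → IsCoprime (2 * x) y →
        (2 * x) ^ 2 + y ^ 2 = γ ^ 2 + δ ^ 2 → False := by
      intro x y hxy hcxy hs
      have hne : x * y ≠ 0 := by
        intro h; apply hA; rw [← hxy, mul_assoc, h, mul_zero]
      obtain ⟨A', B', e', f', hA', hc', g1, g2, hd⟩ :=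
        aux_core x y γ δ hne (by linarith) (by linear_combination hs) hcxy
      refine ih A' B' e' f' ?_ hA' hc' g1 g2
      have l1 := Int.natAbs_le_of_dvd_ne_zero hd hne
      have l2 : A.natAbs = 2 * (x * y).natAbs := by
        rw [← hxy, mul_assoc, Int.natAbs_mul]; rfl
      omega
    have hev : 2 ∣ α * β := by rw [k1, ← k2]; exact ⟨_, rfl⟩
    rcases Int.prime_two.dvd_or_dvd hev with ⟨x, rfl⟩ | ⟨x, rfl⟩
    · exact fin x β k1 hab k3
    · exact fin x α (by linarith) hab.symm (by linarith)

theorem aux_factor {U V s : ℤ} (hc : IsCoprime (2 * U) V) (h : U * V = s ^ 2) (hs : s ≠ 0) :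
    ∃ A B : ℤ, A ^ 2 * B ^ 2 = s ^ 2 ∧ (2 * U - V) ^ 2 = (2 * A ^ 2 - B ^ 2) ^ 2 ∧
      IsCoprime A B ∧ ¬ 2 ∣ B := by
  have hc' : IsCoprime U V := hc.of_mul_left_right
  obtain ⟨A, hA⟩ := Int.sq_of_isCoprime hc' h
  obtain ⟨B, hB⟩ := Int.sq_of_isCoprime hc'.symm (by rw [mul_comm]; exact h)
  have hp : 0 < s ^ 2 := by positivity
  have hV := aux_two_not_dvd hc ⟨_, rfl⟩
  have hB2 : ¬ 2 ∣ B := by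
    intro hd; apply hV
    have : 2 ∣ B ^ 2 := dvd_pow hd (by norm_num)
    rcases hB with rfl | rfl
    · exact this
    · exact this.neg_right
  have hco : IsCoprime A B := by
    have : IsCoprime (A ^ 2) (B ^ 2) := by
      rcases hA with rfl | rfl <;> rcases hB with rfl | rfl <;>
        simpa [IsCoprime.neg_left_iff, IsCoprime.neg_right_iff] using hc'
    exact (IsCoprime.pow_iff (by norm_num) (by norm_num)).1 this
  refine ⟨A, B, ?_, ?_, hco, hB2⟩
  · rcases hA with rfl | rfl <;> rcases hB with rfl | rfl <;> nlinarith [sq_nonneg (A * B)]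
  · rcases hA with rfl | rfl <;> rcases hB with rfl | rfl
    · ring
    · nlinarith [sq_nonneg (A * B)]
    · nlinarith [sq_nonneg (A * B)]
    · ring

theorem aux_conc (d s y r : ℤ) (hd : d ≠ 0) (hs : s ≠ 0) (hc : IsCoprime d s) (h3 : 3 ∣ s)
    (h1 : d ^ 2 + s ^ 2 = y ^ 2) (h2 : d ^ 2 + 9 * s ^ 2 = r ^ 2) : False := by
  have d4 := aux_sq4' d
  have s4 := aux_sq4' s
  have hyo : ¬ 2 ∣ y := by
    rintro ⟨t, rfl⟩
    have : (2 * t) ^ 2 % 4 = 0 := by ring_nf; omega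
    by_cases h : 2 ∣ d
    · have := aux_sq4_s10 s (aux_two_not_dvd hc h)
      omega
    · have := aux_sq4_s10 d h
      omega
  have hro : ¬ 2 ∣ r := by
    rintro ⟨t, rfl⟩
    have : (2 * t) ^ 2 % 4 = 0 := by ring_nf; omega
    have := aux_sq4_s10 y hyo
    omega
  obtain ⟨U, hU⟩ : ∃ α, r - y = 2 * α := ⟨(r - y) / 2, by omega⟩
  obtain ⟨V, hV⟩ : ∃ α, r + y = 2 * α := ⟨(r + y) / 2, by omega⟩
  obtain rfl : y = V - U := by omega
  obtain rfl : r = V + U := by omega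
  have hUV : U * V = 2 * s ^ 2 := by linarith
  have hys : IsCoprime (V - U) s := by
    have : IsCoprime (d ^ 2) s := hc.pow_left
    have := this.add_mul_left_left s
    have h' : IsCoprime ((V - U) ^ 2) s := by
      exact aux_cv this (by rw [← h1]; ring) rfl
    exact (IsCoprime.pow_left_iff (by norm_num)).1 h'
  have hy2 : IsCoprime (V - U) 2 := ((Int.prime_two.coprime_iff_not_dvd).2 hyo).symm
  have hcUV : IsCoprime U V := by
    have h : IsCoprime (V - U) (U * V) := by
      rw [hUV]; exact hy2.mul_right hys.pow_right
    have := h.of_mul_right_left.symm.add_mul_left_right 1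
    exact aux_cv this (by ring) (by ring)
  obtain ⟨A, B, k1, k2, hAB, hB2⟩ : ∃ A B : ℤ, A ^ 2 * B ^ 2 = s ^ 2 ∧
      (V - U) ^ 2 = (2 * A ^ 2 - B ^ 2) ^ 2 ∧ IsCoprime A B ∧ ¬ 2 ∣ B := by
    rcases Int.prime_two.dvd_or_dvd (⟨_, hUV⟩ : 2 ∣ U * V) with ⟨x, rfl⟩ | ⟨x, rfl⟩
    · obtain ⟨A, B, q1, q2, q3, q4⟩ := aux_factor (s := s) hcUV (by linarith) hs
      exact ⟨A, B, q1, by rw [← q2]; ring, q3, q4⟩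
    · obtain ⟨A, B, q1, q2, q3, q4⟩ := aux_factor (s := s) hcUV.symm (by linarith) hs
      exact ⟨A, B, q1, by rw [← q2], q3, q4⟩
  have hprod : (4 * A ^ 2 - B ^ 2) * (A ^ 2 - B ^ 2) = d ^ 2 := by
    linear_combination -k2 + -h1 - k1
  have hA0 : A ≠ 0 := by
    rintro rfl; apply hs; apply pow_eq_zero_iff (two_ne_zero) |>.1; rw [← k1]; ring
  have h3n : ¬ 3 ∣ A ^ 2 - B ^ 2 := by
    intro hdv
    have hAB3 : 3 ∣ A ^ 2 * B ^ 2 := by rw [k1]; exact dvd_pow h3 (by norm_num)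
    rcases Int.prime_three.dvd_or_dvd hAB3 with h | h
    · have q := Int.prime_three.dvd_of_dvd_pow h
      have := aux_sq3 B (aux_three_not_dvd hAB q)
      omega
    · have q := Int.prime_three.dvd_of_dvd_pow h
      have := aux_sq3 A (aux_three_not_dvd hAB.symm q)
      omega
  have hcc : IsCoprime (4 * A ^ 2 - B ^ 2) (A ^ 2 - B ^ 2) := by
    have q1 : IsCoprime (3 : ℤ) (A ^ 2 - B ^ 2) := (Int.prime_three.coprime_iff_not_dvd).2 h3n
    have q2 : IsCoprime (A ^ 2) (A ^ 2 - B ^ 2) := by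
      have : IsCoprime (A ^ 2) (B ^ 2) := hAB.pow
      have := this.neg_right.add_mul_left_right 1
      exact aux_cv this (by ring) (by ring)
    have := (q1.mul_left q2).add_mul_left_left 1
    exact aux_cv this (by ring) (by ring)
  obtain ⟨e, he⟩ := Int.sq_of_isCoprime hcc hprod
  obtain ⟨f, hf⟩ := Int.sq_of_isCoprime hcc.symm (by rw [mul_comm]; exact hprod)
  have b4 := aux_sq4_s10 B hB2
  have e4 := aux_sq4' e
  rcases he with he | he
  · omega
  rcases hf with hf | hf
  · have : 0 < d ^ 2 := by positivity
    rw [he, hf] at hprod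
    nlinarith [sq_nonneg (e * f)]
  · exact aux_sys _ A B e f le_rfl hA0 hAB (by linarith) (by linarith)

theorem star_no_solution_edge_case (a u : ℤ) (ha : 0 < a) (hu : 0 < u)
    (hco : IsCoprime a u) (hne : a ≠ u) (k : ℕ)
    (hk : k = padicValInt 3 (a * u)) (hk1 : 1 ≤ k) :
    ¬ ∃ X : ℤ, padicValInt 3 X = 1 ∧
      padicValInt 3 ((X / 3) ^ 2 - (u ^ 2 - a ^ 2) ^ 2) = 2 * k ∧
      (X ^ 2 - 8 * (u ^ 2 - a ^ 2) ^ 2) * (X ^ 2 - 9 * (u ^ 2 - a ^ 2) ^ 2) =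
        4 * a ^ 2 * u ^ 2 * X ^ 2 := by
  rintro ⟨X, hX1, -, hE⟩
  have dv : ∀ z : ℤ, 1 ≤ padicValInt 3 z → (3 : ℤ) ∣ z := by
    intro z hz
    by_contra h
    have := padicValInt.eq_zero_of_not_dvd (p := 3) (z := z) (by exact_mod_cast h)
    omega
  have hX0 : X ≠ 0 := by rintro rfl; simp at hX1
  obtain ⟨Y, rfl⟩ := dv X (by omega)
  have hau : (3 : ℤ) ∣ a * u := dv _ (by omega)
  have hY0 : Y ≠ 0 := right_ne_zero_of_mul hX0
  have hD3 : ¬ (3 : ℤ) ∣ u ^ 2 - a ^ 2 := by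
    intro hdv
    rcases Int.prime_three.dvd_or_dvd hau with h | h
    · have := aux_sq3 u (aux_three_not_dvd hco h)
      have : (3 : ℤ) ∣ a ^ 2 := dvd_pow h (by norm_num)
      omega
    · have := aux_sq3 a (aux_three_not_dvd hco.symm h)
      have : (3 : ℤ) ∣ u ^ 2 := dvd_pow h (by norm_num)
      omega
  generalize u ^ 2 - a ^ 2 = D at *
  have hE' : (9 * Y ^ 2 - 8 * D ^ 2) * (Y ^ 2 - D ^ 2) = (2 * (a * u) * Y) ^ 2 := by linarith
  have hD0 : D ≠ 0 := by rintro rfl; simp at hD3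
  have hg : 0 < Int.gcd Y D := Int.gcd_pos_of_ne_zero_left _ hY0
  obtain ⟨y, hy⟩ := Int.gcd_dvd_left Y D
  obtain ⟨d, hd⟩ := Int.gcd_dvd_right Y D
  have hg0 : ((Int.gcd Y D : ℕ) : ℤ) ≠ 0 := by positivity
  have hyd : IsCoprime y d := by
    have := Int.gcd_div_gcd_div_gcd hg
    rw [Int.isCoprime_iff_gcd_eq_one]
    rwa [Int.ediv_eq_of_eq_mul_right hg0 hy, Int.ediv_eq_of_eq_mul_right hg0 hd] at this
  generalize ((Int.gcd Y D : ℕ) : ℤ) = g at *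
  subst hy hd
  have hd0 : d ≠ 0 := right_ne_zero_of_mul hD0
  have hy0 : y ≠ 0 := right_ne_zero_of_mul hY0
  have hd3 : ¬ 3 ∣ d := fun h => hD3 (h.mul_left _)
  have hg3 : ¬ 3 ∣ g := fun h => hD3 (h.mul_right _)
  have hE2 : g ^ 2 * ((9 * y ^ 2 - 8 * d ^ 2) * (y ^ 2 - d ^ 2)) = (2 * (a * u) * y) ^ 2 := by
    apply mul_left_cancel₀ (pow_ne_zero 2 hg0); linear_combination hE'
  obtain ⟨z, hz⟩ : g ∣ 2 * (a * u) * y := by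
    rw [← Int.pow_dvd_pow_iff (two_ne_zero)]; exact ⟨_, hE2.symm⟩
  have hzz : (9 * y ^ 2 - 8 * d ^ 2) * (y ^ 2 - d ^ 2) = z ^ 2 := by
    apply mul_left_cancel₀ (pow_ne_zero 2 hg0); rw [hE2, hz]; ring
  have hz0 : z ≠ 0 := by
    rintro rfl
    have : 2 * (a * u) * y ≠ 0 := by positivity
    apply this; rw [hz]; ring
  have hz3 : 3 ∣ z := by
    have : 3 ∣ g * z := by rw [← hz]; exact (hau.mul_left 2).mul_right y
    exact (Int.prime_three.dvd_or_dvd this).resolve_left hg3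
  have hcc : IsCoprime (9 * y ^ 2 - 8 * d ^ 2) (y ^ 2 - d ^ 2) := by
    have : IsCoprime (y ^ 2) (d ^ 2) := hyd.pow
    have := this.neg_right.add_mul_left_right 1
    have := this.add_mul_left_left 8
    exact aux_cv this (by ring) (by ring)
  obtain ⟨r, hr⟩ := Int.sq_of_isCoprime hcc hzz
  obtain ⟨s, hs⟩ := Int.sq_of_isCoprime hcc.symm (by rw [mul_comm]; exact hzz)
  have d3 := aux_sq3 d hd3
  have hr3 : ¬ 3 ∣ r := by
    intro h
    have : (3 : ℤ) ∣ r ^ 2 := dvd_pow h (by norm_num)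
    omega
  have r3 := aux_sq3 r hr3
  have hr' : 9 * y ^ 2 - 8 * d ^ 2 = r ^ 2 := by
    rcases hr with hr | hr
    · exact hr
    · omega
  have hzp : 0 < z ^ 2 := by positivity
  have hs' : y ^ 2 - d ^ 2 = s ^ 2 := by
    rcases hs with hs | hs
    · exact hs
    · rw [hr', hs] at hzz; nlinarith [sq_nonneg (r * s)]
  rw [hr', hs'] at hzz
  have hs0 : s ≠ 0 := by rintro rfl; rw [← hzz] at hzp; simp at hzp
  have hs3 : 3 ∣ s := by
    have : 3 ∣ r ^ 2 * s ^ 2 := by rw [hzz]; exact dvd_pow hz3 (by norm_num)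
    rcases Int.prime_three.dvd_or_dvd this with h | h
    · exact absurd (Int.prime_three.dvd_of_dvd_pow h) hr3
    · exact Int.prime_three.dvd_of_dvd_pow h
  have hds : IsCoprime d s := by
    have : IsCoprime d (y ^ 2) := hyd.symm.pow_right
    have := this.add_mul_left_right (-d)
    have h' : IsCoprime d (s ^ 2) := by
      exact aux_cv this rfl (by rw [← hs']; ring)
    exact (IsCoprime.pow_right_iff (by norm_num)).1 h'
  exact aux_conc d s y r hd0 hs0 hds hs3 (by linarith) (by linarith)
end

section
/- Let Δ and q be nonzero integers, and set b = 6Δq − 2q² and c = Δ²q² − 6Δq³ + q⁴. Then the quadratic equation A₀² + b·A₀ + c = 0 has no integer solution A₀. -/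
theorem quadratic_in_A0_no_integer_root (Δ q : ℤ) (hΔ : Δ ≠ 0) (hq : q ≠ 0) :
    ¬ ∃ A₀ : ℤ, A₀ ^ 2 + (6 * Δ * q - 2 * q ^ 2) * A₀
      + (Δ ^ 2 * q ^ 2 - 6 * Δ * q ^ 3 + q ^ 4) = 0 := by
  rintro ⟨A, h⟩
  have hy : 2 * (Δ * q) ≠ 0 := mul_ne_zero two_ne_zero (mul_ne_zero hΔ hq)
  have h2 : (A - q ^ 2 + 3 * (Δ * q)) ^ 2 = 2 * (2 * (Δ * q)) ^ 2 := by
    linear_combination h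
  generalize A - q ^ 2 + 3 * (Δ * q) = m at h2
  generalize 2 * (Δ * q) = n at h2 hy
  have hn : (n : ℝ) ≠ 0 := by exact_mod_cast hy
  have h3 : (m : ℝ) ^ 2 = 2 * (n : ℝ) ^ 2 := by exact_mod_cast h2
  apply irrational_sqrt_two
  refine ⟨|(m : ℚ) / n|, ?_⟩
  push_cast
  rw [← Real.sqrt_sq_eq_abs, div_pow, h3]
  congr 1
  field_simp
end

section
/- For any coprime positive integers a and u with a ≠ u, the cuboid polynomial P_{a,u}(t) does not factor in ℤ[t] as a product of a polynomial of degree 2 and a polynomial of degree 6. -/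
open Polynomial

/-- four numbers lemma -/
lemma cub_four (p q r s : ℤ) (h : p * q = r * s) (hp : p ≠ 0) :
    ∃ α β γ δ : ℤ, p = α * β ∧ q = γ * δ ∧ r = α * γ ∧ s = β * δ ∧ IsCoprime β γ := by
  obtain ⟨β, hβ⟩ := Int.gcd_dvd_left p r
  obtain ⟨γ, hγ⟩ := Int.gcd_dvd_right p r
  have hg : (Int.gcd p r : ℤ) ≠ 0 := by
    intro h0
    rw [h0] at hβ
    exact hp (by simpa using hβ)
  set α : ℤ := (Int.gcd p r : ℤ) with hα
  have hco : IsCoprime β γ := by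
    have hb := Int.gcd_eq_gcd_ab p r
    refine ⟨Int.gcdA p r, Int.gcdB p r, ?_⟩
    apply mul_left_cancel₀ hg
    rw [← hα] at hb
    linear_combination -hb - Int.gcdA p r * hβ - Int.gcdB p r * hγ
  have h1 : β * q = γ * s := by
    apply mul_left_cancel₀ hg
    linear_combination h - q * hβ + s * hγ
  have h2 : γ ∣ q := hco.symm.dvd_of_dvd_mul_left ⟨s, h1⟩
  obtain ⟨δ, hδ⟩ := h2
  have hβ0 : β ≠ 0 := by rintro rfl; exact hp (by simpa using hβ)
  by_cases hγ0 : γ = 0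
  · subst hγ0
    have hbu : IsUnit β := isCoprime_zero_right.mp hco
    have hq : q = 0 := by simpa using hδ
    rcases Int.isUnit_iff.mp hbu with rfl | rfl
    · exact ⟨α, 1, 0, s, hβ, by simp [hq], hγ, by simp, hco⟩
    · exact ⟨α, -1, 0, -s, hβ, by simp [hq], hγ, by simp, hco⟩
  · refine ⟨α, β, γ, δ, hβ, hδ, hγ, ?_, hco⟩
    apply mul_left_cancel₀ hγ0
    linear_combination -h1 + β * hδ

lemma cub_step (p q r s : ℤ) (h1 : p * q = r * s) (h2 : 4 * p ^ 2 + q ^ 2 = r ^ 2 + s ^ 2)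
    (hp : p ≠ 0) (hq : q % 2 = 1) (hrs : IsCoprime r s) (hr : r ≠ 0) (hs : s ≠ 0) :
    ∃ b e a c : ℤ, b ^ 2 + 3 * e ^ 2 = a ^ 2 ∧ b ^ 2 + 4 * e ^ 2 = c ^ 2 ∧ e ≠ 0 ∧ e ∣ p * q := by
  obtain ⟨α, β, γ, δ, rfl, rfl, rfl, rfl, hco⟩ := cub_four p q r s h1 hp
  have hα : α ≠ 0 := left_ne_zero_of_mul hp
  have hβ : β ≠ 0 := right_ne_zero_of_mul hp
  have hαδ : IsCoprime α δ := (hrs.of_mul_left_left).of_mul_right_right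
  have hE : α ^ 2 * (4 * β ^ 2 - γ ^ 2) = δ ^ 2 * (β ^ 2 - γ ^ 2) := by linear_combination h2
  have hd : α ^ 2 ∣ β ^ 2 - γ ^ 2 := (hαδ.pow (m := 2) (n := 2)).dvd_of_dvd_mul_left ⟨_, hE.symm⟩
  obtain ⟨κ, hκ⟩ := hd
  have hκ2 : 4 * β ^ 2 - γ ^ 2 = κ * δ ^ 2 := by
    apply mul_left_cancel₀ (pow_ne_zero 2 hα)
    linear_combination hE + δ ^ 2 * hκ
  have hk3 : κ ∣ 3 := by
    obtain ⟨x, y, hxy⟩ := hco.pow (m := 2) (n := 2)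
    refine ⟨x * (δ ^ 2 - α ^ 2) + y * (δ ^ 2 - 4 * α ^ 2), ?_⟩
    linear_combination -3 * hxy + (x + y) * hκ2 - (x + 4 * y) * hκ
  have hγo : γ % 2 = 1 := by
    rcases Int.emod_two_eq_zero_or_one γ with h | h
    · rw [Int.mul_emod, h] at hq; simp at hq
    · exact h
  have hδo : δ % 2 = 1 := by
    rcases Int.emod_two_eq_zero_or_one δ with h | h
    · rw [Int.mul_emod, h] at hq; simp at hq
    · exact h
  have hγ4 : γ ^ 2 % 4 = 1 := by
    obtain ⟨k, hk⟩ : ∃ k, γ = 2 * k + 1 := ⟨γ / 2, by omega⟩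
    have : γ ^ 2 = 4 * (k ^ 2 + k) + 1 := by rw [hk]; ring
    omega
  have hδ4 : δ ^ 2 % 4 = 1 := by
    obtain ⟨k, hk⟩ : ∃ k, δ = 2 * k + 1 := ⟨δ / 2, by omega⟩
    have : δ ^ 2 = 4 * (k ^ 2 + k) + 1 := by rw [hk]; ring
    omega
  have hcases : κ = 1 ∨ κ = -1 ∨ κ = 3 ∨ κ = -3 := by
    have hle := Int.le_of_dvd (by norm_num) hk3
    have hle2 := Int.le_of_dvd (by norm_num) ((neg_dvd).mpr hk3)
    have : -3 ≤ κ := by linarith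
    interval_cases κ <;> revert hk3 <;> decide
  rcases hcases with rfl | rfl | rfl | rfl
  · omega
  · refine ⟨δ, β, α, γ, by linarith, by linarith, hβ, ⟨α * γ * δ, by ring⟩⟩
  · refine ⟨γ, α, β, δ, by linarith, by linarith, hα, ⟨β * γ * δ, by ring⟩⟩
  · omega

lemma cub_key (n : ℕ) : ∀ b e a c : ℤ, e.natAbs = n → b ^ 2 + 3 * e ^ 2 = a ^ 2 →
    b ^ 2 + 4 * e ^ 2 = c ^ 2 → e = 0 := by
  induction n using Nat.strong_induction_on with
  | _ n ih =>
  intro b e a c hn h1 h2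
  by_contra he
  by_cases hg : Int.gcd b e = 1
  swap
  · obtain ⟨b', hb'⟩ := Int.gcd_dvd_left b e
    obtain ⟨e', he'⟩ := Int.gcd_dvd_right b e
    have hg0 : Int.gcd b e ≠ 0 := by
      intro h; exact he (Int.gcd_eq_zero_iff.mp h).2
    set g := Int.gcd b e with hgdef
    have hga : (g : ℤ) ∣ a := by
      rw [← Int.pow_dvd_pow_iff (n := 2) (by norm_num)]
      exact ⟨b' ^ 2 + 3 * e' ^ 2, by rw [← h1, hb', he']; ring⟩
    have hgc : (g : ℤ) ∣ c := by
      rw [← Int.pow_dvd_pow_iff (n := 2) (by norm_num)]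
      exact ⟨b' ^ 2 + 4 * e' ^ 2, by rw [← h2, hb', he']; ring⟩
    obtain ⟨a', ha'⟩ := hga
    obtain ⟨c', hc'⟩ := hgc
    have hgz : (g : ℤ) ^ 2 ≠ 0 := pow_ne_zero 2 (by exact_mod_cast hg0)
    have he0 : e' ≠ 0 := by rintro rfl; exact he (by simpa using he')
    have hlt : e'.natAbs < n := by
      rw [← hn, he', Int.natAbs_mul, Int.natAbs_natCast]
      have : 0 < e'.natAbs := Int.natAbs_pos.mpr he0
      have : 2 ≤ g := by omega
      nlinarith
    refine he0 (ih _ hlt b' e' a' c' rfl ?_ ?_)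
    · apply mul_left_cancel₀ hgz
      rw [hb', he', ha'] at h1
      linear_combination h1
    · apply mul_left_cancel₀ hgz
      rw [hb', he', hc'] at h2
      linear_combination h2
  -- coprime case
  have sq : ∀ x : ℤ, (x % 2 = 0 ∧ x ^ 2 % 4 = 0) ∨ (x % 2 = 1 ∧ x ^ 2 % 8 = 1) := by
    intro x
    rcases Int.even_or_odd' x with ⟨k, hk | hk⟩
    · left
      have : x ^ 2 = 4 * k ^ 2 := by rw [hk]; ring
      omega
    · right
      obtain ⟨l, hl⟩ := Int.even_mul_succ_self k
      have : x ^ 2 = 4 * (k * (k + 1)) + 1 := by rw [hk]; ring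
      omega
  have hnb : ¬ (b % 2 = 0 ∧ e % 2 = 0) := by
    rintro ⟨hb, he2⟩
    have := Int.dvd_coe_gcd (Int.dvd_of_emod_eq_zero hb) (Int.dvd_of_emod_eq_zero he2)
    rw [hg] at this
    norm_num at this
  have hee : e % 2 = 0 := by
    rcases sq b with hb | hb <;> rcases sq e with h | h <;> rcases sq a with ha | ha <;>
      rcases sq c with hc | hc <;> omega
  have hbo : b % 2 = 1 := by omega
  have hao : a % 2 = 1 := by
    rcases sq b with hb | hb <;> rcases sq e with h | h <;> rcases sq a with ha | ha <;> omega
  have hbe : IsCoprime b e := Int.isCoprime_iff_gcd_eq_one.mpr hg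
  have hb2 : IsCoprime b 2 := ⟨1, -(b / 2), by omega⟩
  have hcc : 0 < |c| := by
    rw [abs_pos]; rintro rfl
    have := sq_nonneg b
    have : 0 < e ^ 2 := by positivity
    linarith
  have hae : IsCoprime a e := by
    have h : IsCoprime (a ^ 2) e := by
      rw [← h1]
      have h3 : IsCoprime (b ^ 2) e := hbe.pow_left
      have := h3.add_mul_right_left (3 * e)
      rwa [show b ^ 2 + 3 * e * e = b ^ 2 + 3 * e ^ 2 by ring] at this
    exact (IsCoprime.pow_left_iff (by norm_num)).mp h
  have t1 : PythagoreanTriple b (2 * e) |c| := by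
    unfold PythagoreanTriple
    rw [abs_mul_abs_self]; linarith
  have t2 : PythagoreanTriple a e |c| := by
    unfold PythagoreanTriple
    rw [abs_mul_abs_self]; linarith
  obtain ⟨p, q, -, hpq, hc1, hgpq, hpar, -⟩ := t1.coprime_classification'
    (Int.isCoprime_iff_gcd_eq_one.mp (hb2.mul_right hbe)) hbo hcc
  obtain ⟨r, s, -, hrs, hc2, hgrs, -, -⟩ := t2.coprime_classification'
    (Int.isCoprime_iff_gcd_eq_one.mp hae) hao hcc
  have hr : r ≠ 0 := by rintro rfl; exact he (by simpa using hrs)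
  have hs : s ≠ 0 := by rintro rfl; exact he (by simpa using hrs)
  have hcop : IsCoprime r s := Int.isCoprime_iff_gcd_eq_one.mpr hgrs
  have hepq : e = p * q := by linarith
  have main : ∃ b e' a c : ℤ, b ^ 2 + 3 * e' ^ 2 = a ^ 2 ∧ b ^ 2 + 4 * e' ^ 2 = c ^ 2 ∧ e' ≠ 0 ∧
      e' ∣ r * s := by
    rcases hpar with ⟨hp, hq⟩ | ⟨hp, hq⟩
    · obtain ⟨p', rfl⟩ := Int.dvd_of_emod_eq_zero hp
      have hh : p' * q = r * s := by linarith
      rw [← hh]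
      exact cub_step p' q r s hh (by linarith) (by rintro rfl; simp at hepq; exact he hepq)
        hq hcop hr hs
    · obtain ⟨q', rfl⟩ := Int.dvd_of_emod_eq_zero hq
      have hh : q' * p = r * s := by linarith
      rw [← hh]
      exact cub_step q' p r s hh (by linarith) (by rintro rfl; simp at hepq; exact he hepq)
        hp hcop hr hs
  obtain ⟨b', e', a', c', k1, k2, k3, k4⟩ := main
  refine k3 (ih e'.natAbs ?_ b' e' a' c' rfl k1 k2)
  have hrs0 : r * s ≠ 0 := mul_ne_zero hr hs
  have hle := Int.natAbs_le_of_dvd_ne_zero k4 hrs0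
  have hpos := Int.natAbs_pos.mpr hrs0
  have : e.natAbs = 2 * (r * s).natAbs := by
    rw [hrs, mul_assoc, Int.natAbs_mul]; rfl
  omega

lemma cub_quartic (x y z : ℤ) (h : x ^ 4 + 34 * x ^ 2 * y ^ 2 + y ^ 4 = z ^ 2) :
    x * y * (x ^ 2 - y ^ 2) = 0 := by
  have := cub_key _ ((x ^ 2 - y ^ 2) ^ 2 - 12 * (x * y) ^ 2) (4 * (x * y * (x ^ 2 - y ^ 2)))
    ((x ^ 2 - y ^ 2) ^ 2 + 12 * (x * y) ^ 2) ((x ^ 2 + y ^ 2) * z) rfl (by ring)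
    (by linear_combination (x ^ 2 + y ^ 2) ^ 2 * h)
  linarith

lemma cub_arith (b c D m f : ℤ) (hm : m ≠ 0) (hD : D ≠ 0) (e g U : ℤ)
    (he : e = 2 * c - b ^ 2) (hf : f = 6 * D - e)
    (hg : g = D ^ 2 - 2 * m ^ 2 - c ^ 2 - e * f) (hU : U = -6 * D * m ^ 2 - e * g - f * c ^ 2)
    (h1 : b * U = 0) (h2 : m ^ 4 - c ^ 2 * g = c * U) : False := by
  have hc : c ≠ 0 := by
    rintro rfl
    apply hm
    have : m ^ 4 = 0 := by linarith
    simpa using this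
  rcases mul_eq_zero.mp h1 with hb | hU0
  · have key : (c ^ 2 - m ^ 2 - 3 * D * c) ^ 2 = 2 * (2 * (D * c)) ^ 2 := by
      subst hb hU hg hf he
      linear_combination h2
    have hx : Irrational (√2) := irrational_sqrt_two
    have hne : (2 * (D * c)) ≠ 0 := by positivity
    have h2s : IsSquare (2 : ℚ) := by
      refine ⟨((c ^ 2 - m ^ 2 - 3 * D * c : ℤ) : ℚ) / ((2 * (D * c) : ℤ) : ℚ), ?_⟩
      have hne' : ((2 * (D * c) : ℤ) : ℚ) ≠ 0 := by exact_mod_cast hne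
      have key' : ((c ^ 2 - m ^ 2 - 3 * D * c : ℤ) : ℚ) ^ 2 = 2 * ((2 * (D * c) : ℤ) : ℚ) ^ 2 := by
        exact_mod_cast key
      rw [div_mul_div_comm, eq_div_iff (mul_ne_zero hne' hne')]
      linarith
    obtain ⟨r, hr⟩ := h2s
    apply hx
    refine ⟨|r|, ?_⟩
    have : (2 : ℝ) = (r : ℝ) ^ 2 := by rw [sq]; exact_mod_cast hr
    rw [this, Real.sqrt_sq_eq_abs]
    simp
  · rw [hU0] at h2 hU
    have hcm : c ^ 2 + m ^ 2 ≠ 0 := by positivity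
    have k1 : e * m ^ 2 + f * c ^ 2 = 0 := by
      apply mul_left_cancel₀ hcm
      linear_combination e * h2 + c ^ 2 * hU + m ^ 2 * c ^ 2 * hf
    have k2 : e * (c ^ 2 - m ^ 2) = 6 * D * c ^ 2 := by
      linear_combination -k1 + c ^ 2 * hf
    have k3 : (c ^ 2 + m ^ 2) ^ 2 = m ^ 2 * e ^ 2 + D ^ 2 * c ^ 2 := by
      linear_combination h2 + c ^ 2 * hg - e * k1
    have k4 : (6 * c * (c ^ 2 + m ^ 2)) ^ 2
        = e ^ 2 * (c ^ 4 + 34 * c ^ 2 * m ^ 2 + m ^ 4) := by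
      linear_combination 36 * c ^ 2 * k3 - (e * (c ^ 2 - m ^ 2) + 6 * D * c ^ 2) * k2
    have he0 : e ≠ 0 := by
      intro h
      rw [h] at k4
      have : (6 * c * (c ^ 2 + m ^ 2)) ^ 2 ≠ 0 :=
        pow_ne_zero 2 (mul_ne_zero (mul_ne_zero (by norm_num) hc) hcm)
      exact this (by rw [k4]; ring)
    have hdv : e ∣ 6 * c * (c ^ 2 + m ^ 2) := by
      rw [← Int.pow_dvd_pow_iff (n := 2) (by norm_num)]
      exact ⟨_, k4⟩
    obtain ⟨z, hz⟩ := hdv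
    have hz2 : c ^ 4 + 34 * c ^ 2 * m ^ 2 + m ^ 4 = z ^ 2 := by
      apply mul_left_cancel₀ (pow_ne_zero 2 he0)
      rw [← k4, hz]; ring
    have hq := cub_quartic c m z hz2
    have h0 : c ^ 2 - m ^ 2 = 0 := by
      rcases mul_eq_zero.mp hq with h | h
      · exact absurd h (mul_ne_zero hc hm)
      · exact h
    rw [h0] at k2
    have : 6 * D * c ^ 2 ≠ 0 := by positivity
    exact this (by linarith)

lemma cub_coeff (a u : ℤ) (n : ℕ) : (cuboidPoly a u).coeff n =
    (if n = 8 then 1 else 0) + (6 * (u ^ 2 - a ^ 2)) * (if n = 6 then 1 else 0)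
    + ((u ^ 2 - a ^ 2) ^ 2 - 2 * a ^ 2 * u ^ 2) * (if n = 4 then 1 else 0)
    + (-(6 * (u ^ 2 - a ^ 2) * (a ^ 2 * u ^ 2))) * (if n = 2 then 1 else 0)
    + (if n = 0 then a ^ 4 * u ^ 4 else 0) := by
  unfold cuboidPoly
  simp only [coeff_add, coeff_C_mul, coeff_X_pow, coeff_C]

lemma cub_poly (a u : ℤ) (hm : a * u ≠ 0) (hD : u ^ 2 - a ^ 2 ≠ 0) (F G : Polynomial ℤ)
    (hF : F.natDegree = 2) (hG : G.natDegree = 6) (h : cuboidPoly a u = F * G)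
    (hl : F.coeff 2 = 1) : False := by
  have hF' : ∀ n, 2 < n → F.coeff n = 0 := fun n hn =>
    coeff_eq_zero_of_natDegree_lt (by omega)
  have hG' : ∀ n, 6 < n → G.coeff n = 0 := fun n hn =>
    coeff_eq_zero_of_natDegree_lt (by omega)
  have hc : ∀ n, (cuboidPoly a u).coeff n = ∑ k ∈ Finset.range (n + 1), F.coeff k * G.coeff (n - k) := by
    intro n
    rw [h, coeff_mul, Finset.Nat.sum_antidiagonal_eq_sum_range_succ_mk]
  have c0 := hc 0
  have c1 := hc 1
  have c2 := hc 2
  have c3 := hc 3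
  have c4 := hc 4
  have c5 := hc 5
  have c6 := hc 6
  have c7 := hc 7
  have c8 := hc 8
  simp [cub_coeff, Finset.sum_range_succ, hF', hG', hl]
    at c0 c1 c2 c3 c4 c5 c6 c7 c8
  generalize F.coeff 0 = c at *
  generalize F.coeff 1 = b at *
  generalize G.coeff 0 = g0 at *
  generalize G.coeff 1 = g1 at *
  generalize G.coeff 2 = g2 at *
  generalize G.coeff 3 = g3 at *
  generalize G.coeff 4 = g4 at *
  generalize G.coeff 5 = g5 at *
  generalize G.coeff 6 = g6 at *
  obtain rfl : g6 = 1 := by linarith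
  obtain rfl : g5 = -b := by linarith
  obtain rfl : g4 = 6 * (u ^ 2 - a ^ 2) - c + b ^ 2 := by linear_combination -c6
  obtain rfl : g3 = c * b - b * (6 * (u ^ 2 - a ^ 2) - c + b ^ 2) := by linear_combination -c5
  obtain rfl : g2 = (u ^ 2 - a ^ 2) ^ 2 - 2 * a ^ 2 * u ^ 2 - c * (6 * (u ^ 2 - a ^ 2) - c + b ^ 2)
    - b * (c * b - b * (6 * (u ^ 2 - a ^ 2) - c + b ^ 2)) := by linear_combination -c4
  obtain ⟨x3, hx3⟩ : ∃ x, x = c * b - b * (6 * (u ^ 2 - a ^ 2) - c + b ^ 2) := ⟨_, rfl⟩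
  obtain ⟨x2, hx2⟩ : ∃ x, x = (u ^ 2 - a ^ 2) ^ 2 - 2 * a ^ 2 * u ^ 2
    - c * (6 * (u ^ 2 - a ^ 2) - c + b ^ 2)
    - b * (c * b - b * (6 * (u ^ 2 - a ^ 2) - c + b ^ 2)) := ⟨_, rfl⟩
  rw [← hx2] at c2 c3
  rw [← hx3] at c3
  obtain rfl : g1 = -(c * x3 + b * x2) := by linear_combination -c3
  obtain rfl : g0 = -(6 * (u ^ 2 - a ^ 2) * (a ^ 2 * u ^ 2)) - c * x2
      + b * (c * x3 + b * x2) := by linear_combination -c2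
  subst hx2 hx3
  refine cub_arith b c (u ^ 2 - a ^ 2) (a * u) _ hm hD _ _ _ rfl rfl rfl rfl ?_ ?_
  · linear_combination -c1
  · linear_combination c0

theorem cuboidPoly_no_2_6_factorization (a u : ℤ) (ha : 0 < a) (hu : 0 < u)
    (hco : IsCoprime a u) (hne : a ≠ u) :
    ¬ ∃ F G : Polynomial ℤ, F.degree = 2 ∧ G.degree = 6 ∧ cuboidPoly a u = F * G := by
  rintro ⟨F, G, hF, hG, h⟩
  have hF2 : F.natDegree = 2 := natDegree_eq_of_degree_eq_some hF
  have hG6 : G.natDegree = 6 := natDegree_eq_of_degree_eq_some hG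
  have hm : a * u ≠ 0 := by positivity
  have hD : u ^ 2 - a ^ 2 ≠ 0 := by
    intro h0
    have : (u - a) * (u + a) = 0 := by linear_combination h0
    rcases mul_eq_zero.mp this with h | h
    · apply hne; linarith
    · linarith
  have hlead : F.coeff 2 * G.coeff 6 = 1 := by
    have h8 : (F * G).coeff 8 = F.coeff 2 * G.coeff 6 := by
      have := coeff_mul_degree_add_degree F G
      rw [leadingCoeff, leadingCoeff, hF2, hG6] at this
      exact this
    rw [← h8, ← h]
    simp [cub_coeff]
  rcases Int.eq_one_or_neg_one_of_mul_eq_one hlead with h1 | h1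
  · exact cub_poly a u hm hD F G hF2 hG6 h h1
  · exact cub_poly a u hm hD (-F) (-G) (by simpa using hF2) (by simpa using hG6)
      (by rw [h]; ring) (by simp [h1])
end
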